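/- arXiv:1603.04246 — 2 statements merged into one kernel-verified Lean document; each statement's English description precedes it below -/
import Mathlib

section
/- No packing of unit balls in Euclidean space ℝ⁸ has density greater than that of the E8-lattice packing; that is, every sphere packing P ⊂ ℝ⁸ satisfies Δ_P ≤ π⁴/384. -/
open MeasureTheory Metric Filter

/-!
Let `g` be a radial function with `g = 𝓕 h`, `𝓕 g = h`, `re g ≤ 0` outside the ball of radius `r`
and `re h ≥ 0`. The last condition makes `⟨μ, ν⟩ = ∬ re g (x - y) dμ dν` positive semidefinite. Take
`μ` to be the point measure of a packing with minimal distance `r` in a large ball, and `ν` the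
Lebesgue measure of a slightly larger ball. Then `⟨μ, μ⟩ ≤ |μ| g(0)`, while `⟨μ, ν⟩ ≈ |μ| h(0)` and
`⟨ν, ν⟩ ≈ |ν| h(0)`, so the Cauchy–Schwarz inequality bounds the number of points per unit volume by
`g(0) / h(0)`: this is the linear programming bound of Cohn and Elkies, without Poisson summation.

Viazovska's functions `a` and `b` make it sharp in dimension `8`. They are contour integrals
`∫ F(z) e^{πi‖x‖²z} dz`; since the Fourier transform replaces `e^{πi‖x‖²z}` by
`z⁻⁴ e^{πi‖x‖²(-1/z)}`, modularity of `F` under `z ↦ -1/z` makes `a` and `b` eigenfunctions for the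
eigenvalues `1` and `-1`. Pushing the contours to `i∞` gives
`sin²(π‖x‖²/2) ∫₀^∞ F(it) e^{-π‖x‖²t} dt`, whence the double zeros at `‖x‖² = 4, 6, …`, and the sign
conditions on `g` and `h` become inequalities between (quasi)modular forms on the imaginary axis.
-/

namespace SpherePacking

open Complex Topology Asymptotics
open scoped Real MatrixGroups ModularForm Manifold FourierTransform ComplexConjugate

local notation "I∞" => comap Complex.im atTop
local notation "ℍₒ" => UpperHalfPlane.upperHalfPlaneSet

/-! ### Functions on the upper half-plane -/

lemma ne_zero_of_im_pos {z : ℂ} (hz : 0 < z.im) : z ≠ 0 :=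
  UpperHalfPlane.ne_zero ⟨z, hz⟩

lemma im_neg_one_div_pos {z : ℂ} (hz : 0 < z.im) : 0 < (-1 / z).im := by
  simpa [neg_div, inv_neg] using UpperHalfPlane.im_inv_neg_coe_pos ⟨z, hz⟩

lemma upperHalfPlaneSet_mem_nhds {z : ℂ} (hz : 0 < z.im) : ℍₒ ∈ 𝓝 z :=
  UpperHalfPlane.isOpen_upperHalfPlaneSet.mem_nhds hz

lemma eventually_im_pos : ∀ᶠ z : ℂ in I∞, 0 < z.im :=
  tendsto_comap.eventually (eventually_gt_atTop 0)

lemma tendsto_deriv_of_tendsto {f : ℂ → ℂ} {c : ℂ} (hf : DifferentiableOn ℂ f ℍₒ)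
    (hc : Tendsto f I∞ (𝓝 c)) : Tendsto (deriv f) I∞ (𝓝 0) := by
  rw [Metric.tendsto_nhds] at hc ⊢
  intro ε hε
  have hclose := hc (ε / 2) (half_pos hε)
  rw [eventually_comap, eventually_atTop] at hclose ⊢
  obtain ⟨Y, hY⟩ := hclose
  refine ⟨max Y 0 + 2, ?_⟩
  rintro _ hz z rfl
  have him : ∀ w ∈ closedBall z 1, Y ≤ w.im ∧ 0 < w.im := by
    intro w hw
    have hdist := (abs_le.1 ((abs_im_le_norm (w - z)).trans (mem_closedBall_iff_norm.1 hw))).1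
    rw [sub_im] at hdist
    constructor <;> linarith [le_max_left Y 0, le_max_right Y 0]
  have hdiff : DiffContOnCl ℂ (fun w => f w - c) (ball z 1) :=
    DifferentiableOn.diffContOnCl_ball (U := closedBall z 1)
      ((hf.mono fun w hw => (him w hw).2).sub_const c) subset_rfl
  have hcauchy := norm_deriv_le_of_forall_mem_sphere_norm_le one_pos hdiff fun w hw =>
    (dist_eq_norm (f w) c ▸ (hY _ (him w (sphere_subset_closedBall hw)).1 w rfl).le :
      ‖f w - c‖ ≤ ε / 2)
  rw [deriv_sub_const] at hcauchy
  rw [dist_zero_right]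
  linarith

lemma isBigO_sub_sum_range_pow {α : Type*} {l : Filter α} {f φ : α → ℂ} {c : ℕ → ℂ} {w : ℂ}
    (hw : w ≠ 0) (hc : Summable fun m => c m * w ^ m) (hφ : Tendsto φ l (𝓝 0))
    (hf : ∀ᶠ x in l, HasSum (fun m => c m * φ x ^ m) (f x)) (N : ℕ) :
    (fun x => f x - ∑ m ∈ Finset.range N, c m * φ x ^ m) =O[l] fun x => φ x ^ N := by
  let p := FormalMultilinearSeries.ofScalars ℂ c
  have hradius : 0 < p.radius := by
    refine lt_of_lt_of_le ?_ (p.le_radius_of_summable (r := ‖w‖₊) ?_)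
    · simpa using hw
    · simpa [p, FormalMultilinearSeries.ofScalars_norm] using hc.norm
  have hO := (p.hasFPowerSeriesOnBall hradius).hasFPowerSeriesAt.isBigO_sub_partialSum_pow N
  refine ((hO.comp_tendsto hφ).congr' ?_ .rfl).trans (isBigO_of_le _ fun x => by simp)
  filter_upwards [hf] with x hx
  have hsum : p.sum (φ x) = f x := by
    simpa [p, FormalMultilinearSeries.sum, FormalMultilinearSeries.ofScalars_apply_eq, mul_comm]
      using hx.tsum_eq
  simp [hsum, p, FormalMultilinearSeries.partialSum, mul_comm]

section Modularity

open UpperHalfPlane ModularForm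

lemma ofComplex_neg_one_div {z : ℂ} (hz : 0 < z.im) :
    ofComplex (-1 / z) = ModularGroup.S • ofComplex z := by
  rw [ofComplex_apply_of_im_pos (im_neg_one_div_pos hz), modular_S_smul,
    ofComplex_apply_of_im_pos hz]
  ext
  simp [neg_div, inv_neg]

lemma ofComplex_add_one {z : ℂ} (hz : 0 < z.im) :
    ofComplex (z + 1) = ModularGroup.T • ofComplex z := by
  rw [ofComplex_apply_of_im_pos (by simpa using hz), modular_T_smul, ofComplex_apply_of_im_pos hz]
  ext
  simp [add_comm]

lemma apply_ofComplex_neg_one_div (f : ℍ → ℂ) (k : ℤ) {z : ℂ} (hz : 0 < z.im) :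
    f (ofComplex (-1 / z)) = z ^ k * (f ∣[k] ModularGroup.S) (ofComplex z) := by
  have hz0 := zpow_ne_zero k (ne_zero_of_im_pos hz)
  rw [SL_slash_apply, ModularGroup.denom_S, ofComplex_neg_one_div hz, ofComplex_apply_of_im_pos hz,
    zpow_neg]
  field_simp

lemma apply_ofComplex_add_one (f : ℍ → ℂ) (k : ℤ) {z : ℂ} (hz : 0 < z.im) :
    f (ofComplex (z + 1)) = (f ∣[k] ModularGroup.T) (ofComplex z) := by
  rw [SL_slash_apply, ofComplex_add_one hz]
  simp [denom, ModularGroup.coe_T]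

lemma modularForm_neg_one_div {k : ℤ} (f : ModularForm 𝒮ℒ k) {z : ℂ} (hz : 0 < z.im) :
    f (ofComplex (-1 / z)) = z ^ k * f (ofComplex z) := by
  have h : ⇑f ∣[k] ModularGroup.S = f := f.slash_action_eq' _ ⟨_, rfl⟩
  rw [apply_ofComplex_neg_one_div f k hz, h]

lemma modularForm_add_one {k : ℤ} (f : ModularForm 𝒮ℒ k) {z : ℂ} (hz : 0 < z.im) :
    f (ofComplex (z + 1)) = f (ofComplex z) := by
  have h : ⇑f ∣[k] ModularGroup.T = f := f.slash_action_eq' _ ⟨_, rfl⟩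
  rw [apply_ofComplex_add_one f k hz, h]

lemma slash_eq_self_of_modular {f : ℂ → ℂ} {k : ℕ} (hT : ∀ z : ℂ, 0 < z.im → f (z + 1) = f z)
    (hS : ∀ z : ℂ, 0 < z.im → f (-1 / z) = z ^ k * f z) (γ : SL(2, ℤ)) :
    (fun τ : ℍ => f τ) ∣[(k : ℤ)] γ = fun τ : ℍ => f τ := by
  refine SlashInvariantForm.slash_action_generators_SL2Z ?_ ?_ γ
  · ext τ
    have h := apply_ofComplex_neg_one_div (fun τ : ℍ => f τ) k τ.im_pos
    rw [ofComplex_apply, ofComplex_apply_of_im_pos (im_neg_one_div_pos τ.im_pos)] at h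
    refine (mul_left_cancel₀ (zpow_ne_zero k τ.ne_zero) ?_).symm
    exact_mod_cast (hS τ τ.im_pos).symm.trans h
  · ext τ
    have h := apply_ofComplex_add_one (fun τ : ℍ => f τ) k τ.im_pos
    rw [ofComplex_apply, ofComplex_apply_of_im_pos (by simpa using τ.im_pos)] at h
    exact h.symm.trans (hT τ τ.im_pos)

lemma eq_zero_of_modular_of_tendsto_zero {f : ℂ → ℂ} {k : ℕ} (hk : k < 12)
    (hf : DifferentiableOn ℂ f ℍₒ) (hT : ∀ z : ℂ, 0 < z.im → f (z + 1) = f z)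
    (hS : ∀ z : ℂ, 0 < z.im → f (-1 / z) = z ^ k * f z) (hlim : Tendsto f I∞ (𝓝 0))
    {z : ℂ} (hz : 0 < z.im) : f z = 0 := by
  have hslash := slash_eq_self_of_modular hT hS
  let F : CuspForm 𝒮ℒ (k : ℤ) :=
    { toFun := fun τ => f τ
      slash_action_eq' := by
        rintro _ ⟨γ, rfl⟩
        exact hslash γ
      holo' := mdifferentiable_iff.2 <| hf.congr fun w hw =>
        congrArg (fun τ : ℍ => f τ) (ofComplex_apply_of_im_pos hw)
      zero_at_cusps' := by
        intro c hc
        rw [Subgroup.IsArithmetic.isCusp_iff_isCusp_SL2Z] at hc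
        rw [OnePoint.isZeroAt_iff_forall_SL2Z hc]
        intro γ _
        rw [hslash]
        exact hlim.comp (tendsto_comap_iff.2 tendsto_comap) }
  have hF : F = 0 := rank_zero_iff_forall_zero.1
    (CuspForm.rank_eq_zero_of_weight_lt_twelve (by exact_mod_cast hk)) F
  exact congrArg (fun G : CuspForm 𝒮ℒ (k : ℤ) => G ⟨z, hz⟩) hF

end Modularity

/-! ### Eisenstein series -/

/-- The nome `q = exp (π i z)`, the local parameter at `i∞` for forms of level `Γ(2)`. -/
noncomputable def nome (z : ℂ) : ℂ := cexp (π * I * z)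

lemma nome_ne_zero (z : ℂ) : nome z ≠ 0 := exp_ne_zero _

lemma nome_add_one (z : ℂ) : nome (z + 1) = -nome z := by
  rw [nome, nome, mul_add, exp_add, mul_one, exp_pi_mul_I, mul_neg_one]

lemma norm_nome (z : ℂ) : ‖nome z‖ = Real.exp (-π * z.im) := by
  rw [nome, norm_exp]
  simp

lemma nome_sq (z : ℂ) : nome z ^ 2 = Function.Periodic.qParam 1 z := by
  rw [nome, Function.Periodic.qParam, ← exp_nat_mul]
  congr 1
  push_cast
  ring

lemma tendsto_nome : Tendsto nome I∞ (𝓝 0) := by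
  rw [tendsto_zero_iff_norm_tendsto_zero]
  simp only [norm_nome]
  exact Real.tendsto_exp_atBot.comp
    (tendsto_comap.const_mul_atTop_of_neg (neg_lt_zero.2 Real.pi_pos))

lemma nome_pow_isBigO {m n : ℕ} (h : m ≤ n) :
    (fun z => nome z ^ n) =O[I∞] fun z => nome z ^ m := by
  obtain ⟨d, rfl⟩ := Nat.exists_eq_add_of_le h
  simpa [pow_add] using
    (isBigO_refl (fun z => nome z ^ m) I∞).mul ((tendsto_nome.pow d).isBigO_one ℂ)

lemma tendsto_of_sub_isBigO_nome_pow {f : ℂ → ℂ} {c d : ℂ} {n k : ℕ} (hn : n ≠ 0) (hk : k ≠ 0)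
    (h : (fun z => f z - (c + d * nome z ^ n)) =O[I∞] fun z => nome z ^ k) :
    Tendsto f I∞ (𝓝 c) := by
  have herr : Tendsto (fun z => nome z ^ k) I∞ (𝓝 0) := by simpa [hk] using tendsto_nome.pow k
  have hmain : Tendsto (fun z => c + d * nome z ^ n) I∞ (𝓝 c) := by
    simpa [hn] using ((tendsto_nome.pow n).const_mul d).const_add c
  simpa using (h.trans_tendsto herr).add hmain

lemma isBigO_of_hasSum_nome_sq {f : ℂ → ℂ} {c : ℕ → ℂ}
    (hf : ∀ z : ℂ, 0 < z.im → HasSum (fun m => c m * (nome z ^ 2) ^ m) (f z)) :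
    (fun z => f z - (c 0 + c 1 * nome z ^ 2)) =O[I∞] fun z => nome z ^ 4 := by
  have h := isBigO_sub_sum_range_pow (pow_ne_zero 2 (nome_ne_zero I)) (hf I (by simp)).summable
    (by simpa using tendsto_nome.pow 2) (eventually_im_pos.mono hf) 2
  exact h.congr (fun z => by simp [Finset.sum_range_succ]) fun z => by ring

/-- The Eisenstein series `E₂` as a function on `ℂ`; only its values on the upper half-plane are
meaningful. -/
noncomputable def E₂ (z : ℂ) : ℂ := EisensteinSeries.E2 (UpperHalfPlane.ofComplex z)

/-- The Eisenstein series `E₄` as a function on `ℂ`; only its values on the upper half-plane are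
meaningful. -/
noncomputable def E₄ (z : ℂ) : ℂ := ModularForm.E₄ (UpperHalfPlane.ofComplex z)

/-- The Eisenstein series `E₆` as a function on `ℂ`; only its values on the upper half-plane are
meaningful. -/
noncomputable def E₆ (z : ℂ) : ℂ := ModularForm.E₆ (UpperHalfPlane.ofComplex z)

/-- The modular discriminant, in terms of Eisenstein series. -/
noncomputable def discr (z : ℂ) : ℂ := (E₄ z ^ 3 - E₆ z ^ 2) / 1728

lemma differentiableOn_E₂ : DifferentiableOn ℂ E₂ ℍₒ :=
  UpperHalfPlane.mdifferentiable_iff.1 E2_mdifferentiable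

lemma differentiableOn_E₄ : DifferentiableOn ℂ E₄ ℍₒ :=
  UpperHalfPlane.mdifferentiable_iff.1 ModularForm.E₄.holo'

lemma differentiableOn_E₆ : DifferentiableOn ℂ E₆ ℍₒ :=
  UpperHalfPlane.mdifferentiable_iff.1 ModularForm.E₆.holo'

lemma differentiableOn_discr : DifferentiableOn ℂ discr ℍₒ :=
  ((differentiableOn_E₄.pow 3).sub (differentiableOn_E₆.pow 2)).div_const _

lemma discr_ne_zero (z : ℂ) : discr z ≠ 0 := by
  have h := ModularForm.discriminant_ne_zero (UpperHalfPlane.ofComplex z)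
  rwa [ModularForm.discriminant_eq_E₄_cube_sub_E₆_sq] at h

lemma E₂_neg_one_div {z : ℂ} (hz : 0 < z.im) :
    E₂ (-1 / z) = z ^ 2 * E₂ z - 6 * I / π * z := by
  have hz0 := ne_zero_of_im_pos hz
  have hπ : (π : ℂ) ≠ 0 := by exact_mod_cast Real.pi_ne_zero
  rw [E₂, apply_ofComplex_neg_one_div EisensteinSeries.E2 2 hz, EisensteinSeries.E2_slash_action]
  simp only [Pi.sub_apply, Pi.smul_apply, EisensteinSeries.D2_S, riemannZeta_two, smul_eq_mul,
    UpperHalfPlane.ofComplex_apply_of_im_pos hz, E₂]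
  field_simp

lemma E₂_add_one {z : ℂ} (hz : 0 < z.im) : E₂ (z + 1) = E₂ z := by
  rw [E₂, apply_ofComplex_add_one EisensteinSeries.E2 2 hz, EisensteinSeries.E2_slash_action,
    EisensteinSeries.D2_T]
  simp [E₂]

lemma E₄_neg_one_div {z : ℂ} (hz : 0 < z.im) : E₄ (-1 / z) = z ^ 4 * E₄ z := by
  exact_mod_cast modularForm_neg_one_div ModularForm.E₄ hz

lemma E₄_add_one {z : ℂ} (hz : 0 < z.im) : E₄ (z + 1) = E₄ z :=
  modularForm_add_one ModularForm.E₄ hz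

lemma E₆_neg_one_div {z : ℂ} (hz : 0 < z.im) : E₆ (-1 / z) = z ^ 6 * E₆ z := by
  exact_mod_cast modularForm_neg_one_div ModularForm.E₆ hz

lemma E₆_add_one {z : ℂ} (hz : 0 < z.im) : E₆ (z + 1) = E₆ z :=
  modularForm_add_one ModularForm.E₆ hz

lemma discr_neg_one_div {z : ℂ} (hz : 0 < z.im) : discr (-1 / z) = z ^ 12 * discr z := by
  rw [discr, discr, E₄_neg_one_div hz, E₆_neg_one_div hz]
  ring

lemma discr_add_one {z : ℂ} (hz : 0 < z.im) : discr (z + 1) = discr z := by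
  rw [discr, discr, E₄_add_one hz, E₆_add_one hz]

lemma hasSum_E₂ {z : ℂ} (hz : 0 < z.im) :
    HasSum (fun m => (if m = 0 then 1 else -24 * (ArithmeticFunction.sigma 1 m : ℂ)) *
      (nome z ^ 2) ^ m) (E₂ z) := by
  rw [E₂, UpperHalfPlane.ofComplex_apply_of_im_pos hz, nome_sq]
  simpa [Function.Periodic.qParam] using EisensteinSeries.hasSum_qExpansion_E2 ⟨z, hz⟩

lemma hasSum_modularForm {k : ℤ} (f : ModularForm 𝒮ℒ k) {z : ℂ} (hz : 0 < z.im) :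
    HasSum (fun m => (UpperHalfPlane.qExpansion 1 f).coeff m * (nome z ^ 2) ^ m)
      (f (UpperHalfPlane.ofComplex z)) := by
  rw [UpperHalfPlane.ofComplex_apply_of_im_pos hz, nome_sq]
  exact ModularForm.hasSum_qExpansion f one_pos one_mem_strictPeriods_SL ⟨z, hz⟩

lemma E₂_sub_isBigO : (fun z => E₂ z - (1 - 24 * nome z ^ 2)) =O[I∞] fun z => nome z ^ 4 := by
  simpa [sub_eq_add_neg] using isBigO_of_hasSum_nome_sq fun _ => hasSum_E₂

lemma E₄_sub_isBigO : (fun z => E₄ z - (1 + 240 * nome z ^ 2)) =O[I∞] fun z => nome z ^ 4 := by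
  have h := isBigO_of_hasSum_nome_sq fun _ => hasSum_modularForm ModularForm.E₄
  rwa [EisensteinSeries.E_qExpansion_coeff_zero _ ⟨2, rfl⟩,
    ModularForm.E₄_qExpansion_coeff_one] at h

lemma E₆_sub_isBigO : (fun z => E₆ z - (1 - 504 * nome z ^ 2)) =O[I∞] fun z => nome z ^ 4 := by
  have h := isBigO_of_hasSum_nome_sq fun _ => hasSum_modularForm ModularForm.E₆
  rw [EisensteinSeries.E_qExpansion_coeff_zero _ ⟨3, rfl⟩,
    ModularForm.E₆_qExpansion_coeff_one] at h
  simpa only [E₆, sub_eq_add_neg, neg_mul] using h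

lemma tendsto_E₂ : Tendsto E₂ I∞ (𝓝 1) :=
  tendsto_of_sub_isBigO_nome_pow (n := 2) (d := -24) two_ne_zero four_ne_zero
    (by simpa [sub_eq_add_neg] using E₂_sub_isBigO)

lemma tendsto_E₄ : Tendsto E₄ I∞ (𝓝 1) :=
  tendsto_of_sub_isBigO_nome_pow (n := 2) two_ne_zero four_ne_zero E₄_sub_isBigO

lemma tendsto_E₆ : Tendsto E₆ I∞ (𝓝 1) :=
  tendsto_of_sub_isBigO_nome_pow (n := 2) (d := -504) two_ne_zero four_ne_zero
    (by simpa [sub_eq_add_neg] using E₆_sub_isBigO)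

/-! ### Ramanujan's differential equations -/

lemma ofReal_pi_ne_zero : (π : ℂ) ≠ 0 := ofReal_ne_zero.2 Real.pi_ne_zero

lemma differentiableOn_deriv {f : ℂ → ℂ} (hf : DifferentiableOn ℂ f ℍₒ) :
    DifferentiableOn ℂ (deriv f) ℍₒ :=
  hf.deriv UpperHalfPlane.isOpen_upperHalfPlaneSet

lemma hasDerivAt_of_differentiableOn {f : ℂ → ℂ} (hf : DifferentiableOn ℂ f ℍₒ) {z : ℂ}
    (hz : 0 < z.im) : HasDerivAt f (deriv f z) z :=
  (hf.differentiableAt (upperHalfPlaneSet_mem_nhds hz)).hasDerivAt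

lemma deriv_neg_one_div {f g : ℂ → ℂ} {g' z : ℂ} (hz : 0 < z.im) (hf : DifferentiableOn ℂ f ℍₒ)
    (h : ∀ z : ℂ, 0 < z.im → f (-1 / z) = g z) (hg : HasDerivAt g g' z) :
    deriv f (-1 / z) = z ^ 2 * g' := by
  have hz0 := ne_zero_of_im_pos hz
  have hinv : HasDerivAt (fun z : ℂ => -1 / z) (1 / z ^ 2) z := by
    simpa [div_eq_mul_inv] using (hasDerivAt_inv hz0).const_mul (-1)
  have hcomp := (hasDerivAt_of_differentiableOn hf (im_neg_one_div_pos hz)).comp z hinv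
  have hcomp' : HasDerivAt (f ∘ fun z : ℂ => -1 / z) g' z :=
    hg.congr_of_eventuallyEq (mem_of_superset (upperHalfPlaneSet_mem_nhds hz) h)
  rw [← hcomp.unique hcomp']
  field_simp

lemma deriv_add_one {f : ℂ → ℂ} {z : ℂ} (hz : 0 < z.im)
    (h : ∀ z : ℂ, 0 < z.im → f (z + 1) = f z) : deriv f (z + 1) = deriv f z := by
  rw [← deriv_comp_add_const]
  exact EventuallyEq.deriv_eq (mem_of_superset (upperHalfPlaneSet_mem_nhds hz) h)

lemma hasDerivAt_E₂ {z : ℂ} (hz : 0 < z.im) :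
    HasDerivAt E₂ (2 * π * I * ((E₂ z ^ 2 - E₄ z) / 12)) z := by
  let f : ℂ → ℂ := fun z => deriv E₂ z - 2 * π * I * ((E₂ z ^ 2 - E₄ z) / 12)
  have hf : DifferentiableOn ℂ f ℍₒ := by
    have := differentiableOn_deriv differentiableOn_E₂
    have := differentiableOn_E₂
    have := differentiableOn_E₄
    fun_prop
  have hT (z : ℂ) (hz : 0 < z.im) : f (z + 1) = f z := by
    simp only [f, deriv_add_one hz fun _ => E₂_add_one, E₂_add_one hz, E₄_add_one hz]
  have hS (z : ℂ) (hz : 0 < z.im) : f (-1 / z) = z ^ 4 * f z := by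
    have hderiv : HasDerivAt (fun z => z ^ 2 * E₂ z - 6 * I / π * z)
        (2 * z * E₂ z + z ^ 2 * deriv E₂ z - 6 * I / π) z := by
      refine (((hasDerivAt_pow 2 z).mul (hasDerivAt_of_differentiableOn differentiableOn_E₂
        hz)).sub ((hasDerivAt_id z).const_mul (6 * I / (π : ℂ)))).congr_deriv ?_
      simp
    have hπ := ofReal_pi_ne_zero
    simp only [f, deriv_neg_one_div hz differentiableOn_E₂ (fun _ => E₂_neg_one_div) hderiv,
      E₂_neg_one_div hz, E₄_neg_one_div hz]
    field_simp
    linear_combination (2 * z ^ 3 * E₂ z * π - 6 * z ^ 2 * I) * 12 * I_sq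
  have hlim : Tendsto f I∞ (𝓝 0) := by
    simpa using (tendsto_deriv_of_tendsto differentiableOn_E₂ tendsto_E₂).sub
      ((((tendsto_E₂.pow 2).sub tendsto_E₄).div_const 12).const_mul (2 * π * I : ℂ))
  rw [← sub_eq_zero.1 (eq_zero_of_modular_of_tendsto_zero (by norm_num) hf hT hS hlim hz)]
  exact hasDerivAt_of_differentiableOn differentiableOn_E₂ hz

-- The Serre derivative of `f` is modular of weight `k + 2 < 12`, hence determined by its constant
-- term.
lemma hasDerivAt_of_modular {f g : ℂ → ℂ} {k : ℕ} {c : ℂ} (hk : k + 2 < 12)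
    (hf : DifferentiableOn ℂ f ℍₒ) (hfT : ∀ z : ℂ, 0 < z.im → f (z + 1) = f z)
    (hfS : ∀ z : ℂ, 0 < z.im → f (-1 / z) = z ^ k * f z) (hf_lim : Tendsto f I∞ (𝓝 c))
    (hg : DifferentiableOn ℂ g ℍₒ) (hgT : ∀ z : ℂ, 0 < z.im → g (z + 1) = g z)
    (hgS : ∀ z : ℂ, 0 < z.im → g (-1 / z) = z ^ (k + 2) * g z)
    (hg_lim : Tendsto g I∞ (𝓝 (k / 12 * c))) {z : ℂ} (hz : 0 < z.im) :
    HasDerivAt f (2 * π * I * (k / 12 * (E₂ z * f z) - g z)) z := by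
  let F : ℂ → ℂ := fun z => deriv f z - 2 * π * I * (k / 12 * (E₂ z * f z) - g z)
  have hF : DifferentiableOn ℂ F ℍₒ := by
    have := differentiableOn_deriv hf
    have := differentiableOn_E₂
    fun_prop
  have hT (z : ℂ) (hz : 0 < z.im) : F (z + 1) = F z := by
    simp only [F, deriv_add_one hz hfT, E₂_add_one hz, hfT z hz, hgT z hz]
  have hS (z : ℂ) (hz : 0 < z.im) : F (-1 / z) = z ^ (k + 2) * F z := by
    have hderiv := (hasDerivAt_pow k z).mul (hasDerivAt_of_differentiableOn hf hz)
    have hpow : z ^ 2 * (k * z ^ (k - 1)) = k * z ^ (k + 1) := by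
      rcases k with _ | k
      · simp
      · simp only [Nat.add_sub_cancel]
        ring
    have hπ := ofReal_pi_ne_zero
    simp only [F, deriv_neg_one_div hz hf hfS hderiv, E₂_neg_one_div hz, hfS z hz, hgS z hz]
    field_simp
    linear_combination 12 * f z * hpow + 12 * k * z * z ^ k * f z * I_sq
  have hlim : Tendsto F I∞ (𝓝 0) := by
    simpa using (tendsto_deriv_of_tendsto hf hf_lim).sub ((((tendsto_E₂.mul hf_lim).const_mul
      (k / 12 : ℂ)).sub hg_lim).const_mul (2 * π * I : ℂ))
  rw [← sub_eq_zero.1 (eq_zero_of_modular_of_tendsto_zero hk hF hT hS hlim hz)]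
  exact hasDerivAt_of_differentiableOn hf hz

lemma hasDerivAt_E₄ {z : ℂ} (hz : 0 < z.im) :
    HasDerivAt E₄ (2 * π * I * ((E₂ z * E₄ z - E₆ z) / 3)) z := by
  refine (hasDerivAt_of_modular (k := 4) (g := fun z => E₆ z / 3) (by norm_num)
    differentiableOn_E₄ (fun _ => E₄_add_one) (fun _ => E₄_neg_one_div) tendsto_E₄
    (differentiableOn_E₆.div_const 3) (fun z hz => by rw [E₆_add_one hz])
    (fun z hz => by rw [E₆_neg_one_div hz]; ring) ?_ hz).congr_deriv ?_
  · convert tendsto_E₆.div_const 3 using 2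
    norm_num
  · push_cast
    ring

lemma hasDerivAt_E₆ {z : ℂ} (hz : 0 < z.im) :
    HasDerivAt E₆ (2 * π * I * ((E₂ z * E₆ z - E₄ z ^ 2) / 2)) z := by
  refine (hasDerivAt_of_modular (k := 6) (g := fun z => E₄ z ^ 2 / 2) (by norm_num)
    differentiableOn_E₆ (fun _ => E₆_add_one) (fun _ => E₆_neg_one_div) tendsto_E₆
    ((differentiableOn_E₄.pow 2).div_const 2) (fun z hz => by rw [E₄_add_one hz])
    (fun z hz => by rw [E₄_neg_one_div hz]; ring) ?_ hz).congr_deriv ?_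
  · convert (tendsto_E₄.pow 2).div_const 2 using 2
    norm_num
  · push_cast
    ring

/-! ### Half-period values and theta functions -/

/-- The half-period value `2 E₂(2z) - E₂(z)`. Multiplied by `2π² / 3`, the functions `e₁`, `e₂`,
`e₃` are the values of the Weierstrass `℘`-function of the lattice `ℤ + zℤ` at its half-periods. -/
noncomputable def e₁ (z : ℂ) : ℂ := 2 * E₂ (2 * z) - E₂ z

/-- The half-period value `E₂(z / 2) / 2 - E₂(z)`; see `e₁`. -/
noncomputable def e₂ (z : ℂ) : ℂ := E₂ (z / 2) / 2 - E₂ z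

/-- The half-period value `E₂((z + 1) / 2) / 2 - E₂(z)`; see `e₁`. -/
noncomputable def e₃ (z : ℂ) : ℂ := E₂ ((z + 1) / 2) / 2 - E₂ z

lemma im_two_mul_pos {z : ℂ} (hz : 0 < z.im) : 0 < (2 * z).im := by simpa using hz

lemma im_div_two_pos {z : ℂ} (hz : 0 < z.im) : 0 < (z / 2).im := by simpa using hz

lemma im_add_one_div_two_pos {z : ℂ} (hz : 0 < z.im) : 0 < ((z + 1) / 2).im := by simpa using hz

lemma differentiableOn_e₁ : DifferentiableOn ℂ e₁ ℍₒ :=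
  ((differentiableOn_E₂.comp (by fun_prop) fun _ => im_two_mul_pos).const_mul 2).sub
    differentiableOn_E₂

lemma differentiableOn_e₂ : DifferentiableOn ℂ e₂ ℍₒ :=
  ((differentiableOn_E₂.comp (by fun_prop) fun _ => im_div_two_pos).div_const 2).sub
    differentiableOn_E₂

lemma differentiableOn_e₃ : DifferentiableOn ℂ e₃ ℍₒ :=
  ((differentiableOn_E₂.comp (by fun_prop) fun _ => im_add_one_div_two_pos).div_const 2).sub
    differentiableOn_E₂

lemma e₁_add_one {z : ℂ} (hz : 0 < z.im) : e₁ (z + 1) = e₁ z := by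
  rw [e₁, e₁, E₂_add_one hz, ← E₂_add_one (im_two_mul_pos hz),
    ← E₂_add_one (z := 2 * z + 1) (by simpa using hz)]
  ring_nf

lemma e₂_add_one {z : ℂ} (hz : 0 < z.im) : e₂ (z + 1) = e₃ z := by
  rw [e₂, e₃, E₂_add_one hz]

lemma e₃_add_one {z : ℂ} (hz : 0 < z.im) : e₃ (z + 1) = e₂ z := by
  rw [e₂, e₃, E₂_add_one hz, ← E₂_add_one (im_div_two_pos hz)]
  ring_nf

lemma e₁_neg_one_div {z : ℂ} (hz : 0 < z.im) : e₁ (-1 / z) = z ^ 2 * e₂ z := by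
  have hz0 := ne_zero_of_im_pos hz
  rw [e₁, e₂, E₂_neg_one_div hz, show 2 * (-1 / z) = -1 / (z / 2) by field_simp,
    E₂_neg_one_div (im_div_two_pos hz)]
  ring

lemma e₂_neg_one_div {z : ℂ} (hz : 0 < z.im) : e₂ (-1 / z) = z ^ 2 * e₁ z := by
  have hz0 := ne_zero_of_im_pos hz
  rw [e₁, e₂, E₂_neg_one_div hz, show -1 / z / 2 = -1 / (2 * z) by field_simp,
    E₂_neg_one_div (im_two_mul_pos hz)]
  ring

-- `(z - 1) / (2 z) = -1 / (-1 / w - 2)` with `w = (z - 1) / 2`.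
lemma E₂_sub_one_div_two_mul {z : ℂ} (hz : 0 < z.im) :
    E₂ ((-1 / z + 1) / 2) = z ^ 2 * E₂ ((z + 1) / 2) - 12 * I / π * z := by
  have hz0 := ne_zero_of_im_pos hz
  have hπ := ofReal_pi_ne_zero
  obtain ⟨w, hw⟩ : ∃ w, w = (z - 1) / 2 := ⟨_, rfl⟩
  have hw_im : 0 < w.im := by simpa [hw] using hz
  have hw0 := ne_zero_of_im_pos hw_im
  obtain rfl : z = 2 * w + 1 := by rw [hw]; ring
  have hv_im : 0 < (-1 / w - 2).im := by simpa using im_neg_one_div_pos hw_im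
  have hv0 := ne_zero_of_im_pos hv_im
  have hv : E₂ (-1 / w - 2) = E₂ (-1 / w) := by
    rw [← E₂_add_one hv_im, ← E₂_add_one (by simpa using hv_im)]
    ring_nf
  have hz_half : E₂ ((2 * w + 1 + 1) / 2) = E₂ w := by
    rw [← E₂_add_one hw_im]
    ring_nf
  rw [show (-1 / (2 * w + 1) + 1) / 2 = -1 / (-1 / w - 2) by
    rw [div_eq_div_iff two_ne_zero hv0]
    field_simp
    ring, E₂_neg_one_div hv_im, hv, E₂_neg_one_div hw_im, hz_half]
  field_simp
  ring

lemma e₃_neg_one_div {z : ℂ} (hz : 0 < z.im) : e₃ (-1 / z) = z ^ 2 * e₃ z := by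
  rw [e₃, e₃, E₂_neg_one_div hz, E₂_sub_one_div_two_mul hz]
  ring

lemma tendsto_two_mul : Tendsto (fun z : ℂ => 2 * z) I∞ I∞ := by
  simpa [tendsto_comap_iff, Function.comp_def] using
    (tendsto_comap (f := im)).const_mul_atTop (two_pos (α := ℝ))

lemma tendsto_div_two : Tendsto (fun z : ℂ => z / 2) I∞ I∞ := by
  simpa [tendsto_comap_iff, Function.comp_def] using
    (tendsto_comap (f := im)).atTop_div_const (two_pos (α := ℝ))

lemma tendsto_add_one_div_two : Tendsto (fun z : ℂ => (z + 1) / 2) I∞ I∞ := by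
  simpa [tendsto_comap_iff, Function.comp_def] using
    (tendsto_comap (f := im)).atTop_div_const (two_pos (α := ℝ))

lemma tendsto_e₁ : Tendsto e₁ I∞ (𝓝 1) := by
  rw [show (1 : ℂ) = 2 * 1 - 1 by norm_num]
  exact ((tendsto_E₂.comp tendsto_two_mul).const_mul 2).sub tendsto_E₂

lemma tendsto_e₂ : Tendsto e₂ I∞ (𝓝 (-(1 / 2))) := by
  rw [show (-(1 / 2) : ℂ) = 1 / 2 - 1 by norm_num]
  exact ((tendsto_E₂.comp tendsto_div_two).div_const 2).sub tendsto_E₂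

lemma tendsto_e₃ : Tendsto e₃ I∞ (𝓝 (-(1 / 2))) := by
  rw [show (-(1 / 2) : ℂ) = 1 / 2 - 1 by norm_num]
  exact ((tendsto_E₂.comp tendsto_add_one_div_two).div_const 2).sub tendsto_E₂

lemma e₁_add_e₂_add_e₃ {z : ℂ} (hz : 0 < z.im) : e₁ z + e₂ z + e₃ z = 0 := by
  refine eq_zero_of_modular_of_tendsto_zero (f := fun z => e₁ z + e₂ z + e₃ z) (k := 2)
    (by norm_num) ((differentiableOn_e₁.add differentiableOn_e₂).add differentiableOn_e₃)
    (fun z hz => ?_) (fun z hz => ?_) ?_ hz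
  · rw [e₁_add_one hz, e₂_add_one hz, e₃_add_one hz]
    ring
  · rw [e₁_neg_one_div hz, e₂_neg_one_div hz, e₃_neg_one_div hz]
    ring
  · convert (tendsto_e₁.add tendsto_e₂).add tendsto_e₃ using 2
    norm_num

lemma e₁_mul_e₂_add_e₂_mul_e₃_add_e₃_mul_e₁ {z : ℂ} (hz : 0 < z.im) :
    e₁ z * e₂ z + e₂ z * e₃ z + e₃ z * e₁ z = -(3 / 4) * E₄ z := by
  refine sub_eq_zero.1 (eq_zero_of_modular_of_tendsto_zero
    (f := fun z => e₁ z * e₂ z + e₂ z * e₃ z + e₃ z * e₁ z - -(3 / 4) * E₄ z) (k := 4)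
    (by norm_num) ?_ (fun z hz => ?_) (fun z hz => ?_) ?_ hz)
  · have := differentiableOn_e₁
    have := differentiableOn_e₂
    have := differentiableOn_e₃
    have := differentiableOn_E₄
    fun_prop
  · rw [e₁_add_one hz, e₂_add_one hz, e₃_add_one hz, E₄_add_one hz]
    ring
  · rw [e₁_neg_one_div hz, e₂_neg_one_div hz, e₃_neg_one_div hz, E₄_neg_one_div hz]
    ring
  · convert (((tendsto_e₁.mul tendsto_e₂).add (tendsto_e₂.mul tendsto_e₃)).add
      (tendsto_e₃.mul tendsto_e₁)).sub (tendsto_E₄.const_mul (-(3 / 4))) using 2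
    norm_num

lemma e₁_mul_e₂_mul_e₃ {z : ℂ} (hz : 0 < z.im) : e₁ z * e₂ z * e₃ z = E₆ z / 4 := by
  refine sub_eq_zero.1 (eq_zero_of_modular_of_tendsto_zero
    (f := fun z => e₁ z * e₂ z * e₃ z - E₆ z / 4) (k := 6)
    (by norm_num) ?_ (fun z hz => ?_) (fun z hz => ?_) ?_ hz)
  · have := differentiableOn_e₁
    have := differentiableOn_e₂
    have := differentiableOn_e₃
    have := differentiableOn_E₆
    fun_prop
  · rw [e₁_add_one hz, e₂_add_one hz, e₃_add_one hz, E₆_add_one hz]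
    ring
  · rw [e₁_neg_one_div hz, e₂_neg_one_div hz, e₃_neg_one_div hz, E₆_neg_one_div hz]
    ring
  · convert ((tendsto_e₁.mul tendsto_e₂).mul tendsto_e₃).sub (tendsto_E₆.div_const 4) using 2
    norm_num

-- Differentiate the cubic; its discriminant does not vanish.
lemma hasDerivAt_of_cubic {x : ℂ → ℂ} (hx : DifferentiableOn ℂ x ℍₒ)
    (hcubic : ∀ z : ℂ, 0 < z.im → 4 * x z ^ 3 - 3 * E₄ z * x z - E₆ z = 0) {z : ℂ}
    (hz : 0 < z.im) :
    HasDerivAt x (2 * π * I * (E₂ z * x z / 6 - x z ^ 2 / 3 + E₄ z / 6)) z := by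
  have hxz := hasDerivAt_of_differentiableOn hx hz
  have hzero : HasDerivAt (fun z => 4 * x z ^ 3 - 3 * E₄ z * x z - E₆ z) 0 z :=
    (hasDerivAt_const z (0 : ℂ)).congr_of_eventuallyEq
      (mem_of_superset (upperHalfPlaneSet_mem_nhds hz) hcubic)
  have hderiv := ((((hxz.pow 3).const_mul 4).sub
    (((hasDerivAt_E₄ hz).const_mul 3).mul hxz)).sub (hasDerivAt_E₆ hz)).unique hzero
  have hsimple : 12 * x z ^ 2 - 3 * E₄ z ≠ 0 := by
    intro h
    have h4 : E₄ z = 4 * x z ^ 2 := by linear_combination (-1 / 3 : ℂ) * h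
    have h6 : E₆ z = -8 * x z ^ 3 := by
      linear_combination (-1 : ℂ) * hcubic z hz - 3 * x z * h4
    refine discr_ne_zero z ?_
    rw [discr, h4, h6]
    ring
  refine hxz.congr_deriv (mul_left_cancel₀ hsimple ?_)
  push_cast at hderiv
  linear_combination hderiv - 2 * π * I * (E₂ z / 2 - x z) * hcubic z hz

/-- The fourth power `H₂ = θ₂⁴` of the theta constant `θ₂ = ∑ exp (πi (n + 1/2)² z)`. -/
noncomputable def H₂ (z : ℂ) : ℂ := 2 / 3 * (e₃ z - e₂ z)

/-- The fourth power `H₄ = θ₄⁴` of the theta constant `θ₄ = ∑ (-1)ⁿ exp (πi n² z)`. -/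
noncomputable def H₄ (z : ℂ) : ℂ := 2 / 3 * (e₁ z - e₃ z)

section ThetaFunctions

variable {z : ℂ} (hz : 0 < z.im)

include hz

lemma e₁_eq : e₁ z = (H₂ z + 2 * H₄ z) / 2 := by
  rw [H₂, H₄]
  linear_combination (1 / 3 : ℂ) * e₁_add_e₂_add_e₃ hz

lemma e₂_eq : e₂ z = -(2 * H₂ z + H₄ z) / 2 := by
  rw [H₂, H₄]
  linear_combination (1 / 3 : ℂ) * e₁_add_e₂_add_e₃ hz

lemma e₃_eq : e₃ z = (H₂ z - H₄ z) / 2 := by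
  rw [H₂, H₄]
  linear_combination (1 / 3 : ℂ) * e₁_add_e₂_add_e₃ hz

lemma E₄_eq : E₄ z = H₂ z ^ 2 + H₂ z * H₄ z + H₄ z ^ 2 := by
  have h := e₁_mul_e₂_add_e₂_mul_e₃_add_e₃_mul_e₁ hz
  rw [e₁_eq hz, e₂_eq hz, e₃_eq hz] at h
  linear_combination (4 / 3 : ℂ) * h

lemma E₆_eq : E₆ z = (H₂ z + 2 * H₄ z) * (2 * H₂ z + H₄ z) * (H₄ z - H₂ z) / 2 := by
  have h := e₁_mul_e₂_mul_e₃ hz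
  rw [e₁_eq hz, e₂_eq hz, e₃_eq hz] at h
  linear_combination (-4 : ℂ) * h

lemma discr_eq : discr z = (H₂ z * H₄ z * (H₂ z + H₄ z)) ^ 2 / 256 := by
  rw [discr, E₄_eq hz, E₆_eq hz]
  ring

lemma hasDerivAt_H₂ :
    HasDerivAt H₂ (2 * π * I * ((E₂ z * H₂ z + H₂ z ^ 2 + 2 * H₂ z * H₄ z) / 6)) z := by
  have h₂ := hasDerivAt_of_cubic differentiableOn_e₂
    (fun z hz => by rw [e₂_eq hz, E₄_eq hz, E₆_eq hz]; ring) hz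
  have h₃ := hasDerivAt_of_cubic differentiableOn_e₃
    (fun z hz => by rw [e₃_eq hz, E₄_eq hz, E₆_eq hz]; ring) hz
  refine ((h₃.sub h₂).const_mul (2 / 3)).congr_deriv ?_
  rw [e₂_eq hz, e₃_eq hz]
  ring

lemma hasDerivAt_H₄ :
    HasDerivAt H₄ (2 * π * I * ((E₂ z * H₄ z - 2 * H₂ z * H₄ z - H₄ z ^ 2) / 6)) z := by
  have h₁ := hasDerivAt_of_cubic differentiableOn_e₁
    (fun z hz => by rw [e₁_eq hz, E₄_eq hz, E₆_eq hz]; ring) hz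
  have h₃ := hasDerivAt_of_cubic differentiableOn_e₃
    (fun z hz => by rw [e₃_eq hz, E₄_eq hz, E₆_eq hz]; ring) hz
  refine ((h₁.sub h₃).const_mul (2 / 3)).congr_deriv ?_
  rw [e₁_eq hz, e₃_eq hz]
  ring

lemma H₂_add_one : H₂ (z + 1) = -H₂ z := by
  rw [H₂, H₂, e₂_add_one hz, e₃_add_one hz]
  ring

lemma H₄_add_one : H₄ (z + 1) = H₂ z + H₄ z := by
  rw [H₂, H₄, H₄, e₁_add_one hz, e₃_add_one hz]
  ring

lemma H₂_neg_one_div : H₂ (-1 / z) = -z ^ 2 * H₄ z := by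
  rw [H₂, H₄, e₂_neg_one_div hz, e₃_neg_one_div hz]
  ring

lemma H₄_neg_one_div : H₄ (-1 / z) = -z ^ 2 * H₂ z := by
  rw [H₂, H₄, e₁_neg_one_div hz, e₃_neg_one_div hz]
  ring

end ThetaFunctions

lemma nome_div_two_sq (z : ℂ) : nome (z / 2) ^ 2 = nome z := by
  rw [nome, nome, ← exp_nat_mul]
  congr 1
  push_cast
  ring

lemma E₂_div_two_sub_isBigO :
    (fun z => E₂ (z / 2) - (1 - 24 * nome z)) =O[I∞] fun z => nome z ^ 2 := by
  refine (E₂_sub_isBigO.comp_tendsto tendsto_div_two).congr (fun z => ?_) fun z => ?_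
  · simp [nome_div_two_sq]
  · simp only [Function.comp, ← nome_div_two_sq z]
    ring

lemma E₂_add_one_div_two_sub_isBigO :
    (fun z => E₂ ((z + 1) / 2) - (1 + 24 * nome z)) =O[I∞] fun z => nome z ^ 2 := by
  have h (z : ℂ) : nome ((z + 1) / 2) ^ 2 = -nome z := by
    rw [nome_div_two_sq, nome_add_one]
  refine (E₂_sub_isBigO.comp_tendsto tendsto_add_one_div_two).congr (fun z => ?_) fun z => ?_
  · simp [h]
  · simp [pow_mul _ 2 2, h, show 4 = 2 * 2 from rfl]

lemma E₂_two_mul_sub_isBigO : (fun z => E₂ (2 * z) - 1) =O[I∞] fun z => nome z ^ 2 := by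
  have h (z : ℂ) : nome (2 * z) = nome z ^ 2 := by
    rw [← nome_div_two_sq, mul_div_cancel_left₀ z two_ne_zero]
  have hE₂ : (fun z => E₂ (2 * z) - (1 - 24 * nome z ^ 4)) =O[I∞] fun z => nome z ^ 8 :=
    (E₂_sub_isBigO.comp_tendsto tendsto_two_mul).congr
      (fun z => by simp only [Function.comp, h]; ring)
      (fun z => by simp only [Function.comp, h]; ring)
  refine ((hE₂.trans (nome_pow_isBigO (by norm_num : 2 ≤ 8))).add
    ((nome_pow_isBigO (by norm_num : 2 ≤ 4)).const_mul_left (-24))).congr_left fun z => ?_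
  ring

lemma H₂_sub_isBigO : (fun z => H₂ z - 16 * nome z) =O[I∞] fun z => nome z ^ 2 := by
  refine ((E₂_add_one_div_two_sub_isBigO.sub E₂_div_two_sub_isBigO).const_mul_left
    (1 / 3)).congr_left fun z => ?_
  rw [H₂, e₂, e₃]
  ring

lemma H₄_sub_isBigO : (fun z => H₄ z - (1 - 8 * nome z)) =O[I∞] fun z => nome z ^ 2 := by
  refine ((E₂_two_mul_sub_isBigO.const_mul_left (4 / 3)).sub
    (E₂_add_one_div_two_sub_isBigO.const_mul_left (1 / 3))).congr_left fun z => ?_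
  rw [H₄, e₁, e₃]
  ring

lemma differentiableOn_H₂ : DifferentiableOn ℂ H₂ ℍₒ :=
  fun _ hz => (hasDerivAt_H₂ hz).differentiableAt.differentiableWithinAt

lemma differentiableOn_H₄ : DifferentiableOn ℂ H₄ ℍₒ :=
  fun _ hz => (hasDerivAt_H₄ hz).differentiableAt.differentiableWithinAt

/-! ### The numerators of Viazovska's functions -/

/-- The numerator `E₂E₄ - E₆` of `φ = φNum² / Δ`; it equals `3 (2πi)⁻¹ deriv E₄`. -/
noncomputable def φNum (z : ℂ) : ℂ := E₂ z * E₄ z - E₆ z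

/-- The numerator of `ψ = -ψNum / 2Δ`. -/
noncomputable def ψNum (z : ℂ) : ℂ :=
  H₂ z ^ 3 * (2 * H₂ z ^ 2 + 5 * H₂ z * H₄ z + 5 * H₄ z ^ 2)

/-- The image of `ψNum` under `z ↦ -1 / z`, without the automorphy factor. -/
noncomputable def ψNumInv (z : ℂ) : ℂ :=
  H₄ z ^ 3 * (2 * H₄ z ^ 2 + 5 * H₂ z * H₄ z + 5 * H₂ z ^ 2)

/-- The normalised derivative `(2πi)⁻¹ deriv φNum`. -/
noncomputable def DφNum (z : ℂ) : ℂ := 5 / 12 * (E₂ z ^ 2 * E₄ z - 2 * E₂ z * E₆ z + E₄ z ^ 2)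

/-- The normalised derivative `(2πi)⁻¹ deriv ψNum`. -/
noncomputable def DψNum (z : ℂ) : ℂ :=
  5 / 6 * E₂ z * ψNum z +
    5 / 3 * H₂ z ^ 3 * (H₂ z ^ 3 + 3 * H₂ z ^ 2 * H₄ z + 3 * H₂ z * H₄ z ^ 2 + 2 * H₄ z ^ 3)

/-- The Wronskian of `φNum²` and `ψNum`, which governs the monotonicity of their quotient. -/
noncomputable def wronskian (z : ℂ) : ℂ :=
  2 * φNum z * DφNum z * ψNum z - φNum z ^ 2 * DψNum z

section Numerators

variable {z : ℂ} (hz : 0 < z.im)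

include hz

lemma hasDerivAt_discr : HasDerivAt discr (2 * π * I * (E₂ z * discr z)) z := by
  refine ((((hasDerivAt_E₄ hz).pow 3).sub ((hasDerivAt_E₆ hz).pow 2)).div_const 1728).congr_deriv ?_
  simp only [discr]
  push_cast
  ring

lemma hasDerivAt_φNum : HasDerivAt φNum (2 * π * I * DφNum z) z := by
  refine (((hasDerivAt_E₂ hz).mul (hasDerivAt_E₄ hz)).sub (hasDerivAt_E₆ hz)).congr_deriv ?_
  rw [DφNum]
  ring

lemma hasDerivAt_ψNum : HasDerivAt ψNum (2 * π * I * DψNum z) z := by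
  have h₂ := hasDerivAt_H₂ hz
  have h₄ := hasDerivAt_H₄ hz
  refine ((h₂.pow 3).mul ((((h₂.pow 2).const_mul 2).add ((h₂.const_mul 5).mul h₄)).add
    ((h₄.pow 2).const_mul 5))).congr_deriv ?_
  simp only [DψNum, ψNum, Pi.add_apply, Pi.mul_apply, Pi.pow_apply]
  push_cast
  ring

lemma hasDerivAt_DφNum :
    HasDerivAt DφNum (2 * π * I * (5 / 12 * (E₂ z ^ 3 * E₄ z / 2 - 3 / 2 * E₂ z ^ 2 * E₆ z
      + 3 / 2 * E₂ z * E₄ z ^ 2 - E₄ z * E₆ z / 2))) z := by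
  have h₂ := hasDerivAt_E₂ hz
  have h₄ := hasDerivAt_E₄ hz
  have h₆ := hasDerivAt_E₆ hz
  refine (((((h₂.pow 2).mul h₄).sub ((h₂.const_mul 2).mul h₆)).add
    (h₄.pow 2)).const_mul (5 / 12)).congr_deriv ?_
  simp only [Pi.pow_apply]
  push_cast
  ring

-- The identity is polynomial in `E₂`, `H₂` and `H₄`.
lemma hasDerivAt_wronskian :
    HasDerivAt wronskian (2 * π * I * (11 / 6 * E₂ z * wronskian z + discr z *
      (600 * (E₄ z - E₂ z ^ 2) * ψNum z + 640 * H₂ z * φNum z ^ 2))) z := by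
  have hE₂ := hasDerivAt_E₂ hz
  have h₂ := hasDerivAt_H₂ hz
  have h₄ := hasDerivAt_H₄ hz
  have hφ := hasDerivAt_φNum hz
  have hψ := hasDerivAt_ψNum hz
  have hDψ := ((hE₂.const_mul (5 / 6)).mul hψ).add (((h₂.pow 3).const_mul (5 / 3)).mul
    ((((h₂.pow 3).add (((h₂.pow 2).const_mul 3).mul h₄)).add
      ((h₂.const_mul 3).mul (h₄.pow 2))).add ((h₄.pow 3).const_mul 2)))
  refine ((((hφ.const_mul 2).mul (hasDerivAt_DφNum hz)).mul hψ).sub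
    ((hφ.pow 2).mul hDψ)).congr_deriv ?_
  simp only [wronskian, DφNum, DψNum, φNum, ψNum, Pi.add_apply, Pi.mul_apply, Pi.pow_apply,
    discr_eq hz, E₄_eq hz, E₆_eq hz]
  push_cast
  ring

lemma φNum_add_one : φNum (z + 1) = φNum z := by
  rw [φNum, φNum, E₂_add_one hz, E₄_add_one hz, E₆_add_one hz]

lemma φNum_neg_one_div :
    φNum (-1 / z) = z ^ 6 * φNum z - 6 * I / π * z ^ 5 * E₄ z := by
  rw [φNum, φNum, E₂_neg_one_div hz, E₄_neg_one_div hz, E₆_neg_one_div hz]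
  ring

lemma ψNum_neg_one_div : ψNum (-1 / z) = -z ^ 10 * ψNumInv z := by
  rw [ψNum, ψNumInv, H₂_neg_one_div hz, H₄_neg_one_div hz]
  ring

end Numerators

lemma differentiableOn_φNum : DifferentiableOn ℂ φNum ℍₒ :=
  (differentiableOn_E₂.mul differentiableOn_E₄).sub differentiableOn_E₆

lemma differentiableOn_ψNum : DifferentiableOn ℂ ψNum ℍₒ := by
  have := differentiableOn_H₂
  have := differentiableOn_H₄
  unfold ψNum
  fun_prop

lemma isBigO_mul_sub_mul {α : Type*} {l : Filter α} {f₁ f₂ g₁ g₂ e : α → ℂ}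
    (hf : (fun x => f₁ x - f₂ x) =O[l] e) (hg : (fun x => g₁ x - g₂ x) =O[l] e)
    (hg₁ : g₁ =O[l] fun _ => (1 : ℂ)) (hf₂ : f₂ =O[l] fun _ => (1 : ℂ)) :
    (fun x => f₁ x * g₁ x - f₂ x * g₂ x) =O[l] e := by
  refine ((hf.mul hg₁).congr_right fun x => mul_one (e x)).add
    ((hf₂.mul hg).congr_right fun x => one_mul (e x)) |>.congr_left fun x => ?_
  ring

lemma comp_nome_isBigO_one {Q : ℂ → ℂ} (hQ : Continuous Q) :
    (fun z => Q (nome z)) =O[I∞] fun _ => (1 : ℂ) :=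
  ((hQ.tendsto 0).comp tendsto_nome).isBigO_one ℂ

lemma tendsto_div_nome_pow {f : ℂ → ℂ} {c : ℂ} {m n : ℕ} (hmn : m < n)
    (h : (fun z => f z - c * nome z ^ m) =O[I∞] fun z => nome z ^ n) :
    Tendsto (fun z => f z / nome z ^ m) I∞ (𝓝 c) := by
  obtain ⟨d, rfl⟩ := Nat.exists_eq_add_of_le hmn.le
  have hd : 0 < d := by omega
  have hquot : (fun z => f z / nome z ^ m - c) =O[I∞] fun z => nome z ^ d := by
    refine (h.mul (isBigO_refl (fun z => (nome z ^ m)⁻¹) I∞)).congr (fun z => ?_) fun z => ?_ <;>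
    · have := nome_ne_zero z
      field_simp
      try ring
  have hzero : Tendsto (fun z => nome z ^ d) I∞ (𝓝 0) := by
    simpa [hd.ne'] using tendsto_nome.pow d
  simpa using (hquot.trans_tendsto hzero).add_const c

lemma tendsto_H₂ : Tendsto H₂ I∞ (𝓝 0) :=
  tendsto_of_sub_isBigO_nome_pow (n := 1) (d := 16) one_ne_zero two_ne_zero
    (by simpa using H₂_sub_isBigO)

lemma tendsto_H₄ : Tendsto H₄ I∞ (𝓝 1) :=
  tendsto_of_sub_isBigO_nome_pow (n := 1) (d := -8) one_ne_zero two_ne_zero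
    (by simpa [sub_eq_add_neg] using H₄_sub_isBigO)

lemma φNum_sub_isBigO : (fun z => φNum z - 720 * nome z ^ 2) =O[I∞] fun z => nome z ^ 4 := by
  have hprod := isBigO_mul_sub_mul E₂_sub_isBigO E₄_sub_isBigO (tendsto_E₄.isBigO_one ℂ)
    (comp_nome_isBigO_one (Q := fun q => 1 - 24 * q ^ 2) (by fun_prop))
  refine ((hprod.sub E₆_sub_isBigO).add
    ((isBigO_refl (fun z => nome z ^ 4) I∞).const_mul_left (-5760))).congr_left fun z => ?_
  rw [φNum]
  ring

lemma tendsto_φNum_div_nome_sq : Tendsto (fun z => φNum z / nome z ^ 2) I∞ (𝓝 720) :=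
  tendsto_div_nome_pow (by norm_num) φNum_sub_isBigO

lemma tendsto_H₂_div_nome : Tendsto (fun z => H₂ z / nome z) I∞ (𝓝 16) := by
  simpa using tendsto_div_nome_pow (m := 1) one_lt_two (by simpa using H₂_sub_isBigO)

lemma tendsto_nome_sq_div_discr : Tendsto (fun z => nome z ^ 2 / discr z) I∞ (𝓝 1) := by
  have h := (((tendsto_H₂_div_nome.mul tendsto_H₄).mul
    (tendsto_H₂.add tendsto_H₄)).pow 2).div_const 256
  rw [show ((16 : ℂ) * 1 * (0 + 1)) ^ 2 / 256 = 1 by norm_num] at h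
  refine (inv_one (G := ℂ) ▸ h.inv₀ one_ne_zero).congr' ?_
  filter_upwards [eventually_im_pos] with z hz
  rw [discr_eq hz]
  have := nome_ne_zero z
  field_simp

lemma inv_discr_isBigO : (fun z => (discr z)⁻¹) =O[I∞] fun z => (nome z ^ 2)⁻¹ := by
  refine ((tendsto_nome_sq_div_discr.isBigO_one ℂ).mul
    (isBigO_refl (fun z => (nome z ^ 2)⁻¹) I∞)).congr (fun z => ?_) fun z => one_mul _
  have := nome_ne_zero z
  field_simp

lemma φNum_isBigO : φNum =O[I∞] fun z => nome z ^ 2 := by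
  refine ((tendsto_φNum_div_nome_sq.isBigO_one ℂ).mul
    (isBigO_refl (fun z => nome z ^ 2) I∞)).congr (fun z => ?_) fun z => one_mul _
  have := nome_ne_zero z
  field_simp

lemma H₂_isBigO : H₂ =O[I∞] nome := by
  refine ((tendsto_H₂_div_nome.isBigO_one ℂ).mul (isBigO_refl nome I∞)).congr (fun z => ?_)
    fun z => one_mul _
  have := nome_ne_zero z
  field_simp

lemma H₂_pow_three_mul_isBigO {f : ℂ → ℂ} {c : ℂ} (hf : Tendsto f I∞ (𝓝 c)) :
    (fun z => H₂ z ^ 3 * f z) =O[I∞] fun z => nome z ^ 3 :=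
  ((H₂_isBigO.pow 3).mul (hf.isBigO_one ℂ)).congr_right fun _ => mul_one _

lemma ψNum_isBigO : ψNum =O[I∞] fun z => nome z ^ 3 :=
  H₂_pow_three_mul_isBigO ((((tendsto_H₂.pow 2).const_mul 2).add
    ((tendsto_H₂.const_mul 5).mul tendsto_H₄)).add ((tendsto_H₄.pow 2).const_mul 5))

lemma DψNum_isBigO : DψNum =O[I∞] fun z => nome z ^ 3 := by
  have h := H₂_pow_three_mul_isBigO ((((tendsto_H₂.pow 3).add
    (((tendsto_H₂.pow 2).const_mul 3).mul tendsto_H₄)).add ((tendsto_H₂.const_mul 3).mul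
      (tendsto_H₄.pow 2))).add ((tendsto_H₄.pow 3).const_mul 2))
  have hE₂ := (tendsto_E₂.isBigO_one ℂ).mul ψNum_isBigO
  refine ((hE₂.congr_right fun z => one_mul _).const_mul_left (5 / 6)).add
    (h.const_mul_left (5 / 3)) |>.congr_left fun z => ?_
  rw [DψNum]
  ring

lemma tendsto_DφNum : Tendsto DφNum I∞ (𝓝 0) := by
  rw [show (0 : ℂ) = 5 / 12 * (1 ^ 2 * 1 - 2 * 1 * 1 + 1 ^ 2) by norm_num]
  exact ((((tendsto_E₂.pow 2).mul tendsto_E₄).sub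
    ((tendsto_E₂.const_mul 2).mul tendsto_E₆)).add (tendsto_E₄.pow 2)).const_mul (5 / 12)

lemma wronskian_isBigO : wronskian =O[I∞] fun z => nome z ^ 5 := by
  have hφ : φNum =O[I∞] fun _ => (1 : ℂ) := by
    simpa using φNum_isBigO.trans (nome_pow_isBigO (Nat.zero_le 2))
  have h₁ := (φNum_isBigO.mul (tendsto_DφNum.isBigO_one ℂ)).mul ψNum_isBigO
  have h₂ := (φNum_isBigO.mul hφ).mul DψNum_isBigO
  refine ((h₁.const_mul_left 2).sub h₂).congr (fun z => ?_) fun z => ?_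
  · rw [wronskian]
    ring
  · ring

lemma tendsto_wronskian_div_discr_sq : Tendsto (fun z => wronskian z / discr z ^ 2) I∞ (𝓝 0) := by
  have h : (fun z => wronskian z / discr z ^ 2) =O[I∞] nome := by
    refine (wronskian_isBigO.mul (inv_discr_isBigO.pow 2)).congr (fun z => ?_) fun z => ?_
    · rw [inv_pow, div_eq_mul_inv]
    · have := nome_ne_zero z
      field_simp
  exact h.trans_tendsto tendsto_nome

lemma E₄_sq_sub_ψNumInv_isBigO :
    (fun z => E₄ z ^ 2 - ψNumInv z / 2) =O[I∞] fun z => nome z ^ 2 := by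
  have hH₄ := tendsto_H₄.isBigO_one ℂ
  have hlin := comp_nome_isBigO_one (Q := fun q => 1 - 8 * q) (by fun_prop)
  have hconst := comp_nome_isBigO_one (Q := fun q => 16 * q) (by fun_prop)
  have h₄₄ := isBigO_mul_sub_mul H₄_sub_isBigO H₄_sub_isBigO hH₄ hlin
  have h₂₄ := isBigO_mul_sub_mul H₂_sub_isBigO H₄_sub_isBigO hH₄ hconst
  have h₂₂ := isBigO_mul_sub_mul H₂_sub_isBigO H₂_sub_isBigO (tendsto_H₂.isBigO_one ℂ) hconst
  have h₄₄₄ := isBigO_mul_sub_mul h₄₄ H₄_sub_isBigO hH₄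
    (comp_nome_isBigO_one (Q := fun q => (1 - 8 * q) * (1 - 8 * q)) (by fun_prop))
  have hquad := ((h₄₄.const_mul_left 2).add (h₂₄.const_mul_left 5)).add (h₂₂.const_mul_left 5)
  have hψ := isBigO_mul_sub_mul h₄₄₄
    (f₁ := fun z => H₄ z * H₄ z * H₄ z)
    (g₁ := fun z => 2 * (H₄ z * H₄ z) + 5 * (H₂ z * H₄ z) + 5 * (H₂ z * H₂ z))
    (g₂ := fun z => 2 * ((1 - 8 * nome z) * (1 - 8 * nome z))
      + 5 * (16 * nome z * (1 - 8 * nome z)) + 5 * (16 * nome z * (16 * nome z)))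
    (hquad.congr_left fun z => by ring)
    (((((tendsto_H₄.mul tendsto_H₄).const_mul 2).add ((tendsto_H₂.mul tendsto_H₄).const_mul 5)).add
      ((tendsto_H₂.mul tendsto_H₂).const_mul 5)).isBigO_one ℂ)
    (comp_nome_isBigO_one (Q := fun q => (1 - 8 * q) * (1 - 8 * q) * (1 - 8 * q)) (by fun_prop))
  have hE₄ := isBigO_mul_sub_mul E₄_sub_isBigO E₄_sub_isBigO (tendsto_E₄.isBigO_one ℂ)
    (comp_nome_isBigO_one (Q := fun q => 1 + 240 * q ^ 2) (by fun_prop))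
  have hpoly := (comp_nome_isBigO_one
    (Q := fun q => 480 + 5120 * q - 3840 * q ^ 2 + 196608 * q ^ 3) (by fun_prop)).mul
    (isBigO_refl (fun z => nome z ^ 2) I∞)
  refine (((hE₄.trans (nome_pow_isBigO (by norm_num))).sub (hψ.const_mul_left (1 / 2))).add
    (hpoly.congr_right fun z => one_mul _)).congr_left fun z => ?_
  rw [ψNumInv]
  ring

/-! ### The imaginary axis -/

/-- The real part of `f` on the imaginary axis, as a function of the height. -/
noncomputable def axis (f : ℂ → ℂ) (t : ℝ) : ℝ := (f (t * I)).re

lemma tendsto_mul_I_atTop : Tendsto (fun t : ℝ => (t : ℂ) * I) atTop I∞ :=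
  tendsto_comap_iff.2 (tendsto_id.congr fun t => by simp)

lemma tendsto_axis {f : ℂ → ℂ} {c : ℂ} (h : Tendsto f I∞ (𝓝 c)) :
    Tendsto (axis f) atTop (𝓝 c.re) :=
  (continuous_re.tendsto _).comp (h.comp tendsto_mul_I_atTop)

lemma coe_axis_of_eq {f : ℂ → ℂ} {t x : ℝ} (h : f (t * I) = x) : (axis f t : ℂ) = f (t * I) := by
  rw [axis, h, ofReal_re]

lemma hasSum_axis {f : ℂ → ℂ} {c : ℕ → ℝ} {t : ℝ}
    (h : HasSum (fun m => (c m : ℂ)) (f (t * I))) : HasSum c (axis f t) :=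
  Complex.hasSum_re h

lemma coe_axis_of_hasSum {f : ℂ → ℂ} {c : ℕ → ℝ} {t : ℝ}
    (h : HasSum (fun m => (c m : ℂ)) (f (t * I))) : (axis f t : ℂ) = f (t * I) :=
  (Complex.hasSum_ofReal.2 (hasSum_axis h)).unique h

lemma hasDerivAt_axis {f : ℂ → ℂ} {c t : ℝ} (hf : HasDerivAt f (2 * π * I * c) (t * I)) :
    HasDerivAt (axis f) (-2 * π * c) t := by
  have hline : HasDerivAt (fun s : ℝ => (s : ℂ) * I) I t := by
    simpa using (Complex.ofRealCLM.hasDerivAt (x := t)).mul_const I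
  refine (Complex.reCLM.hasFDerivAt.comp_hasDerivAt t (hf.comp t hline)).congr_deriv ?_
  rw [show 2 * π * I * c * I = ((-2 * π * c : ℝ) : ℂ) by
    push_cast
    linear_combination (2 * π * c : ℂ) * I_sq]
  simp

lemma antitoneOn_Ioi_of_hasDerivAt_nonpos {f f' : ℝ → ℝ} {a : ℝ}
    (hf : ∀ x, a < x → HasDerivAt f (f' x) x) (hf' : ∀ x, a < x → f' x ≤ 0) :
    AntitoneOn f (Set.Ioi a) := by
  refine antitoneOn_of_deriv_nonpos (convex_Ioi a)
    (fun x hx => (hf x hx).continuousAt.continuousWithinAt) ?_ ?_ <;> rw [interior_Ioi]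
  · exact fun x hx => (hf x hx).differentiableAt.differentiableWithinAt
  · exact fun x hx => (hf x hx).deriv ▸ hf' x hx

lemma nome_mul_I (t : ℝ) : nome (t * I) = (Real.exp (-π * t) : ℝ) := by
  rw [nome]
  push_cast
  congr 1
  linear_combination (π * t : ℂ) * I_sq

section Axis

variable {t : ℝ} (ht : 0 < t)

include ht

lemma im_mul_I_pos : 0 < ((t : ℂ) * I).im := by simpa using ht

lemma neg_one_div_mul_I : -1 / ((t : ℂ) * I) = ((1 / t : ℝ) : ℂ) * I := by
  have : (t : ℂ) ≠ 0 := ofReal_ne_zero.2 ht.ne'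
  push_cast
  field_simp
  rw [I_sq]

lemma hasSum_E₂_mul_I : HasSum (fun m => (((if m = 0 then 1 else
    -24 * (ArithmeticFunction.sigma 1 m : ℝ)) * Real.exp (-π * t) ^ (2 * m) : ℝ) : ℂ))
    (E₂ (t * I)) := by
  refine (hasSum_E₂ (im_mul_I_pos ht)).congr_fun fun m => ?_
  rw [nome_mul_I, ← pow_mul]
  split_ifs <;> push_cast <;> rfl

lemma hasSum_H₂_mul_I : HasSum (fun m => (((if m = 0 then 0 else
    8 * (ArithmeticFunction.sigma 1 m : ℝ) * (1 - (-1) ^ m)) * Real.exp (-π * t) ^ m : ℝ) : ℂ))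
    (H₂ (t * I)) := by
  have h := ((hasSum_E₂ (im_add_one_div_two_pos (im_mul_I_pos ht))).sub
    (hasSum_E₂ (im_div_two_pos (im_mul_I_pos ht)))).mul_left (1 / 3)
  rw [show H₂ (t * I) = 1 / 3 * (E₂ ((t * I + 1) / 2) - E₂ (t * I / 2)) by
    simp only [H₂, e₂, e₃]
    ring]
  refine h.congr_fun fun m => ?_
  rw [nome_div_two_sq, nome_div_two_sq, nome_add_one, nome_mul_I]
  split_ifs with hm
  · simp [hm]
  · rw [neg_pow]
    push_cast
    ring

lemma coe_axis_E₂ : (axis E₂ t : ℂ) = E₂ (t * I) := coe_axis_of_hasSum (hasSum_E₂_mul_I ht)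

lemma coe_axis_H₂ : (axis H₂ t : ℂ) = H₂ (t * I) := coe_axis_of_hasSum (hasSum_H₂_mul_I ht)

lemma axis_H₂_pos : 0 < axis H₂ t := by
  have h := hasSum_axis (hasSum_H₂_mul_I ht)
  rw [← h.tsum_eq]
  refine h.summable.tsum_pos (fun m => mul_nonneg ?_ (by positivity)) 1 ?_
  · split_ifs
    · exact le_rfl
    · refine mul_nonneg (by positivity) ?_
      rcases neg_one_pow_eq_or ℝ m with h | h <;> rw [h] <;> norm_num
  · have := Real.exp_pos (-π * t)
    norm_num
    simpa using this

lemma H₄_mul_I : H₄ (t * I) = ((axis H₂ (1 / t) / t ^ 2 : ℝ) : ℂ) := by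
  have h : H₂ (-1 / (t * I)) = _ := H₂_neg_one_div (im_mul_I_pos ht)
  rw [neg_one_div_mul_I ht, ← coe_axis_H₂ (one_div_pos.2 ht), mul_pow, I_sq] at h
  have : (t : ℂ) ≠ 0 := ofReal_ne_zero.2 ht.ne'
  push_cast at h ⊢
  rw [h]
  field_simp

lemma coe_axis_H₄ : (axis H₄ t : ℂ) = H₄ (t * I) := coe_axis_of_eq (H₄_mul_I ht)

lemma axis_H₄_pos : 0 < axis H₄ t := by
  rw [axis, H₄_mul_I ht, ofReal_re]
  have := axis_H₂_pos (one_div_pos.2 ht)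
  positivity

lemma coe_axis_E₄ : (axis E₄ t : ℂ) = E₄ (t * I) :=
  coe_axis_of_eq (x := axis H₂ t ^ 2 + axis H₂ t * axis H₄ t + axis H₄ t ^ 2) <| by
    push_cast [coe_axis_H₂ ht, coe_axis_H₄ ht]
    exact E₄_eq (im_mul_I_pos ht)

lemma coe_axis_E₆ : (axis E₆ t : ℂ) = E₆ (t * I) :=
  coe_axis_of_eq (x := (axis H₂ t + 2 * axis H₄ t) * (2 * axis H₂ t + axis H₄ t) *
    (axis H₄ t - axis H₂ t) / 2) <| by
    push_cast [coe_axis_H₂ ht, coe_axis_H₄ ht]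
    exact E₆_eq (im_mul_I_pos ht)

lemma discr_mul_I :
    discr (t * I) = (((axis H₂ t * axis H₄ t * (axis H₂ t + axis H₄ t)) ^ 2 / 256 : ℝ) : ℂ) := by
  push_cast [coe_axis_H₂ ht, coe_axis_H₄ ht]
  exact discr_eq (im_mul_I_pos ht)

lemma coe_axis_discr : (axis discr t : ℂ) = discr (t * I) := coe_axis_of_eq (discr_mul_I ht)

lemma axis_discr_pos : 0 < axis discr t := by
  have := axis_H₂_pos ht
  have := axis_H₄_pos ht
  rw [axis, discr_mul_I ht, ofReal_re]
  positivity

lemma coe_axis_φNum : (axis φNum t : ℂ) = φNum (t * I) :=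
  coe_axis_of_eq (x := axis E₂ t * axis E₄ t - axis E₆ t) <| by
    push_cast [coe_axis_E₂ ht, coe_axis_E₄ ht, coe_axis_E₆ ht]
    rfl

lemma ψNum_mul_I : ψNum (t * I) = ((axis H₂ t ^ 3 *
    (2 * axis H₂ t ^ 2 + 5 * axis H₂ t * axis H₄ t + 5 * axis H₄ t ^ 2) : ℝ) : ℂ) := by
  push_cast [coe_axis_H₂ ht, coe_axis_H₄ ht]
  rfl

lemma coe_axis_ψNum : (axis ψNum t : ℂ) = ψNum (t * I) := coe_axis_of_eq (ψNum_mul_I ht)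

lemma axis_ψNum_pos : 0 < axis ψNum t := by
  have := axis_H₂_pos ht
  have := axis_H₄_pos ht
  rw [axis, ψNum_mul_I ht, ofReal_re]
  positivity

lemma coe_axis_DφNum : (axis DφNum t : ℂ) = DφNum (t * I) :=
  coe_axis_of_eq (x := 5 / 12 *
    (axis E₂ t ^ 2 * axis E₄ t - 2 * axis E₂ t * axis E₆ t + axis E₄ t ^ 2)) <| by
    push_cast [coe_axis_E₂ ht, coe_axis_E₄ ht, coe_axis_E₆ ht]
    rfl

lemma coe_axis_DψNum : (axis DψNum t : ℂ) = DψNum (t * I) :=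
  coe_axis_of_eq (x := 5 / 6 * axis E₂ t * axis ψNum t + 5 / 3 * axis H₂ t ^ 3 *
    (axis H₂ t ^ 3 + 3 * axis H₂ t ^ 2 * axis H₄ t + 3 * axis H₂ t * axis H₄ t ^ 2 +
      2 * axis H₄ t ^ 3)) <| by
    push_cast [coe_axis_E₂ ht, coe_axis_ψNum ht, coe_axis_H₂ ht, coe_axis_H₄ ht]
    rfl

lemma wronskian_mul_I : wronskian (t * I) = ((2 * axis φNum t * axis DφNum t * axis ψNum t -
    axis φNum t ^ 2 * axis DψNum t : ℝ) : ℂ) := by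
  push_cast [coe_axis_φNum ht, coe_axis_DφNum ht, coe_axis_ψNum ht, coe_axis_DψNum ht]
  rfl

lemma axis_wronskian : axis wronskian t =
    2 * axis φNum t * axis DφNum t * axis ψNum t - axis φNum t ^ 2 * axis DψNum t := by
  rw [axis, wronskian_mul_I ht, ofReal_re]

lemma coe_axis_wronskian : (axis wronskian t : ℂ) = wronskian (t * I) :=
  coe_axis_of_eq (wronskian_mul_I ht)

lemma axis_E₂_sq_le : axis E₂ t ^ 2 ≤ axis E₄ t := by
  have hmono : MonotoneOn (axis E₂) (Set.Ioi 0) := fun r hr s hs hrs =>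
    hasSum_le (fun m => by
      split_ifs with hm
      · simp [hm]
      · have := Real.pi_pos
        exact mul_le_mul_of_nonpos_left (pow_le_pow_left₀ (Real.exp_pos _).le
          (Real.exp_le_exp.2 (by nlinarith)) _) (by simp))
      (hasSum_axis (hasSum_E₂_mul_I hr)) (hasSum_axis (hasSum_E₂_mul_I hs))
  have hderiv : HasDerivAt (axis E₂) (-2 * π * ((axis E₂ t ^ 2 - axis E₄ t) / 12)) t :=
    hasDerivAt_axis <| (hasDerivAt_E₂ (im_mul_I_pos ht)).congr_deriv <| by
      push_cast [coe_axis_E₂ ht, coe_axis_E₄ ht]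
      rfl
  have h := hmono.derivWithin_nonneg (x := t)
  rw [derivWithin_of_isOpen isOpen_Ioi ht, hderiv.deriv] at h
  nlinarith [Real.pi_pos]

end Axis

/-! ### The key inequality -/

lemma hasDerivAt_axis_wronskian_mul_discr_rpow {t : ℝ} (ht : 0 < t) :
    HasDerivAt (fun s => axis wronskian s * axis discr s ^ (-(11 / 6) : ℝ))
      (-2 * π * (axis discr t ^ (-(11 / 6) : ℝ) * (axis discr t *
        (600 * (axis E₄ t - axis E₂ t ^ 2) * axis ψNum t +
          640 * axis H₂ t * axis φNum t ^ 2)))) t := by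
  have hW : HasDerivAt (axis wronskian) (-2 * π * (11 / 6 * axis E₂ t * axis wronskian t +
      axis discr t * (600 * (axis E₄ t - axis E₂ t ^ 2) * axis ψNum t +
        640 * axis H₂ t * axis φNum t ^ 2))) t :=
    hasDerivAt_axis <| (hasDerivAt_wronskian (im_mul_I_pos ht)).congr_deriv <| by
      push_cast [coe_axis_E₂ ht, coe_axis_E₄ ht, coe_axis_wronskian ht, coe_axis_discr ht,
        coe_axis_ψNum ht, coe_axis_H₂ ht, coe_axis_φNum ht]
      rfl
  have hΔ : HasDerivAt (axis discr) (-2 * π * (axis E₂ t * axis discr t)) t :=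
    hasDerivAt_axis <| (hasDerivAt_discr (im_mul_I_pos ht)).congr_deriv <| by
      push_cast [coe_axis_E₂ ht, coe_axis_discr ht]
      rfl
  have hΔ_pos := axis_discr_pos ht
  refine (hW.mul (hΔ.rpow_const (Or.inl hΔ_pos.ne'))).congr_deriv ?_
  rw [Real.rpow_sub_one hΔ_pos.ne']
  field_simp
  ring

lemma tendsto_axis_wronskian_mul_discr_rpow :
    Tendsto (fun s => axis wronskian s * axis discr s ^ (-(11 / 6) : ℝ)) atTop (𝓝 0) := by
  have hΔ : Tendsto (axis discr) atTop (𝓝 0) := by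
    have h : Tendsto discr I∞ (𝓝 0) := by
      refine ((((tendsto_H₂.mul tendsto_H₄).mul (tendsto_H₂.add tendsto_H₄)).pow 2).div_const
        256).congr' (eventually_im_pos.mono fun z hz => (discr_eq hz).symm) |>.trans_eq ?_
      norm_num
    exact tendsto_axis h
  have hquot := tendsto_zero_iff_norm_tendsto_zero.1
    (tendsto_wronskian_div_discr_sq.comp tendsto_mul_I_atTop)
  refine squeeze_zero_norm' ?_ hquot
  filter_upwards [eventually_gt_atTop 0, hΔ.eventually (ge_mem_nhds one_pos)] with s hs hs₁
  have hpos := axis_discr_pos hs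
  rw [Function.comp, ← coe_axis_wronskian hs, ← coe_axis_discr hs, norm_mul, norm_div, norm_pow,
    norm_real, norm_real, div_eq_mul_inv ‖_‖, Real.norm_of_nonneg hpos.le,
    Real.norm_of_nonneg (Real.rpow_nonneg hpos.le _), ← Real.rpow_natCast, ← Real.rpow_neg hpos.le]
  exact mul_le_mul_of_nonneg_left (Real.rpow_le_rpow_of_exponent_ge hpos hs₁ (by norm_num))
    (norm_nonneg _)

-- The factor `Δ ^ (-11/6)` removes the term `11/6 E₂ W` from the derivative of the Wronskian `W`;
-- the remaining terms have a sign since `E₂² ≤ E₄`.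
lemma axis_wronskian_nonneg {t : ℝ} (ht : 0 < t) : 0 ≤ axis wronskian t := by
  have hanti := antitoneOn_Ioi_of_hasDerivAt_nonpos
    (fun s hs => hasDerivAt_axis_wronskian_mul_discr_rpow hs) fun s hs => by
      have := axis_discr_pos hs
      have := axis_ψNum_pos hs
      have := axis_H₂_pos hs
      have := sub_nonneg.2 (axis_E₂_sq_le hs)
      have := Real.pi_pos
      rw [neg_mul, neg_mul, neg_nonpos]
      positivity
  refine nonneg_of_mul_nonneg_left (b := axis discr t ^ (-(11 / 6) : ℝ)) ?_
    (Real.rpow_pos_of_pos (axis_discr_pos ht) _)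
  refine le_of_tendsto tendsto_axis_wronskian_mul_discr_rpow ?_
  filter_upwards [eventually_ge_atTop t] with s hs
  exact hanti ht (ht.trans_le hs) hs

lemma antitoneOn_axis_φNum_sq_div_ψNum :
    AntitoneOn (fun s => axis φNum s ^ 2 / axis ψNum s) (Set.Ioi 0) := by
  refine antitoneOn_Ioi_of_hasDerivAt_nonpos
    (f' := fun s => -2 * π * (axis wronskian s / axis ψNum s ^ 2)) (fun s hs => ?_) fun s hs => ?_
  · have hφ : HasDerivAt (axis φNum) (-2 * π * axis DφNum s) s := hasDerivAt_axis <| by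
      simpa only [coe_axis_DφNum hs] using hasDerivAt_φNum (im_mul_I_pos hs)
    have hψ : HasDerivAt (axis ψNum) (-2 * π * axis DψNum s) s := hasDerivAt_axis <| by
      simpa only [coe_axis_DψNum hs] using hasDerivAt_ψNum (im_mul_I_pos hs)
    have hpos := axis_ψNum_pos hs
    refine ((hφ.pow 2).div hψ hpos.ne').congr_deriv ?_
    rw [axis_wronskian hs]
    simp only [Pi.pow_apply]
    push_cast
    field_simp
    ring
  · have := axis_wronskian_nonneg hs
    have := Real.pi_pos
    rw [neg_mul, neg_mul, neg_nonpos]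
    positivity

lemma tendsto_mul_φNum_mul_I : Tendsto (fun t : ℝ => (t : ℂ) * φNum (t * I)) atTop (𝓝 0) := by
  have hφ : φNum =O[I∞] nome := by
    simpa using φNum_isBigO.trans (nome_pow_isBigO one_le_two)
  have hexp : Tendsto (fun t : ℝ => (t : ℂ) * nome (t * I)) atTop (𝓝 0) := by
    rw [tendsto_zero_iff_norm_tendsto_zero]
    have h := (tendsto_rpow_mul_exp_neg_mul_atTop_nhds_zero 1 π Real.pi_pos).norm
    simpa [norm_nome] using h
  exact ((isBigO_refl _ _).mul (hφ.comp_tendsto tendsto_mul_I_atTop)).trans_tendsto hexp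

lemma axis_φNum_sq_div_ψNum_one_div {t : ℝ} (ht : 0 < t) :
    ((axis φNum (1 / t) ^ 2 / axis ψNum (1 / t) : ℝ) : ℂ) =
      (6 / π * E₄ (t * I) - t * φNum (t * I)) ^ 2 / ψNumInv (t * I) := by
  have ht' : (t : ℂ) ≠ 0 := ofReal_ne_zero.2 ht.ne'
  push_cast [coe_axis_φNum (one_div_pos.2 ht), coe_axis_ψNum (one_div_pos.2 ht)]
  rw [← ofReal_one, ← ofReal_div, ← neg_one_div_mul_I ht, φNum_neg_one_div (im_mul_I_pos ht),
    ψNum_neg_one_div (im_mul_I_pos ht)]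
  have hnum : ((t * I) ^ 6 * φNum (t * I) - 6 * I / π * (t * I) ^ 5 * E₄ (t * I)) ^ 2 =
      t ^ 10 * (6 / π * E₄ (t * I) - t * φNum (t * I)) ^ 2 := by
    ring_nf
    simp only [I_pow_eq_pow_mod, Nat.reduceMod]
    norm_num
  have hden : -(t * I) ^ 10 * ψNumInv (t * I) = t ^ 10 * ψNumInv (t * I) := by
    rw [mul_pow, I_pow_eq_pow_mod]
    norm_num
  rw [hnum, hden, mul_div_mul_left _ _ (pow_ne_zero 10 ht')]

lemma tendsto_ψNumInv : Tendsto ψNumInv I∞ (𝓝 2) := by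
  rw [show (2 : ℂ) = 1 ^ 3 * (2 * 1 ^ 2 + 5 * 0 * 1 + 5 * 0 ^ 2) by norm_num]
  exact (tendsto_H₄.pow 3).mul ((((tendsto_H₄.pow 2).const_mul 2).add
    ((tendsto_H₂.const_mul 5).mul tendsto_H₄)).add ((tendsto_H₂.pow 2).const_mul 5))

lemma tendsto_axis_φNum_sq_div_ψNum_one_div :
    Tendsto (fun t => axis φNum (1 / t) ^ 2 / axis ψNum (1 / t)) atTop (𝓝 (18 / π ^ 2)) := by
  have h := (((((tendsto_E₄.comp tendsto_mul_I_atTop).const_mul (6 / π : ℂ)).sub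
    tendsto_mul_φNum_mul_I).pow 2).div (tendsto_ψNumInv.comp tendsto_mul_I_atTop) two_ne_zero)
  have hlim : (6 / π * 1 - 0) ^ 2 / 2 = ((18 / π ^ 2 : ℝ) : ℂ) := by
    push_cast
    ring
  rw [hlim] at h
  refine ((continuous_re.tendsto _).comp h).congr' ?_
  filter_upwards [eventually_gt_atTop 0] with t ht
  have := congrArg re (axis_φNum_sq_div_ψNum_one_div ht)
  rw [ofReal_re] at this
  exact this.symm

lemma axis_φNum_sq_le {t : ℝ} (ht : 0 < t) : axis φNum t ^ 2 ≤ 18 / π ^ 2 * axis ψNum t := by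
  rw [← div_le_iff₀ (axis_ψNum_pos ht)]
  refine ge_of_tendsto tendsto_axis_φNum_sq_div_ψNum_one_div ?_
  filter_upwards [eventually_ge_atTop (1 / t)] with s hs
  have hs_pos : 0 < s := (one_div_pos.2 ht).trans_le hs
  exact antitoneOn_axis_φNum_sq_div_ψNum (one_div_pos.2 hs_pos) ht ((one_div_le ht hs_pos).1 hs)

/-! ### Viazovska's functions -/

/-- Viazovska's weakly holomorphic quasimodular form, whose contour integrals give the `+1`
eigenfunction of the Fourier transform. -/
noncomputable def φ (z : ℂ) : ℂ := φNum z ^ 2 / discr z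

/-- Viazovska's weakly holomorphic modular form for `Γ(2)`, whose contour integrals give the `-1`
eigenfunction of the Fourier transform. -/
noncomputable def ψ (z : ℂ) : ℂ := -ψNum z / (2 * discr z)

/-- The weight `κ` for which `φ ± κ ψ` produce the magic function and its Fourier transform. -/
noncomputable def κ : ℝ := 36 / π ^ 2

/-- The function `z ↦ z² P(-1/z)`, the action of `S` on `P` in weight `-2`. -/
noncomputable def inverted (P : ℂ → ℂ) (z : ℂ) : ℂ := z ^ 2 * P (-1 / z)

/-- The integrand `z² (φ + c ψ)(-1/z)` of the contour integrals; it is used for `c = ± κ`. -/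
noncomputable def magicKernel (c z : ℂ) : ℂ := inverted φ z + c * inverted ψ z

lemma differentiableOn_φ : DifferentiableOn ℂ φ ℍₒ :=
  (differentiableOn_φNum.pow 2).div differentiableOn_discr fun z _ => discr_ne_zero z

lemma differentiableOn_ψ : DifferentiableOn ℂ ψ ℍₒ :=
  differentiableOn_ψNum.neg.div (differentiableOn_discr.const_mul 2)
    fun z _ => mul_ne_zero two_ne_zero (discr_ne_zero z)

section FunctionalEquations

variable {z : ℂ} (hz : 0 < z.im)

include hz

lemma φ_add_one : φ (z + 1) = φ z := by
  rw [φ, φ, φNum_add_one hz, discr_add_one hz]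

lemma ψ_add_one : ψ (z + 1) = -ψ z := by
  rw [ψ, ψ, ψNum, ψNum, discr_add_one hz, H₂_add_one hz, H₄_add_one hz]
  ring

lemma inverted_φ :
    inverted φ z = z ^ 2 * φ z - 12 * I / π * (z * (E₄ z * (φNum z / discr z)))
      - κ * (E₄ z ^ 2 / discr z) := by
  have := ne_zero_of_im_pos hz
  have := discr_ne_zero z
  have := ofReal_pi_ne_zero
  rw [inverted, φ, φ, κ, φNum_neg_one_div hz, discr_neg_one_div hz]
  push_cast
  field_simp
  linear_combination 36 * E₄ z ^ 2 * I_sq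

lemma inverted_ψ : inverted ψ z = ψNumInv z / (2 * discr z) := by
  have := ne_zero_of_im_pos hz
  have := discr_ne_zero z
  rw [inverted, ψ, ψNum_neg_one_div hz, discr_neg_one_div hz]
  field_simp

lemma inverted_φ_add_one_sub :
    inverted φ (z + 1) - inverted φ z =
      (2 * z + 1) * φ z - 12 * I / π * (E₄ z * (φNum z / discr z)) := by
  have hz₁ : 0 < (z + 1).im := by simpa using hz
  rw [inverted_φ hz, inverted_φ hz₁, φ_add_one hz, E₄_add_one hz, φNum_add_one hz,
    discr_add_one hz]
  ring

lemma inverted_ψ_add_one_sub : inverted ψ (z + 1) - inverted ψ z = -ψ z := by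
  have hz₁ : 0 < (z + 1).im := by simpa using hz
  have := discr_ne_zero z
  rw [inverted_ψ hz, inverted_ψ hz₁, discr_add_one hz, ψ, ψNumInv, ψNumInv, ψNum,
    H₂_add_one hz, H₄_add_one hz]
  field_simp
  ring

lemma inverted_φ_second_difference :
    inverted φ (z + 1) - 2 * inverted φ z + inverted φ (z - 1) = 2 * φ z := by
  have hz₁ : 0 < (z - 1).im := by simpa using hz
  have h := inverted_φ_add_one_sub hz₁
  rw [← φ_add_one hz₁, ← E₄_add_one hz₁, ← φNum_add_one hz₁, ← discr_add_one hz₁,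
    sub_add_cancel] at h
  linear_combination inverted_φ_add_one_sub hz - h

lemma inverted_ψ_second_difference :
    inverted ψ (z + 1) - 2 * inverted ψ z + inverted ψ (z - 1) = -2 * ψ z := by
  have hz₁ : 0 < (z - 1).im := by simpa using hz
  have h := inverted_ψ_add_one_sub hz₁
  have hψ := ψ_add_one hz₁
  rw [sub_add_cancel] at h hψ
  linear_combination inverted_ψ_add_one_sub hz - h + hψ

end FunctionalEquations

lemma tendsto_φNum_div_discr : Tendsto (fun z => φNum z / discr z) I∞ (𝓝 720) := by
  refine (mul_one (720 : ℂ) ▸ tendsto_φNum_div_nome_sq.mul tendsto_nome_sq_div_discr).congr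
    fun z => ?_
  have := nome_ne_zero z
  field_simp

lemma φ_isBigO : φ =O[I∞] nome := by
  have h := (tendsto_φNum_div_discr.isBigO_one ℂ).mul
    (φNum_isBigO.trans (nome_pow_isBigO one_le_two))
  refine h.congr (fun z => ?_) fun z => by ring
  rw [φ]
  ring

lemma ψ_isBigO : ψ =O[I∞] nome := by
  refine ((ψNum_isBigO.mul inv_discr_isBigO).const_mul_left (-1 / 2)).congr (fun z => ?_)
    fun z => ?_
  · rw [ψ]
    have := discr_ne_zero z
    field_simp
  · have := nome_ne_zero z
    field_simp

lemma isBigO_one_add_norm_sq {l : Filter ℂ} {p : ℂ → ℂ} {C : ℝ}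
    (hp : ∀ z, ‖p z‖ ≤ C * (1 + ‖z‖ ^ 2)) : p =O[l] fun z => 1 + ‖z‖ ^ 2 :=
  IsBigO.of_bound C (.of_forall fun z => by
    rw [Real.norm_of_nonneg (by positivity)]
    exact hp z)

lemma magicKernel_isBigO {c : ℂ} {g : ℂ → ℝ} (hg : (fun _ => (1 : ℝ)) =O[I∞] g)
    (h : (fun z => (E₄ z ^ 2 - c * (ψNumInv z / 2)) / discr z) =O[I∞] g) :
    magicKernel (c * κ) =O[I∞] fun z => (1 + ‖z‖ ^ 2) * g z := by
  have hone : (fun _ : ℂ => (1 : ℂ)) =O[I∞] fun z => 1 + ‖z‖ ^ 2 :=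
    isBigO_one_add_norm_sq (C := 1) fun z => by
      rw [norm_one]
      nlinarith [sq_nonneg ‖z‖]
  have hid : (fun z : ℂ => z) =O[I∞] fun z => 1 + ‖z‖ ^ 2 :=
    isBigO_one_add_norm_sq (C := 1) fun z => by nlinarith [sq_nonneg (‖z‖ - 1)]
  have hsq : (fun z : ℂ => z ^ 2) =O[I∞] fun z => 1 + ‖z‖ ^ 2 :=
    isBigO_one_add_norm_sq (C := 1) fun z => by
      rw [norm_pow]
      linarith
  have hφ : φ =O[I∞] g := (φ_isBigO.trans (tendsto_nome.isBigO_one ℝ)).trans hg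
  have hmid : (fun z => E₄ z * (φNum z / discr z)) =O[I∞] g :=
    ((tendsto_E₄.mul tendsto_φNum_div_discr).isBigO_one ℝ).trans hg
  refine (((hsq.mul hφ).sub ((hid.mul hmid).const_mul_left (12 * I / π))).sub
    ((hone.mul h).const_mul_left κ)).congr' ?_ .rfl
  filter_upwards [eventually_im_pos] with z hz
  rw [magicKernel, inverted_φ hz, inverted_ψ hz]
  have := discr_ne_zero z
  field_simp
  ring

-- The pole of `E₄² / Δ` at infinity is cancelled by that of `ψNumInv / 2Δ`.
lemma magicKernel_κ_isBigO : magicKernel κ =O[I∞] fun z => (1 + ‖z‖ ^ 2) * Real.exp (0 * z.im) := by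
  have h : (fun z => (E₄ z ^ 2 - ψNumInv z / 2) / discr z) =O[I∞] fun _ => (1 : ℝ) := by
    refine (E₄_sq_sub_ψNumInv_isBigO.mul inv_discr_isBigO).trans ?_
    refine (isBigO_const_const (1 : ℂ) one_ne_zero I∞).congr_left fun z => ?_
    have := nome_ne_zero z
    field_simp
  simpa using magicKernel_isBigO (c := 1) (isBigO_refl _ _) (by simpa using h)

lemma magicKernel_neg_κ_isBigO :
    magicKernel (-κ) =O[I∞] fun z => (1 + ‖z‖ ^ 2) * Real.exp (2 * π * z.im) := by
  have hexp : ∀ z, Real.exp (2 * π * z.im) = ‖(nome z ^ 2)⁻¹‖ := fun z => by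
    rw [norm_inv, norm_pow, norm_nome, ← Real.exp_nat_mul, ← Real.exp_neg]
    congr 1
    push_cast
    ring
  have hone : (fun _ : ℂ => (1 : ℝ)) =O[I∞] fun z => Real.exp (2 * π * z.im) := by
    refine IsBigO.of_bound 1 ?_
    filter_upwards [eventually_im_pos] with z hz
    rw [Real.norm_of_nonneg (Real.exp_pos _).le, norm_one, one_mul, Real.one_le_exp_iff]
    positivity
  have hnum : (fun z => E₄ z ^ 2 - -1 * (ψNumInv z / 2)) =O[I∞] fun _ => (1 : ℂ) :=
    ((tendsto_E₄.pow 2).sub ((tendsto_ψNumInv.div_const 2).const_mul (-1))).isBigO_one ℂ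
  have hquot : (fun z => (E₄ z ^ 2 - -1 * (ψNumInv z / 2)) / discr z) =O[I∞]
      fun z => Real.exp (2 * π * z.im) := by
    simp only [hexp]
    exact ((hnum.mul inv_discr_isBigO).congr_right fun z => one_mul _).norm_right
  simpa using magicKernel_isBigO (c := -1) hone hquot

section ImaginaryAxis

open scoped ComplexOrder

variable {t : ℝ} (ht : 0 < t)

include ht

lemma magicKernel_mul_I (c : ℝ) :
    magicKernel c (t * I) = ((t ^ 2 * ((c / 2 * axis ψNum (1 / t) - axis φNum (1 / t) ^ 2) /
      axis discr (1 / t)) : ℝ) : ℂ) := by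
  have ht' := one_div_pos.2 ht
  have : (axis discr (1 / t) : ℂ) ≠ 0 := ofReal_ne_zero.2 (axis_discr_pos ht').ne'
  rw [magicKernel, inverted, inverted, neg_one_div_mul_I ht, φ, ψ, ← coe_axis_φNum ht',
    ← coe_axis_ψNum ht', ← coe_axis_discr ht', mul_pow, I_sq]
  push_cast at this ⊢
  field_simp
  ring

lemma magicKernel_κ_nonneg : 0 ≤ magicKernel κ (t * I) := by
  rw [magicKernel_mul_I ht, zero_le_real]
  have ht' := one_div_pos.2 ht
  have := axis_discr_pos ht'
  have : 0 ≤ κ / 2 * axis ψNum (1 / t) - axis φNum (1 / t) ^ 2 := by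
    rw [sub_nonneg, κ, show 36 / π ^ 2 / 2 = 18 / π ^ 2 by ring]
    exact axis_φNum_sq_le ht'
  positivity

lemma magicKernel_neg_κ_nonpos : magicKernel (-κ) (t * I) ≤ 0 := by
  have hψ := axis_ψNum_pos (one_div_pos.2 ht)
  have hΔ := axis_discr_pos (one_div_pos.2 ht)
  have hκ : 0 < κ := by
    rw [κ]
    positivity
  rw [← ofReal_neg, magicKernel_mul_I ht, ← ofReal_zero, real_le_real]
  refine mul_nonpos_of_nonneg_of_nonpos (by positivity) (div_nonpos_of_nonpos_of_nonneg ?_ hΔ.le)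
  nlinarith [mul_pos hκ hψ, sq_nonneg (axis φNum (1 / t))]

end ImaginaryAxis

/-! ### Laplace transforms along vertical lines -/

/-- The Gaussian `e^{πisz}`, as a function of its complex width `z`; for `s = ‖v‖ ^ 2` this is a
Gaussian in `v`. -/
noncomputable def gauss (s : ℝ) (z : ℂ) : ℂ := cexp (π * I * s * z)

lemma gauss_zero_left (z : ℂ) : gauss 0 z = 1 := by simp [gauss]

lemma gauss_zero_right (s : ℝ) : gauss s 0 = 1 := by simp [gauss]

lemma gauss_add (s : ℝ) (z w : ℂ) : gauss s (z + w) = gauss s z * gauss s w := by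
  rw [gauss, gauss, gauss, ← exp_add]
  ring_nf

lemma norm_gauss (s : ℝ) (z : ℂ) : ‖gauss s z‖ = Real.exp (-π * s * z.im) := by
  rw [gauss, norm_exp]
  simp

lemma norm_gauss_le_one {s : ℝ} {z : ℂ} (hs : 0 ≤ s) (hz : 0 ≤ z.im) : ‖gauss s z‖ ≤ 1 := by
  rw [norm_gauss, Real.exp_le_one_iff, neg_mul, neg_mul, neg_nonpos]
  positivity

lemma differentiable_gauss (s : ℝ) : Differentiable ℂ (gauss s) := by
  unfold gauss
  fun_prop

lemma continuous_gauss (s : ℝ) : Continuous (gauss s) := (differentiable_gauss s).continuous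

/-- The vertical line of abscissa `σ`, parametrised by the imaginary part. -/
def vert (σ t : ℝ) : ℂ := σ + t * I

@[simp] lemma vert_im (σ t : ℝ) : (vert σ t).im = t := by simp [vert]

@[simp] lemma vert_re (σ t : ℝ) : (vert σ t).re = σ := by simp [vert]

lemma vert_zero (t : ℝ) : vert 0 t = t * I := by simp [vert]

lemma vert_add_one (σ t : ℝ) : vert (σ + 1) t = vert σ t + 1 := by
  simp only [vert]
  push_cast
  ring

lemma vert_im_pos (σ : ℝ) {t : ℝ} (ht : 0 < t) : 0 < (vert σ t).im := by rwa [vert_im]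

lemma vert_ne_zero (σ : ℝ) {t : ℝ} (ht : 0 < t) : vert σ t ≠ 0 :=
  ne_zero_of_im_pos (vert_im_pos σ ht)

lemma continuous_vert (σ : ℝ) : Continuous (vert σ) := by
  unfold vert
  fun_prop

lemma hasDerivAt_vert (σ t : ℝ) : HasDerivAt (vert σ) I t :=
  (((ofRealCLM.hasDerivAt (x := t)).mul_const I).const_add (σ : ℂ)).congr_deriv (by simp)

lemma tendsto_vert (σ : ℝ) : Tendsto (vert σ) atTop I∞ :=
  tendsto_comap_iff.2 (tendsto_id.congr fun t => (vert_im σ t).symm)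

lemma one_le_norm_of_one_le_im {z : ℂ} (hz : 1 ≤ z.im) : 1 ≤ ‖z‖ :=
  hz.trans ((le_abs_self _).trans (abs_im_le_norm z))

/-- The contribution to the eigenprofile of `P` of the half-line `σ + i(t₀, ∞)`; in the coordinate
`z = 2σ - 1/w` it is the integral of `(z - 2σ)² P(-1/(z - 2σ)) e^{πisz}` over a circular arc ending
at the cusp `2σ`. -/
noncomputable def obliqueIntegral (P : ℂ → ℂ) (σ t₀ s : ℝ) : ℂ :=
  ∫ t in Set.Ioi t₀, P (vert σ t) / vert σ t ^ 4 * gauss s (2 * σ + -1 / vert σ t) * I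

/-- The integral of `P(z) e^{πisz}` over the half-line from `i` to `i∞`. -/
noncomputable def axisIntegral (P : ℂ → ℂ) (s : ℝ) : ℂ :=
  ∫ t in Set.Ioi (1 : ℝ), P (vert 0 t) * gauss s (vert 0 t) * I

/-- The radial profile, as a function of `s = ‖v‖ ^ 2`, of the Fourier eigenfunction that Viazovska
attaches to a kernel `P` with sign `ε`. -/
noncomputable def eigenProfile (P : ℂ → ℂ) (ε : ℂ) (s : ℝ) : ℂ :=
  2 * obliqueIntegral P 0 1 s - obliqueIntegral P (-1 / 2) (1 / 2) s
    - obliqueIntegral P (1 / 2) (1 / 2) s + 2 * ε * axisIntegral P s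

lemma integrableOn_Ioi_of_isBigO_exp {f : ℝ → ℂ} {a r : ℝ} (hr : 0 < r)
    (hf : ContinuousOn f (Set.Ici a)) (hO : f =O[atTop] fun x => Real.exp (-r * x)) :
    IntegrableOn f (Set.Ioi a) :=
  (integrableOn_Ici_iff_integrableOn_Ioi (by finiteness)).1 <|
    (hf.locallyIntegrableOn measurableSet_Ici).integrableOn_of_isBigO_atTop hO
      ⟨Set.Ioi r, Ioi_mem_atTop r, exp_neg_integrableOn_Ioi r hr⟩

section Integrability

variable {P : ℂ → ℂ} {s : ℝ}

lemma continuousOn_comp_vert (hP : DifferentiableOn ℂ P ℍₒ) (σ : ℝ) {t₀ : ℝ} (ht₀ : 0 < t₀) :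
    ContinuousOn (fun t => P (vert σ t)) (Set.Ici t₀) :=
  hP.continuousOn.comp (continuous_vert σ).continuousOn
    fun _ ht => vert_im_pos σ (ht₀.trans_le ht)

lemma isBigO_comp_vert (hO : P =O[I∞] nome) (σ : ℝ) :
    (fun t => P (vert σ t)) =O[atTop] fun t => Real.exp (-π * t) :=
  (hO.comp_tendsto (tendsto_vert σ)).trans
    (IsBigO.of_norm_eventuallyLE (.of_forall fun t => by simp [norm_nome]))

lemma norm_div_pow_four_mul_gauss_le (hs : 0 ≤ s) {w : ℂ} (hw : 1 ≤ w.im) :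
    ‖P w / w ^ 4 * gauss s (-1 / w)‖ ≤ ‖P w‖ := by
  rw [norm_mul, norm_div, norm_pow]
  refine (mul_le_of_le_one_right (by positivity)
    (norm_gauss_le_one hs (im_neg_one_div_pos (by linarith)).le)).trans ?_
  exact div_le_self (norm_nonneg _) (one_le_pow₀ (one_le_norm_of_one_le_im hw))

lemma continuousOn_oblique_integrand (hP : DifferentiableOn ℂ P ℍₒ) (σ : ℝ) {t₀ : ℝ}
    (ht₀ : 0 < t₀) :
    ContinuousOn (fun t => P (vert σ t) / vert σ t ^ 4 * gauss s (-1 / vert σ t) * I)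
      (Set.Ici t₀) := by
  have hne : ∀ t ∈ Set.Ici t₀, vert σ t ≠ 0 := fun t ht => vert_ne_zero σ (ht₀.trans_le ht)
  have hv := (continuous_vert σ).continuousOn (s := Set.Ici t₀)
  exact (((continuousOn_comp_vert hP σ ht₀).div (hv.pow 4) fun t ht => pow_ne_zero 4 (hne t ht)).mul
    ((continuous_gauss s).comp_continuousOn (continuousOn_const.div hv hne))).mul continuousOn_const

lemma integrableOn_oblique (hP : DifferentiableOn ℂ P ℍₒ) (hO : P =O[I∞] nome) (σ : ℝ) {t₀ : ℝ}
    (ht₀ : 0 < t₀) (hs : 0 ≤ s) :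
    IntegrableOn (fun t => P (vert σ t) / vert σ t ^ 4 * gauss s (-1 / vert σ t) * I)
      (Set.Ioi t₀) := by
  refine integrableOn_Ioi_of_isBigO_exp Real.pi_pos (continuousOn_oblique_integrand hP σ ht₀) ?_
  refine .trans (IsBigO.of_norm_eventuallyLE ?_) (isBigO_comp_vert hO σ).norm_left
  filter_upwards [eventually_ge_atTop 1] with t ht
  rw [norm_mul, norm_I, mul_one]
  exact norm_div_pow_four_mul_gauss_le hs (by simpa using ht)

lemma integrableOn_axis (hP : DifferentiableOn ℂ P ℍₒ) (hO : P =O[I∞] nome) (hs : 0 ≤ s) :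
    IntegrableOn (fun t => P (vert 0 t) * gauss s (vert 0 t) * I) (Set.Ioi 1) := by
  refine integrableOn_Ioi_of_isBigO_exp Real.pi_pos (((continuousOn_comp_vert hP 0 one_pos).mul
    ((continuous_gauss s).comp (continuous_vert 0)).continuousOn).mul continuousOn_const) ?_
  refine .trans (IsBigO.of_norm_eventuallyLE ?_) (isBigO_comp_vert hO 0).norm_left
  filter_upwards [eventually_ge_atTop 0] with t ht
  rw [norm_mul, norm_mul, norm_I, mul_one]
  exact mul_le_of_le_one_right (norm_nonneg _) (norm_gauss_le_one hs (by simpa using ht))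

end Integrability

/-! ### Contour deformation -/

/-- The filter of points of the strip `|Re z| ≤ 1` tending to `i∞`. -/
def stripTop : Filter ℂ := I∞ ⊓ 𝓟 {z | |z.re| ≤ 1}

lemma stripTop_le : stripTop ≤ I∞ := inf_le_left

lemma eventually_forall_vert {p : ℂ → Prop} (hp : ∀ᶠ z in stripTop, p z) :
    ∀ᶠ Y : ℝ in atTop, ∀ x : ℝ, |x| ≤ 1 → p (vert x Y) := by
  rw [stripTop, eventually_inf_principal, eventually_comap] at hp
  filter_upwards [hp] with Y hY x hx
  exact hY _ (vert_im x Y) (by simpa using hx)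

lemma tendsto_stripTop_of_isBigO {F : ℂ → ℂ} {r : ℝ} (hr : 0 < r)
    (hF : F =O[I∞] fun z => (1 + ‖z‖ ^ 2) * Real.exp (-r * z.im)) :
    Tendsto F stripTop (𝓝 0) := by
  have hdecay : Tendsto (fun z : ℂ => 3 * (z.im ^ 2 * Real.exp (-r * z.im))) stripTop (𝓝 0) := by
    have := ((tendsto_rpow_mul_exp_neg_mul_atTop_nhds_zero 2 r hr).comp
      (tendsto_comap (f := Complex.im))).const_mul 3
    simpa using this.mono_left stripTop_le
  refine IsBigO.trans_tendsto ((hF.mono stripTop_le).trans ?_) hdecay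
  refine IsBigO.of_bound 1 ?_
  have him : ∀ᶠ z in stripTop, (1 : ℝ) ≤ z.im :=
    (tendsto_comap.eventually_ge_atTop 1).filter_mono stripTop_le
  filter_upwards [him, mem_inf_of_right (mem_principal_self _)] with z hz hre
  rw [Real.norm_of_nonneg (by positivity), Real.norm_of_nonneg (by positivity), one_mul,
    ← mul_assoc]
  refine mul_le_mul_of_nonneg_right ?_ (Real.exp_pos _).le
  have := sq_abs z.re ▸ pow_le_one₀ (n := 2) (abs_nonneg _) hre
  rw [← normSq_eq_norm_sq, normSq_apply]
  nlinarith

lemma exists_primitive {F : ℂ → ℂ} (hF : DifferentiableOn ℂ F ℍₒ) :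
    ∃ W : ℂ → ℂ, ∀ z : ℂ, 0 < z.im → HasDerivAt W (F z) z := by
  obtain ⟨W, hW⟩ := (convex_halfSpace_im_gt 0).exists_forall_hasDerivWithinAt hF
  exact ⟨W, fun z hz => (hW z hz).hasDerivAt (upperHalfPlaneSet_mem_nhds hz)⟩

section Primitive

variable {F W : ℂ → ℂ}

lemma hasDerivAt_comp_vert (hW : ∀ z : ℂ, 0 < z.im → HasDerivAt W (F z) z) (σ : ℝ) {t : ℝ}
    (ht : 0 < t) : HasDerivAt (fun t => W (vert σ t)) (F (vert σ t) * I) t :=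
  HasDerivAt.comp t (hW _ (vert_im_pos σ ht)) (hasDerivAt_vert σ t)

lemma norm_sub_vert_le (hW : ∀ z : ℂ, 0 < z.im → HasDerivAt W (F z) z) {Y C : ℝ} (hY : 0 < Y)
    (hC : ∀ x : ℝ, |x| ≤ 1 → ‖F (vert x Y)‖ ≤ C) {σ τ : ℝ} (hσ : |σ| ≤ 1) (hτ : |τ| ≤ 1) :
    ‖W (vert τ Y) - W (vert σ Y)‖ ≤ C * |τ - σ| := by
  have hder : ∀ x ∈ Set.Icc (-1 : ℝ) 1,
      HasDerivWithinAt (fun x : ℝ => W (vert x Y)) (F (vert x Y)) (Set.Icc (-1) 1) x := by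
    intro x _
    have hvert : HasDerivAt (fun x : ℝ => vert x Y) 1 x :=
      (ofRealCLM.hasDerivAt (x := x)).add_const (Y * I)
    refine HasDerivAt.hasDerivWithinAt ?_
    simpa [Function.comp_def] using HasDerivAt.comp x (hW (vert x Y) (vert_im_pos x hY)) hvert
  exact (convex_Icc (-1 : ℝ) 1).norm_image_sub_le_of_norm_hasDerivWithin_le hder
    (fun x hx => hC x (abs_le.2 hx)) (abs_le.1 hσ) (abs_le.1 hτ)

lemma tendsto_sub_vert (hW : ∀ z : ℂ, 0 < z.im → HasDerivAt W (F z) z)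
    (hF : Tendsto F stripTop (𝓝 0)) {σ τ : ℝ} (hσ : |σ| ≤ 1) (hτ : |τ| ≤ 1) :
    Tendsto (fun Y => W (vert τ Y) - W (vert σ Y)) atTop (𝓝 0) := by
  rw [Metric.tendsto_nhds]
  intro δ hδ
  have hsmall : ∀ᶠ z in stripTop, ‖F z‖ ≤ δ / 3 := by
    filter_upwards [Metric.tendsto_nhds.1 hF (δ / 3) (by positivity)] with z hz
    simpa using hz.le
  filter_upwards [eventually_forall_vert hsmall, eventually_gt_atTop 0] with Y hbound hY
  have hle := norm_sub_vert_le hW hY hbound hσ hτ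
  have hdist : |τ - σ| ≤ 2 := (abs_sub τ σ).trans (by linarith)
  rw [dist_zero_right]
  nlinarith

end Primitive

/-- `J` represents `(e^{-πis} + e^{πis} - 2) ∫₀^{i∞} F(z) e^{πisz} dz`. In terms of a primitive `W`
of the integrand, with limit `W₀` at the cusp `0`, the three copies of the integral are cut off at
height `Y` on the vertical lines through `1`, `-1` and `0`; their combination may converge as
`Y → ∞` even if the integral does not. -/
def HasContourValue (F : ℂ → ℂ) (s : ℝ) (J : ℂ) : Prop :=
  ∃ (W : ℂ → ℂ) (W₀ : ℂ), (∀ z : ℂ, 0 < z.im → HasDerivAt W (F z * gauss s z) z) ∧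
    Tendsto (fun t => W (vert 0 t)) (𝓝[>] 0) (𝓝 W₀) ∧
    Tendsto (fun Y => gauss s (-1) * W (vert 1 Y) + gauss s 1 * W (vert (-1) Y) - 2 * W (vert 0 Y))
      atTop (𝓝 (J + (gauss s (-1) + gauss s 1 - 2) * W₀))

lemma HasContourValue.add_const_mul {F G : ℂ → ℂ} {s : ℝ} {J K : ℂ} (hF : HasContourValue F s J)
    (hG : HasContourValue G s K) (c : ℂ) :
    HasContourValue (fun z => F z + c * G z) s (J + c * K) := by
  obtain ⟨W, W₀, hW, hW₀, hWlim⟩ := hF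
  obtain ⟨V, V₀, hV, hV₀, hVlim⟩ := hG
  refine ⟨fun z => W z + c * V z, W₀ + c * V₀, fun z hz => ?_, hW₀.add (hV₀.const_mul c), ?_⟩
  · exact ((hW z hz).add ((hV z hz).const_mul c)).congr_deriv (by ring)
  · convert hWlim.add (hVlim.const_mul c) using 2 <;> ring

lemma HasContourValue.neg {F : ℂ → ℂ} {s : ℝ} {J : ℂ} (hF : HasContourValue F s J) :
    HasContourValue (fun z => -F z) s (-J) := by
  obtain ⟨W, W₀, hW, hW₀, hlim⟩ := hF
  refine ⟨fun z => -W z, -W₀, fun z hz => ?_, hW₀.neg, ?_⟩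
  · exact (hW z hz).neg.congr_deriv (by ring)
  · convert hlim.neg using 2 <;> ring

/-- The properties of a holomorphic function `P` on the upper half-plane that make
`eigenProfile P ε` the profile of a Fourier eigenfunction on `ℝ⁸` with eigenvalue `ε`. -/
structure IsEigenKernel (P : ℂ → ℂ) (ε : ℂ) : Prop where
  differentiableOn : DifferentiableOn ℂ P ℍₒ
  isBigO : P =O[I∞] nome
  sq_eq_one : ε ^ 2 = 1
  add_one : ∀ z : ℂ, 0 < z.im → P (z + 1) = ε * P z
  second_difference : ∀ z : ℂ, 0 < z.im →
    inverted P (z + 1) - 2 * inverted P z + inverted P (z - 1) = 2 * ε * P z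

lemma isEigenKernel_φ : IsEigenKernel φ 1 where
  differentiableOn := differentiableOn_φ
  isBigO := φ_isBigO
  sq_eq_one := one_pow 2
  add_one z hz := by rw [φ_add_one hz, one_mul]
  second_difference z hz := by rw [inverted_φ_second_difference hz, mul_one]

lemma isEigenKernel_ψ : IsEigenKernel ψ (-1) where
  differentiableOn := differentiableOn_ψ
  isBigO := ψ_isBigO
  sq_eq_one := by norm_num
  add_one z hz := by rw [ψ_add_one hz, neg_one_mul]
  second_difference z hz := by rw [inverted_ψ_second_difference hz]; ring

section ContourValue

variable {P W : ℂ → ℂ} {ε W₀ : ℂ} {s : ℝ}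

lemma hasDerivAt_comp_neg_one_div
    (hW : ∀ z : ℂ, 0 < z.im → HasDerivAt W (inverted P z * gauss s z) z) {w : ℂ} (hw : 0 < w.im) :
    HasDerivAt (fun w => W (-1 / w)) (P w / w ^ 4 * gauss s (-1 / w)) w := by
  have hw₀ := ne_zero_of_im_pos hw
  have hinv : HasDerivAt (fun z : ℂ => -1 / z) (1 / w ^ 2) w := by
    simpa [div_eq_mul_inv] using (hasDerivAt_inv hw₀).const_mul (-1)
  refine (HasDerivAt.comp w (hW _ (im_neg_one_div_pos hw)) hinv).congr_deriv ?_
  rw [inverted, show -1 / (-1 / w) = w by field_simp]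
  field_simp

lemma tendsto_div_pow_four_mul_gauss (hO : P =O[I∞] nome) (hs : 0 ≤ s) :
    Tendsto (fun w => P w / w ^ 4 * gauss s (-1 / w)) I∞ (𝓝 0) := by
  refine squeeze_zero_norm' ?_
    (tendsto_zero_iff_norm_tendsto_zero.1 (hO.trans_tendsto tendsto_nome))
  filter_upwards [tendsto_comap.eventually_ge_atTop 1] with w hw
  exact norm_div_pow_four_mul_gauss_le hs hw

lemma exists_tendsto_comp_neg_one_div (hP : DifferentiableOn ℂ P ℍₒ) (hO : P =O[I∞] nome)
    (hs : 0 ≤ s) (hW : ∀ z : ℂ, 0 < z.im → HasDerivAt W (inverted P z * gauss s z) z) :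
    ∃ W₀, ∀ σ : ℝ, |σ| ≤ 1 → Tendsto (fun t => W (-1 / vert σ t)) atTop (𝓝 W₀) := by
  have hder : ∀ w : ℂ, 0 < w.im → HasDerivAt _ _ w := fun _ => hasDerivAt_comp_neg_one_div hW
  obtain ⟨W₀, haxis⟩ : ∃ W₀, Tendsto (fun t => W (-1 / vert 0 t)) atTop (𝓝 W₀) :=
    ⟨_, tendsto_limUnder_of_hasDerivAt_of_integrableOn_Ioi (a := 1)
      (fun t ht => hasDerivAt_comp_vert hder 0 (one_pos.trans ht))
      (integrableOn_oblique hP hO 0 one_pos hs)⟩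
  refine ⟨W₀, fun σ hσ => ?_⟩
  have hdiff := tendsto_sub_vert hder
    ((tendsto_div_pow_four_mul_gauss hO hs).mono_left stripTop_le) (σ := 0) (by simp) hσ
  simpa using hdiff.add haxis

lemma obliqueIntegral_eq (hP : DifferentiableOn ℂ P ℍₒ) (hO : P =O[I∞] nome) (hs : 0 ≤ s)
    (hW : ∀ z : ℂ, 0 < z.im → HasDerivAt W (inverted P z * gauss s z) z) {σ t₀ : ℝ} (ht₀ : 0 < t₀)
    (hlim : Tendsto (fun t => W (-1 / vert σ t)) atTop (𝓝 W₀)) :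
    obliqueIntegral P σ t₀ s = gauss s (2 * σ) * (W₀ - W (-1 / vert σ t₀)) := by
  have hFTC := integral_Ioi_of_hasDerivAt_of_tendsto' (a := t₀)
    (fun t ht => hasDerivAt_comp_vert (fun z => hasDerivAt_comp_neg_one_div hW (w := z)) σ
      (ht₀.trans_le ht))
    (integrableOn_oblique hP hO σ ht₀ hs) hlim
  rw [obliqueIntegral, ← hFTC, ← integral_const_mul]
  congr 1 with t
  rw [gauss_add]
  ring

lemma hasDerivAt_second_difference
    (hdiff : ∀ z : ℂ, 0 < z.im →
      inverted P (z + 1) - 2 * inverted P z + inverted P (z - 1) = 2 * ε * P z)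
    (hW : ∀ z : ℂ, 0 < z.im → HasDerivAt W (inverted P z * gauss s z) z) {t : ℝ} (ht : 0 < t) :
    HasDerivAt
      (fun Y => gauss s (-1) * W (vert 1 Y) + gauss s 1 * W (vert (-1) Y) - 2 * W (vert 0 Y))
      (2 * ε * (P (vert 0 t) * gauss s (vert 0 t) * I)) t := by
  have hder (σ : ℝ) := hasDerivAt_comp_vert hW σ ht
  refine ((((hder 1).const_mul (gauss s (-1))).add ((hder (-1)).const_mul (gauss s 1))).sub
    ((hder 0).const_mul 2)).congr_deriv ?_
  have hright : vert 1 t = vert 0 t + 1 := by rw [← vert_add_one, zero_add]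
  have hleft : vert (-1) t = vert 0 t - 1 := by rw [eq_sub_iff_add_eq, ← vert_add_one]; simp
  have hgauss_right : gauss s (-1) * gauss s (vert 0 t + 1) = gauss s (vert 0 t) := by
    rw [← gauss_add, neg_add_cancel_comm_assoc]
  have hgauss_left : gauss s 1 * gauss s (vert 0 t - 1) = gauss s (vert 0 t) := by
    rw [← gauss_add, add_sub_cancel]
  rw [hright, hleft]
  linear_combination (I * inverted P (vert 0 t + 1)) * hgauss_right
    + (I * inverted P (vert 0 t - 1)) * hgauss_left
    + (I * gauss s (vert 0 t)) * hdiff (vert 0 t) (vert_im_pos 0 ht)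

lemma neg_one_div_vert_zero (t : ℝ) : -1 / vert 0 t = vert 0 t⁻¹ := by
  simp [vert_zero, div_eq_mul_inv, mul_comm]

lemma neg_one_div_vert_neg_half : -1 / vert (-1 / 2) (1 / 2) = vert 1 1 := by
  rw [div_eq_iff (vert_ne_zero _ (by norm_num)), vert, vert]
  push_cast
  linear_combination (-1 / 2 : ℂ) * I_sq

lemma neg_one_div_vert_half : -1 / vert (1 / 2) (1 / 2) = vert (-1) 1 := by
  rw [div_eq_iff (vert_ne_zero _ (by norm_num)), vert, vert]
  push_cast
  linear_combination (-1 / 2 : ℂ) * I_sq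

end ContourValue

theorem IsEigenKernel.hasContourValue {P : ℂ → ℂ} {ε : ℂ} (hP : IsEigenKernel P ε) {s : ℝ}
    (hs : 0 ≤ s) : HasContourValue (inverted P) s (eigenProfile P ε s) := by
  have hinv : DifferentiableOn ℂ (inverted P) ℍₒ :=
    (differentiableOn_id.pow 2).mul <| hP.differentiableOn.comp
      ((differentiableOn_const _).div differentiableOn_id fun _ hz => ne_zero_of_im_pos hz)
      fun _ hz => im_neg_one_div_pos hz
  obtain ⟨W, hW⟩ := exists_primitive (hinv.mul (differentiable_gauss s).differentiableOn)
  obtain ⟨W₀, hW₀⟩ := exists_tendsto_comp_neg_one_div hP.differentiableOn hP.isBigO hs hW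
  refine ⟨W, W₀, hW, ?_, ?_⟩
  · refine ((hW₀ 0 (by simp)).comp tendsto_inv_nhdsGT_zero).congr fun t => ?_
    simp [neg_one_div_vert_zero]
  have hder := fun t => hasDerivAt_second_difference hP.second_difference hW (t := t)
  have hint := (integrableOn_axis hP.differentiableOn hP.isBigO hs).const_mul (2 * ε)
  have hlim := tendsto_limUnder_of_hasDerivAt_of_integrableOn_Ioi (a := 1)
    (fun t ht => hder t (one_pos.trans ht)) hint
  have haxis : 2 * ε * axisIntegral P s = _ := (integral_const_mul _ _).symm.trans
    (integral_Ioi_of_hasDerivAt_of_tendsto' (fun t ht => hder t (one_pos.trans_le ht)) hint hlim)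
  have hoblique (σ : ℝ) (hσ : |σ| ≤ 1) {t₀ : ℝ} (ht₀ : 0 < t₀) :=
    obliqueIntegral_eq hP.differentiableOn hP.isBigO hs hW ht₀ (hW₀ σ hσ)
  convert hlim using 2
  rw [eigenProfile, haxis, hoblique 0 (by simp) one_pos,
    hoblique _ (by norm_num [abs_le]) (by norm_num),
    hoblique _ (by norm_num [abs_le]) (by norm_num), neg_one_div_vert_neg_half,
    neg_one_div_vert_half, neg_one_div_vert_zero, inv_one, ofReal_zero, mul_zero, gauss_zero_right,
    show 2 * ((-1 / 2 : ℝ) : ℂ) = -1 by push_cast; ring,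
    show 2 * ((1 / 2 : ℝ) : ℂ) = 1 by push_cast; ring]
  ring

/-! ### Sign and value at the origin of the magic profiles -/

lemma gauss_mul_I (s t : ℝ) : gauss s (t * I) = (Real.exp (-π * s * t) : ℝ) := by
  rw [gauss, ofReal_exp]
  push_cast
  congr 1
  linear_combination (π * s * t : ℂ) * I_sq

lemma gauss_neg_one_add_gauss_one (s : ℝ) :
    gauss s (-1) + gauss s 1 - 2 = ((2 * Real.cos (π * s) - 2 : ℝ) : ℂ) := by
  push_cast
  rw [Complex.cos, gauss, gauss]
  ring_nf

section

open scoped ComplexOrder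

lemma antitoneOn_re_I_mul_vert {F W : ℂ → ℂ} {s : ℝ}
    (hW : ∀ z : ℂ, 0 < z.im → HasDerivAt W (F z * gauss s z) z)
    (hF : ∀ t : ℝ, 0 < t → 0 ≤ F (t * I)) :
    AntitoneOn (fun t => (I * W (vert 0 t)).re) (Set.Ioi 0) := by
  refine antitoneOn_Ioi_of_hasDerivAt_nonpos (fun t ht => reCLM.hasFDerivAt.comp_hasDerivAt t
    ((hasDerivAt_comp_vert hW 0 ht).const_mul I)) fun t ht => ?_
  have hpos : 0 ≤ F (t * I) * gauss s (t * I) := by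
    rw [gauss_mul_I]
    exact mul_nonneg (hF t ht) (zero_le_real.2 (Real.exp_pos _).le)
  rw [vert_zero, reCLM_apply, mul_left_comm, I_mul_I, mul_neg_one, neg_re, neg_nonpos]
  exact (le_def.1 hpos).1

/-- The increments of `Re (i W)` along the axis are nonpositive, and they enter the contour value
with the factor `2 cos(πs) - 2 ≤ 0`. -/
theorem HasContourValue.re_I_mul_nonneg {F : ℂ → ℂ} {s r : ℝ} {J : ℂ} (hJ : HasContourValue F s J)
    (hr : r < π * s) (hF : ∀ t : ℝ, 0 < t → 0 ≤ F (t * I))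
    (hO : F =O[I∞] fun z => (1 + ‖z‖ ^ 2) * Real.exp (r * z.im)) : 0 ≤ (I * J).re := by
  obtain ⟨W, W₀, hW, hW₀, hlim⟩ := hJ
  have hdecay : Tendsto (fun z => F z * gauss s z) stripTop (𝓝 0) := by
    refine tendsto_stripTop_of_isBigO (sub_pos.2 hr) ((hO.mul
      (isBigO_refl (gauss s) I∞).norm_right).congr_right fun z => ?_)
    rw [norm_gauss, mul_assoc, ← Real.exp_add]
    ring_nf
  have hright := tendsto_sub_vert hW hdecay (σ := 0) (τ := 1) (by simp) (by simp)
  have hleft := tendsto_sub_vert hW hdecay (σ := 0) (τ := -1) (by simp) (by simp)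
  have haxis : Tendsto (fun Y => (gauss s (-1) + gauss s 1 - 2) * (W (vert 0 Y) - W₀)) atTop
      (𝓝 J) := by
    have := ((hlim.sub_const ((gauss s (-1) + gauss s 1 - 2) * W₀)).sub
      (hright.const_mul (gauss s (-1)))).sub (hleft.const_mul (gauss s 1))
    simp only [mul_zero, sub_zero, add_sub_cancel_right] at this
    exact this.congr fun Y => by ring
  refine ge_of_tendsto ((continuous_re.tendsto _).comp (haxis.const_mul I)) ?_
  filter_upwards [eventually_gt_atTop 0] with Y hY
  have hle : (I * W (vert 0 Y)).re ≤ (I * W₀).re := by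
    refine ge_of_tendsto ((continuous_re.tendsto _).comp (hW₀.const_mul I)) ?_
    filter_upwards [Ioo_mem_nhdsGT hY] with t ht
    exact antitoneOn_re_I_mul_vert hW hF ht.1 hY ht.2.le
  rw [Function.comp_apply, gauss_neg_one_add_gauss_one, mul_left_comm, re_ofReal_mul, mul_sub,
    sub_re]
  nlinarith [Real.cos_le_one (π * s)]

end

theorem HasContourValue.eq_of_tendsto {F : ℂ → ℂ} {J c : ℂ} (hJ : HasContourValue F 0 J)
    (hc : Tendsto (fun z => F (z + 1) - F z) stripTop (𝓝 c)) : J = c := by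
  obtain ⟨W, W₀, hW, -, hlim⟩ := hJ
  have hder : ∀ z : ℂ, 0 < z.im →
      HasDerivAt (fun z => W (z + 1) - W z - c * z) (F (z + 1) - F z - c) z := by
    intro z hz
    have hshift := (hW (z + 1) (by simpa using hz)).comp_add_const z 1
    exact ((hshift.sub (hW z hz)).sub ((hasDerivAt_id z).const_mul c)).congr_deriv
      (by simp [gauss_zero_left])
  have hdiff := tendsto_sub_vert hder (by simpa using hc.sub_const c) (σ := -1) (τ := 0)
    (by simp) (by simp)
  have hleft (Y : ℝ) : vert (-1) Y + 1 = vert 0 Y := by rw [← vert_add_one, neg_add_cancel]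
  have hright (Y : ℝ) : vert 1 Y = vert 0 Y + 1 := by rw [← vert_add_one, zero_add]
  simp only [gauss_zero_left, one_mul, one_add_one_eq_two, sub_self, zero_mul, add_zero] at hlim
  refine tendsto_nhds_unique hlim (((hdiff.add_const c).congr fun Y => ?_).trans (by simp))
  rw [hright, ← hleft]
  ring

/-- The profile of Viazovska's magic function, with the opposite sign of `c` for its Fourier
transform. -/
noncomputable def magicProfile (c : ℂ) (s : ℝ) : ℂ :=
  I * (eigenProfile φ 1 s + c * eigenProfile ψ (-1) s)

lemma hasContourValue_magicKernel (c : ℂ) {s : ℝ} (hs : 0 ≤ s) :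
    HasContourValue (magicKernel c) s (eigenProfile φ 1 s + c * eigenProfile ψ (-1) s) :=
  (isEigenKernel_φ.hasContourValue hs).add_const_mul (isEigenKernel_ψ.hasContourValue hs) c

lemma magicProfile_κ_nonneg {s : ℝ} (hs : 0 < s) : 0 ≤ (magicProfile κ s).re :=
  (hasContourValue_magicKernel κ hs.le).re_I_mul_nonneg (by positivity)
    (fun _ => magicKernel_κ_nonneg) magicKernel_κ_isBigO

open scoped ComplexOrder in
lemma magicProfile_neg_κ_nonpos {s : ℝ} (hs : 2 < s) : (magicProfile (-κ) s).re ≤ 0 := by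
  have hJ := (hasContourValue_magicKernel (-κ) (by linarith : 0 ≤ s)).neg
  have := hJ.re_I_mul_nonneg (by nlinarith [Real.pi_pos])
    (fun _ ht => neg_nonneg.2 (magicKernel_neg_κ_nonpos ht)) magicKernel_neg_κ_isBigO.neg_left
  rwa [mul_neg, neg_re, neg_nonneg] at this

lemma eigenProfile_φ_zero : eigenProfile φ 1 0 = -(8640 * I / π) := by
  refine (isEigenKernel_φ.hasContourValue le_rfl).eq_of_tendsto ?_
  have hlinear : Tendsto (fun z => (2 * z + 1) * φ z) stripTop (𝓝 0) := by
    refine tendsto_stripTop_of_isBigO Real.pi_pos (IsBigO.mul ?_ ?_)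
    · exact isBigO_one_add_norm_sq (C := 2) fun z => by
        refine (norm_add_le _ _).trans ?_
        rw [norm_mul, norm_one, Complex.norm_ofNat]
        nlinarith [sq_nonneg (‖z‖ - 1)]
    · exact φ_isBigO.trans (IsBigO.of_norm_eventuallyLE (.of_forall fun z => (norm_nome z).le))
  have hconst := ((tendsto_E₄.mul tendsto_φNum_div_discr).const_mul (12 * I / π)).mono_left
    stripTop_le
  have hvalue : -(8640 * I / π : ℂ) = 0 - 12 * I / π * (1 * 720) := by ring
  rw [hvalue]
  refine (hlinear.sub hconst).congr' ?_
  filter_upwards [eventually_im_pos.filter_mono stripTop_le] with z hz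
  rw [inverted_φ_add_one_sub hz]

lemma eigenProfile_ψ_zero : eigenProfile ψ (-1) 0 = 0 := by
  refine (isEigenKernel_ψ.hasContourValue le_rfl).eq_of_tendsto ?_
  have hψ := ((ψ_isBigO.trans_tendsto tendsto_nome).mono_left stripTop_le).neg
  rw [neg_zero] at hψ
  refine hψ.congr' ?_
  filter_upwards [eventually_im_pos.filter_mono stripTop_le] with z hz
  rw [inverted_ψ_add_one_sub hz]

lemma magicProfile_zero (c : ℂ) : magicProfile c 0 = (8640 / π : ℝ) := by
  rw [magicProfile, eigenProfile_φ_zero, eigenProfile_ψ_zero]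
  push_cast
  linear_combination (-8640 / π : ℂ) * I_sq

/-! ### Fourier transforms of superpositions of Gaussians -/

section FourierPair

variable {V : Type*} [NormedAddCommGroup V] [InnerProductSpace ℝ V] [FiniteDimensional ℝ V]
  [MeasurableSpace V] [BorelSpace V]

/-- `f` is integrable with Fourier transform `g`. -/
structure IsFourierPair (f g : V → ℂ) : Prop where
  integrable : Integrable f
  fourier_eq : 𝓕 f = g

namespace IsFourierPair

variable {f g f' g' : V → ℂ}

lemma add (h : IsFourierPair f g) (h' : IsFourierPair f' g') :
    IsFourierPair (fun x => f x + f' x) (fun x => g x + g' x) where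
  integrable := h.integrable.add h'.integrable
  fourier_eq := by
    rw [← h.fourier_eq, ← h'.fourier_eq]
    exact VectorFourier.fourierIntegral_add Real.continuous_fourierChar
      (L := innerₗ V) continuous_inner h.integrable h'.integrable

lemma const_mul (c : ℂ) (h : IsFourierPair f g) :
    IsFourierPair (fun x => c * f x) (fun x => c * g x) where
  integrable := h.integrable.const_mul c
  fourier_eq := by
    rw [← h.fourier_eq]
    exact VectorFourier.fourierIntegral_const_smul _ _ _ f c

lemma continuous (h : IsFourierPair f g) : Continuous g := by
  rw [← h.fourier_eq]
  exact VectorFourier.fourierIntegral_continuous Real.continuous_fourierChar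
    (L := innerₗ V) continuous_inner h.integrable

lemma norm_le (h : IsFourierPair f g) (w : V) : ‖g w‖ ≤ ∫ v, ‖f v‖ := by
  rw [← h.fourier_eq]
  exact VectorFourier.norm_fourierIntegral_le_integral_norm _ _ _ f w

lemma integral_superposition {α : Type*} [MeasurableSpace α] {μ : Measure α} [SFinite μ]
    {F G : α → V → ℂ} (hF : Integrable (fun p : V × α => F p.2 p.1) (volume.prod μ))
    (hFG : ∀ᵐ t ∂μ, 𝓕 (F t) = G t) :
    IsFourierPair (fun x => ∫ t, F t x ∂μ) (fun x => ∫ t, G t x ∂μ) where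
  integrable := hF.integral_prod_left
  fourier_eq := by
    ext w
    have hchar : Integrable (fun p : V × α => 𝐞 (-inner ℝ p.1 w) • F p.2 p.1)
        (volume.prod μ) := by
      have hcont : Continuous fun v : V => 𝐞 (-inner ℝ v w) :=
        Real.continuous_fourierChar.comp (by fun_prop)
      exact hF.mono (hcont.aestronglyMeasurable.comp_fst.smul hF.aestronglyMeasurable)
        (.of_forall fun p => by simp)
    calc 𝓕 (fun x => ∫ t, F t x ∂μ) w
        = ∫ v, ∫ t, 𝐞 (-inner ℝ v w) • F t v ∂μ := by
          simp only [Real.fourier_eq, Circle.smul_def, integral_smul]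
      _ = ∫ t, (∫ v, 𝐞 (-inner ℝ v w) • F t v) ∂μ := integral_integral_swap hchar
      _ = ∫ t, G t w ∂μ := by
          refine integral_congr_ae (hFG.mono fun t ht => ?_)
          simp only [← ht, Real.fourier_eq]

end IsFourierPair

variable {z : ℂ} {k : ℕ}

lemma gauss_eq_exp_neg_mul_sq (r : ℝ) (z : ℂ) :
    gauss (r ^ 2) z = cexp (-(-(π * I * z)) * r ^ 2) := by
  rw [gauss]
  push_cast
  ring_nf

lemma re_neg_pi_I_mul_pos (hz : 0 < z.im) : 0 < (-(π * I * z)).re := by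
  simpa using mul_pos Real.pi_pos hz

lemma integrable_gauss_norm_sq (hz : 0 < z.im) : Integrable fun v : V => gauss (‖v‖ ^ 2) z := by
  simpa [gauss_eq_exp_neg_mul_sq] using
    GaussianFourier.integrable_cexp_neg_mul_sq_norm_add (re_neg_pi_I_mul_pos hz) 0 (0 : V)

lemma integral_norm_gauss_norm_sq (hk : Module.finrank ℝ V = 2 * k) (hz : 0 < z.im) :
    ∫ v : V, ‖gauss (‖v‖ ^ 2) z‖ = (z.im ^ k)⁻¹ := by
  have h := GaussianFourier.integral_rexp_neg_mul_sq_norm (V := V) (mul_pos Real.pi_pos hz)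
  rw [hk, Nat.cast_mul, Nat.cast_two, mul_div_cancel_left₀ _ two_ne_zero, Real.rpow_natCast,
    div_mul_cancel_left₀ Real.pi_ne_zero, inv_pow] at h
  rw [← h]
  congr 1 with v
  rw [norm_gauss]
  ring_nf

lemma fourier_gauss_norm_sq (hk : Module.finrank ℝ V = 2 * k) (hz : 0 < z.im) :
    𝓕 (fun v : V => gauss (‖v‖ ^ 2) z) = fun w => (I / z) ^ k * gauss (‖w‖ ^ 2) (-1 / z) := by
  ext w
  have hz0 := ne_zero_of_im_pos hz
  have hπ := ofReal_pi_ne_zero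
  have hbase : π / -(π * I * z) = I / z := by
    field_simp
    rw [I_sq]
  simp only [gauss_eq_exp_neg_mul_sq]
  rw [fourier_gaussian_innerProductSpace (re_neg_pi_I_mul_pos hz) w, hk, Nat.cast_mul,
    Nat.cast_two, mul_div_cancel_left₀ _ two_ne_zero, cpow_natCast, hbase]
  congr 2
  field_simp
  rw [I_sq]
  ring

lemma IsFourierPair.integral_gauss (hk : Module.finrank ℝ V = 2 * k) {c ζ : ℝ → ℂ} {t₀ : ℝ}
    (hc : ContinuousOn c (Set.Ioi t₀)) (hζ : ContinuousOn ζ (Set.Ioi t₀))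
    (hpos : ∀ t ∈ Set.Ioi t₀, 0 < (ζ t).im)
    (hint : IntegrableOn (fun t => ‖c t‖ * ((ζ t).im ^ k)⁻¹) (Set.Ioi t₀)) :
    IsFourierPair (fun x : V => ∫ t in Set.Ioi t₀, c t * gauss (‖x‖ ^ 2) (ζ t))
      (fun x => ∫ t in Set.Ioi t₀, c t * ((I / ζ t) ^ k * gauss (‖x‖ ^ 2) (-1 / ζ t))) := by
  have hmem : ∀ᵐ t ∂volume.restrict (Set.Ioi t₀), t ∈ Set.Ioi t₀ :=
    ae_restrict_mem measurableSet_Ioi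
  refine .integral_superposition (F := fun t x => c t * gauss (‖x‖ ^ 2) (ζ t)) ?_ ?_
  · have hmeas : AEStronglyMeasurable (fun p : V × ℝ => c p.2 * gauss (‖p.1‖ ^ 2) (ζ p.2))
        (volume.prod (volume.restrict (Set.Ioi t₀))) := by
      have hc' := hc.aestronglyMeasurable (μ := volume) measurableSet_Ioi
      have hζ' := hζ.aestronglyMeasurable (μ := volume) measurableSet_Ioi
      have hsq : AEStronglyMeasurable (fun p : V × ℝ => π * I * ((‖p.1‖ ^ 2 : ℝ) : ℂ))
          (volume.prod (volume.restrict (Set.Ioi t₀))) :=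
        Continuous.aestronglyMeasurable (by fun_prop)
      exact hc'.comp_snd.mul (continuous_exp.comp_aestronglyMeasurable (hsq.mul hζ'.comp_snd))
    refine (integrable_prod_iff' hmeas).2 ⟨?_, hint.congr ?_⟩
    · filter_upwards [hmem] with t ht using (integrable_gauss_norm_sq (hpos t ht)).const_mul _
    · filter_upwards [hmem] with t ht
      simp only [norm_mul, integral_const_mul, integral_norm_gauss_norm_sq hk (hpos t ht)]
  · filter_upwards [hmem] with t ht
    have hpair : IsFourierPair (fun x : V => gauss (‖x‖ ^ 2) (ζ t)) _ :=
      ⟨integrable_gauss_norm_sq (hpos t ht), fourier_gauss_norm_sq hk (hpos t ht)⟩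
    exact (hpair.const_mul (c t)).fourier_eq

end FourierPair

section DimEight

variable {V : Type*} [NormedAddCommGroup V] [InnerProductSpace ℝ V] [FiniteDimensional ℝ V]
  [MeasurableSpace V] [BorelSpace V] {P : ℂ → ℂ} {ε : ℂ}

lemma im_neg_one_div (z : ℂ) : (-1 / z).im = z.im / ‖z‖ ^ 2 := by
  rw [← normSq_eq_norm_sq]
  simp [neg_div]

lemma norm_vert_le (σ : ℝ) {t : ℝ} (ht : 1 ≤ t) : ‖vert σ t‖ ≤ (1 + |σ|) * t :=
  calc ‖vert σ t‖ ≤ |σ| + t := by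
        simpa [abs_of_nonneg (zero_le_one.trans ht)] using norm_le_abs_re_add_abs_im (vert σ t)
    _ ≤ (1 + |σ|) * t := by nlinarith [abs_nonneg σ]

lemma norm_oblique_weight_le (σ : ℝ) {t : ℝ} (ht : 1 ≤ t) (c : ℂ) :
    ‖‖c / vert σ t ^ 4 * I‖ * ((2 * (σ : ℂ) + -1 / vert σ t).im ^ 4)⁻¹‖
      ≤ (1 + |σ|) ^ 4 * ‖c‖ := by
  have ht' : 0 < t := by linarith
  have hv : 0 < ‖vert σ t‖ := norm_pos_iff.2 (vert_ne_zero σ ht')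
  have him : (2 * (σ : ℂ) + -1 / vert σ t).im = t / ‖vert σ t‖ ^ 2 := by
    simp [im_neg_one_div]
  calc ‖‖c / vert σ t ^ 4 * I‖ * ((2 * (σ : ℂ) + -1 / vert σ t).im ^ 4)⁻¹‖
      = (‖vert σ t‖ / t) ^ 4 * ‖c‖ := by
        rw [Real.norm_of_nonneg (by rw [him]; positivity), him, norm_mul, norm_div, norm_I,
          mul_one, norm_pow]
        field_simp
    _ ≤ (1 + |σ|) ^ 4 * ‖c‖ := by
        gcongr
        rw [div_le_iff₀ ht']
        exact norm_vert_le σ ht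

lemma IsFourierPair.obliqueIntegral (hV : Module.finrank ℝ V = 8) (hP : DifferentiableOn ℂ P ℍₒ)
    (hO : P =O[I∞] nome) (σ : ℝ) {t₀ : ℝ} (ht₀ : 0 < t₀) :
    IsFourierPair (fun x : V => obliqueIntegral P σ t₀ (‖x‖ ^ 2)) fun x =>
      ∫ t in Set.Ioi t₀, P (vert σ t) / vert σ t ^ 4 * I *
        ((I / (2 * σ + -1 / vert σ t)) ^ 4 *
          gauss (‖x‖ ^ 2) (-1 / (2 * σ + -1 / vert σ t))) := by
  have hne : ∀ t ∈ Set.Ici t₀, vert σ t ≠ 0 := fun t ht => vert_ne_zero σ (ht₀.trans_le ht)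
  have hv := (continuous_vert σ).continuousOn (s := Set.Ici t₀)
  have hc : ContinuousOn (fun t => P (vert σ t) / vert σ t ^ 4 * I) (Set.Ici t₀) :=
    ((continuousOn_comp_vert hP σ ht₀).div (hv.pow 4) fun t ht => pow_ne_zero 4 (hne t ht)).mul
      continuousOn_const
  have hζ : ContinuousOn (fun t => 2 * (σ : ℂ) + -1 / vert σ t) (Set.Ici t₀) :=
    continuousOn_const.add (continuousOn_const.div hv hne)
  have him : ∀ t ∈ Set.Ici t₀, 0 < (2 * (σ : ℂ) + -1 / vert σ t).im := fun t ht => by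
    simpa using im_neg_one_div_pos (vert_im_pos σ (ht₀.trans_le ht))
  have hint : IntegrableOn (fun t => ‖P (vert σ t) / vert σ t ^ 4 * I‖ *
      ((2 * (σ : ℂ) + -1 / vert σ t).im ^ 4)⁻¹) (Set.Ioi t₀) := by
    refine integrable_of_isBigO_exp_neg Real.pi_pos (hc.norm.mul
      (((continuous_im.comp_continuousOn hζ).pow 4).inv₀ fun t ht => pow_ne_zero 4 (him t ht).ne'))
      (.trans (.of_bound ((1 + |σ|) ^ 4) ?_) (isBigO_comp_vert hO σ))
    filter_upwards [eventually_ge_atTop 1] with t ht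
    exact norm_oblique_weight_le σ ht (P (vert σ t))
  convert IsFourierPair.integral_gauss (V := V) (k := 4) hV
    (hc.mono Set.Ioi_subset_Ici_self) (hζ.mono Set.Ioi_subset_Ici_self)
    (fun t ht => him t (Set.Ioi_subset_Ici_self ht)) hint using 2 with x
  rw [SpherePacking.obliqueIntegral]
  congr 1 with t
  ring

lemma IsFourierPair.obliqueIntegral_axisIntegral (hV : Module.finrank ℝ V = 8)
    (hP : DifferentiableOn ℂ P ℍₒ) (hO : P =O[I∞] nome) :
    IsFourierPair (fun x : V => SpherePacking.obliqueIntegral P 0 1 (‖x‖ ^ 2))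
      fun x => axisIntegral P (‖x‖ ^ 2) := by
  convert IsFourierPair.obliqueIntegral hV hP hO 0 one_pos using 2 with x
  refine setIntegral_congr_fun measurableSet_Ioi fun t ht => ?_
  have hv := vert_ne_zero 0 (one_pos.trans ht)
  rw [ofReal_zero, mul_zero, zero_add, show -1 / (-1 / vert 0 t) = vert 0 t by field_simp,
    div_pow, I_pow_four]
  field_simp

lemma IsFourierPair.axisIntegral_obliqueIntegral (hV : Module.finrank ℝ V = 8)
    (hP : DifferentiableOn ℂ P ℍₒ) (hO : P =O[I∞] nome) :
    IsFourierPair (fun x : V => axisIntegral P (‖x‖ ^ 2))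
      fun x => SpherePacking.obliqueIntegral P 0 1 (‖x‖ ^ 2) := by
  have hc : ContinuousOn (fun t => P (vert 0 t) * I) (Set.Ici 1) :=
    (continuousOn_comp_vert hP 0 one_pos).mul continuousOn_const
  have hint : IntegrableOn (fun t => ‖P (vert 0 t) * I‖ * ((vert 0 t).im ^ 4)⁻¹) (Set.Ioi 1) := by
    refine integrable_of_isBigO_exp_neg Real.pi_pos (hc.norm.mul
      (((continuous_im.comp (continuous_vert 0)).continuousOn.pow 4).inv₀ fun t ht =>
        pow_ne_zero 4 (vert_im_pos 0 (one_pos.trans_le ht)).ne'))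
      (.trans (.of_bound 1 ?_) (isBigO_comp_vert hO 0))
    filter_upwards [eventually_ge_atTop 1] with t ht
    rw [Real.norm_of_nonneg (by positivity), norm_mul, norm_I, mul_one, one_mul, vert_im]
    exact mul_le_of_le_one_right (norm_nonneg _) (inv_le_one_of_one_le₀ (one_le_pow₀ ht))
  convert IsFourierPair.integral_gauss (V := V) (k := 4) hV (hc.mono Set.Ioi_subset_Ici_self)
    (continuous_vert 0).continuousOn (fun t ht => vert_im_pos 0 (one_pos.trans ht)) hint
    using 2 with x x
  · rw [axisIntegral]
    congr 1 with t
    ring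
  · rw [SpherePacking.obliqueIntegral]
    congr 1 with t
    rw [ofReal_zero, mul_zero, zero_add, div_pow, I_pow_four]
    ring

lemma vert_half (t : ℝ) : vert (1 / 2) t = vert (-1 / 2) t + 1 := by
  rw [← vert_add_one]
  norm_num

lemma two_mul_half_add_neg_one_div {v : ℂ} (hv : v + 1 ≠ 0) :
    2 * ((1 / 2 : ℝ) : ℂ) + -1 / (v + 1) = v / (v + 1) := by
  push_cast
  field_simp
  ring

lemma two_mul_neg_half_add_neg_one_div {v : ℂ} (hv : v ≠ 0) :
    2 * ((-1 / 2 : ℝ) : ℂ) + -1 / v = -(v + 1) / v := by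
  push_cast
  field_simp
  ring

namespace IsEigenKernel

lemma comp_vert_half (h : IsEigenKernel P ε) {t : ℝ} (ht : 0 < t) :
    P (vert (1 / 2) t) = ε * P (vert (-1 / 2) t) := by
  rw [← h.add_one _ (vert_im_pos _ ht), vert_half]

lemma isFourierPair_neg_half (hV : Module.finrank ℝ V = 8) (h : IsEigenKernel P ε) :
    IsFourierPair (fun x : V => obliqueIntegral P (-1 / 2) (1 / 2) (‖x‖ ^ 2))
      fun x => ε * obliqueIntegral P (1 / 2) (1 / 2) (‖x‖ ^ 2) := by
  convert IsFourierPair.obliqueIntegral hV h.differentiableOn h.isBigO (-1 / 2) one_half_pos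
    using 2 with x
  rw [obliqueIntegral, ← integral_const_mul]
  refine setIntegral_congr_fun measurableSet_Ioi fun t ht => ?_
  have ht₀ : 0 < t := lt_trans one_half_pos ht
  have hv : vert (-1 / 2) t ≠ 0 := vert_ne_zero _ ht₀
  have hv' : vert (-1 / 2) t + 1 ≠ 0 := vert_half t ▸ vert_ne_zero _ ht₀
  rw [h.comp_vert_half ht₀, vert_half, two_mul_half_add_neg_one_div hv',
    two_mul_neg_half_add_neg_one_div hv]
  generalize vert (-1 / 2) t = v at *
  rw [show -1 / (-(v + 1) / v) = v / (v + 1) by field_simp, div_pow, I_pow_four, div_pow,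
    Even.neg_pow (by decide)]
  field_simp
  rw [h.sq_eq_one, one_mul]

lemma isFourierPair_half (hV : Module.finrank ℝ V = 8) (h : IsEigenKernel P ε) :
    IsFourierPair (fun x : V => obliqueIntegral P (1 / 2) (1 / 2) (‖x‖ ^ 2))
      fun x => ε * obliqueIntegral P (-1 / 2) (1 / 2) (‖x‖ ^ 2) := by
  convert IsFourierPair.obliqueIntegral hV h.differentiableOn h.isBigO (1 / 2) one_half_pos
    using 2 with x
  rw [obliqueIntegral, ← integral_const_mul]
  refine setIntegral_congr_fun measurableSet_Ioi fun t ht => ?_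
  have ht₀ : 0 < t := lt_trans one_half_pos ht
  have hv : vert (-1 / 2) t ≠ 0 := vert_ne_zero _ ht₀
  have hv' : vert (-1 / 2) t + 1 ≠ 0 := vert_half t ▸ vert_ne_zero _ ht₀
  rw [h.comp_vert_half ht₀, vert_half, two_mul_half_add_neg_one_div hv',
    two_mul_neg_half_add_neg_one_div hv]
  generalize vert (-1 / 2) t = v at *
  rw [show -1 / (v / (v + 1)) = -(v + 1) / v by field_simp, div_pow, I_pow_four, div_pow]
  field_simp

lemma isFourierPair_eigenProfile (hV : Module.finrank ℝ V = 8) (h : IsEigenKernel P ε) :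
    IsFourierPair (fun x : V => eigenProfile P ε (‖x‖ ^ 2))
      fun x => ε * eigenProfile P ε (‖x‖ ^ 2) := by
  have hoblique := IsFourierPair.obliqueIntegral_axisIntegral hV h.differentiableOn h.isBigO
  have haxis := IsFourierPair.axisIntegral_obliqueIntegral hV h.differentiableOn h.isBigO
  convert (((hoblique.const_mul 2).add ((h.isFourierPair_neg_half hV).const_mul (-1))).add
    ((h.isFourierPair_half hV).const_mul (-1))).add (haxis.const_mul (2 * ε)) using 2 with x x
  · rw [eigenProfile]
    ring
  · rw [eigenProfile]
    linear_combination 2 * axisIntegral P (‖x‖ ^ 2) * h.sq_eq_one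

end IsEigenKernel

lemma isFourierPair_magicProfile (hV : Module.finrank ℝ V = 8) (c : ℂ) :
    IsFourierPair (fun x : V => magicProfile c (‖x‖ ^ 2))
      fun x => magicProfile (-c) (‖x‖ ^ 2) := by
  convert ((isEigenKernel_φ.isFourierPair_eigenProfile hV).const_mul I).add
    ((isEigenKernel_ψ.isFourierPair_eigenProfile hV).const_mul (I * c)) using 2 with x x
  all_goals
    rw [magicProfile]
    ring

end DimEight

/-! ### Positive definiteness -/

section PositiveDefinite

variable {V : Type*} [NormedAddCommGroup V] [InnerProductSpace ℝ V] [MeasurableSpace V]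

/-- The Fourier transform of a measure, with the normalisation of `𝓕`. -/
noncomputable def measureFourier (μ : Measure V) : V → ℂ :=
  VectorFourier.fourierIntegral 𝐞 μ (innerₗ V) fun _ => (1 : ℂ)

/-- The mutual energy of the measures `μ` and `ν` for the translation-invariant kernel
`F (x - y)`. -/
noncomputable def energy (F : V → ℂ) (μ ν : Measure V) : ℂ := ∫ x, ∫ y, F (x - y) ∂ν ∂μ

lemma norm_measureFourier_le (μ : Measure V) (v : V) :
    ‖measureFourier μ v‖ ≤ μ.real Set.univ := by
  simpa only [measureFourier, norm_one, integral_const, smul_eq_mul, mul_one] using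
    VectorFourier.norm_fourierIntegral_le_integral_norm 𝐞 μ (innerₗ V) (fun _ => (1 : ℂ)) v

lemma integral_prod_fourierChar_sub (μ ν : Measure V) [SFinite μ] [SFinite ν] (v : V) :
    ∫ p : V × V, (𝐞 (-inner ℝ v (p.1 - p.2)) : ℂ) ∂μ.prod ν =
      measureFourier μ v * conj (measureFourier ν v) := by
  have hsub (p : V × V) : (𝐞 (-inner ℝ v (p.1 - p.2)) : ℂ) =
      𝐞 (-inner ℝ p.1 v) * conj (𝐞 (-inner ℝ p.2 v) : ℂ) := by
    rw [← Circle.coe_inv_eq_conj, ← Circle.coe_mul, ← AddChar.map_neg_eq_inv,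
      ← AddChar.map_add_eq_mul, inner_sub_right, real_inner_comm p.1, real_inner_comm p.2]
    congr 2
    ring
  have happly (ρ : Measure V) : measureFourier ρ v = ∫ x, (𝐞 (-inner ℝ x v) : ℂ) ∂ρ := by
    simp [measureFourier, VectorFourier.fourierIntegral, Circle.smul_def]
  simp only [hsub, happly, ← integral_conj]
  exact integral_prod_mul (fun x : V => (𝐞 (-inner ℝ x v) : ℂ)) fun y => conj (𝐞 (-inner ℝ y v) : ℂ)

variable [BorelSpace V]

lemma continuous_measureFourier (μ : Measure V) [IsFiniteMeasure μ] :
    Continuous (measureFourier μ) :=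
  VectorFourier.fourierIntegral_continuous Real.continuous_fourierChar
    (L := innerₗ V) continuous_inner (integrable_const 1)

variable [FiniteDimensional ℝ V] (μ ν : Measure V) [IsFiniteMeasure μ] [IsFiniteMeasure ν]

namespace IsFourierPair

variable {H F : V → ℂ}

lemma integrable_comp_sub (h : IsFourierPair H F) :
    Integrable (fun p : V × V => F (p.1 - p.2)) (μ.prod ν) :=
  .of_bound (h.continuous.comp (by fun_prop)).aestronglyMeasurable (∫ v, ‖H v‖)
    (.of_forall fun _ => h.norm_le _)

lemma integrable_mul_measureFourier (h : IsFourierPair H F) :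
    Integrable fun v => H v * (measureFourier μ v * conj (measureFourier ν v)) := by
  refine h.integrable.mul_bdd (c := μ.real Set.univ * ν.real Set.univ) ?_ (.of_forall fun v => ?_)
  · exact ((continuous_measureFourier μ).mul
      (continuous_conj.comp (continuous_measureFourier ν))).aestronglyMeasurable
  · rw [norm_mul, RCLike.norm_conj]
    exact mul_le_mul (norm_measureFourier_le _ _) (norm_measureFourier_le _ _) (norm_nonneg _)
      measureReal_nonneg

lemma energy_eq (h : IsFourierPair H F) :
    energy F μ ν = ∫ v, H v * (measureFourier μ v * conj (measureFourier ν v)) := by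
  have hchar : Continuous fun q : (V × V) × V => (𝐞 (-inner ℝ q.2 (q.1.1 - q.1.2)) : ℂ) :=
    continuous_subtype_val.comp (Real.continuous_fourierChar.comp (by fun_prop))
  have hint : Integrable (fun q : (V × V) × V => H q.2 * (𝐞 (-inner ℝ q.2 (q.1.1 - q.1.2)) : ℂ))
      ((μ.prod ν).prod volume) :=
    (h.integrable.comp_snd _).mul_bdd (c := 1) hchar.aestronglyMeasurable
      (.of_forall fun q => (Circle.norm_coe _).le)
  calc energy F μ ν = ∫ p : V × V, F (p.1 - p.2) ∂μ.prod ν :=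
        (integral_prod _ (h.integrable_comp_sub μ ν)).symm
    _ = ∫ p : V × V, (∫ v, H v * (𝐞 (-inner ℝ v (p.1 - p.2)) : ℂ)) ∂μ.prod ν := by
        simp only [← h.fourier_eq, Real.fourier_eq, Circle.smul_def, smul_eq_mul, mul_comm]
    _ = ∫ v, ∫ p : V × V, H v * (𝐞 (-inner ℝ v (p.1 - p.2)) : ℂ) ∂μ.prod ν :=
        integral_integral_swap hint
    _ = ∫ v, H v * (measureFourier μ v * conj (measureFourier ν v)) := by
        simp only [integral_const_mul, integral_prod_fourierChar_sub]

lemma re_energy_quadratic_nonneg (h : IsFourierPair H F) (hH : ∀ v, 0 ≤ (H v).re) (t : ℝ) :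
    0 ≤ (energy F ν ν).re * (t * t) + (energy F μ ν + energy F ν μ).re * t
      + (energy F μ μ).re := by
  have hint (ρ ρ' : Measure V) [IsFiniteMeasure ρ] [IsFiniteMeasure ρ'] :=
    h.integrable_mul_measureFourier ρ ρ'
  have hsquare (v : V) : t ^ 2 * (H v * (measureFourier ν v * conj (measureFourier ν v)))
        + t * (H v * (measureFourier μ v * conj (measureFourier ν v)))
        + t * (H v * (measureFourier ν v * conj (measureFourier μ v)))
        + H v * (measureFourier μ v * conj (measureFourier μ v)) =
      H v * (normSq (measureFourier μ v + t * measureFourier ν v) : ℝ) := by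
    rw [← mul_conj, map_add, map_mul, conj_ofReal]
    ring
  have hνν := (hint ν ν).const_mul ((t : ℂ) ^ 2)
  have hμν := (hint μ ν).const_mul (t : ℂ)
  have hνμ := (hint ν μ).const_mul (t : ℂ)
  have hsum : t ^ 2 * energy F ν ν + t * energy F μ ν + t * energy F ν μ + energy F μ μ =
      ∫ v, H v * (normSq (measureFourier μ v + t * measureFourier ν v) : ℝ) := by
    rw [h.energy_eq ν ν, h.energy_eq μ ν, h.energy_eq ν μ, h.energy_eq μ μ]
    simp only [← integral_const_mul, ← hsquare]
    rw [← integral_add' hνν hμν, ← integral_add' (hνν.add hμν) hνμ,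
      ← integral_add' ((hνν.add hμν).add hνμ) (hint μ μ)]
    rfl
  have hre : 0 ≤ (∫ v, H v * (normSq (measureFourier μ v + t * measureFourier ν v) : ℝ)).re := by
    have hint' : Integrable fun v => H v *
        (normSq (measureFourier μ v + t * measureFourier ν v) : ℝ) :=
      (((hνν.add hμν).add hνμ).add (hint μ μ)).congr (.of_forall hsquare)
    refine (integral_nonneg fun v => ?_).trans_eq (integral_re hint')
    simpa using mul_nonneg (hH v) (normSq_nonneg _)
  rw [← hsum, ← ofReal_pow] at hre
  simp only [add_re, re_ofReal_mul] at hre ⊢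
  linarith

lemma re_energy_self_nonneg (h : IsFourierPair H F) (hH : ∀ v, 0 ≤ (H v).re) :
    0 ≤ (energy F μ μ).re := by
  simpa using h.re_energy_quadratic_nonneg μ μ hH 0

lemma re_energy_add_sq_le (h : IsFourierPair H F) (hH : ∀ v, 0 ≤ (H v).re) :
    (energy F μ ν + energy F ν μ).re ^ 2 ≤ 4 * (energy F ν ν).re * (energy F μ μ).re := by
  have := discrim_le_zero (h.re_energy_quadratic_nonneg μ ν hH)
  rw [discrim] at this
  linarith

end IsFourierPair

end PositiveDefinite

/-! ### The Cohn–Elkies bound -/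

section CohnElkies

variable {V : Type*} [NormedAddCommGroup V] [InnerProductSpace ℝ V] [FiniteDimensional ℝ V]
  [MeasurableSpace V] [BorelSpace V] {F H : V → ℂ}

/-- The mass of `F` outside the ball of radius `T`. -/
noncomputable def tailIntegral (F : V → ℂ) (T : ℝ) : ℝ := ∫ u in {u | T ≤ ‖u‖}, ‖F u‖

lemma tailIntegral_nonneg (F : V → ℂ) (T : ℝ) : 0 ≤ tailIntegral F T :=
  integral_nonneg fun _ => norm_nonneg _

lemma tendsto_tailIntegral (hF : Integrable F) : Tendsto (tailIntegral F) atTop (𝓝 0) := by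
  have hempty : ⋂ T : ℝ, {u : V | T ≤ ‖u‖} = ∅ :=
    Set.eq_empty_of_forall_notMem fun u hu =>
      (lt_add_one ‖u‖).not_ge (Set.mem_iInter.1 hu (‖u‖ + 1))
  have := tendsto_setIntegral_of_antitone (f := fun u => ‖F u‖)
    (fun T => measurableSet_le (measurable_const (a := T)) measurable_norm)
    (fun S T hST u (hu : T ≤ ‖u‖) => hST.trans hu) ⟨0, hF.norm.integrableOn⟩
  rwa [hempty, setIntegral_empty] at this

lemma norm_setIntegral_sub_left_le (hF : Integrable F) (y : V) (A : Set V) :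
    ‖∫ x in A, F (y - x)‖ ≤ ∫ u, ‖F u‖ :=
  calc ‖∫ x in A, F (y - x)‖ ≤ ∫ x in A, ‖F (y - x)‖ := norm_integral_le_integral_norm _
    _ ≤ ∫ x, ‖F (y - x)‖ :=
        setIntegral_le_integral (hF.comp_sub_left y).norm (.of_forall fun _ => norm_nonneg _)
    _ = ∫ u, ‖F u‖ := integral_sub_left_eq_self (fun u => ‖F u‖) volume y

lemma norm_setIntegral_ball_sub_integral_le (hF : Integrable F) {R T : ℝ} {y : V}
    (hy : ‖y‖ ≤ R) :
    ‖(∫ x in ball 0 (R + T), F (y - x)) - ∫ u, F u‖ ≤ tailIntegral F T := by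
  have hFy := hF.comp_sub_left y
  have hfar : (ball (0 : V) (R + T))ᶜ ⊆ (y - ·) ⁻¹' {u | T ≤ ‖u‖} := fun x hx => by
    have hx' : R + T ≤ ‖x‖ := by simpa using hx
    have := norm_sub_norm_le x y
    rw [norm_sub_rev] at this
    exact le_trans (by linarith) this
  have hsplit := integral_add_compl (measurableSet_ball (x := (0 : V)) (ε := R + T)) hFy
  rw [integral_sub_left_eq_self F volume y] at hsplit
  rw [← hsplit, sub_add_cancel_left, norm_neg]
  calc ‖∫ x in (ball 0 (R + T))ᶜ, F (y - x)‖ ≤ ∫ x in (ball 0 (R + T))ᶜ, ‖F (y - x)‖ :=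
        norm_integral_le_integral_norm _
    _ ≤ ∫ x in (y - ·) ⁻¹' {u | T ≤ ‖u‖}, ‖F (y - x)‖ :=
        setIntegral_mono_set hFy.norm.integrableOn (.of_forall fun _ => norm_nonneg _)
          (.of_forall hfar)
    _ = tailIntegral F T :=
        (Measure.measurePreserving_sub_left volume y).setIntegral_preimage_emb
          (MeasurableEquiv.subLeft y).measurableEmbedding (fun u => ‖F u‖) _

lemma IsFourierPair.integral_eq (h : IsFourierPair F H) : ∫ u, F u = H 0 := by
  simp [← h.fourier_eq, Real.fourier_eq]

lemma IsFourierPair.even (h : IsFourierPair F H) (h' : IsFourierPair H F) (x : V) :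
    F (-x) = F x := by
  have hinv : 𝓕⁻ H = F := by
    rw [← h.fourier_eq]
    exact h'.continuous.fourierInv_fourier_eq h.integrable (h.fourier_eq ▸ h'.integrable)
  calc F (-x) = 𝓕 H (-x) := by rw [h'.fourier_eq]
    _ = 𝓕⁻ H x := (Real.fourierInv_eq_fourier_neg H x).symm
    _ = F x := by rw [hinv]

lemma IsFourierPair.energy_comm (h : IsFourierPair F H) (h' : IsFourierPair H F)
    (μ ν : Measure V) [IsFiniteMeasure μ] [IsFiniteMeasure ν] :
    energy F ν μ = energy F μ ν := by
  rw [energy, integral_integral_swap (h'.integrable_comp_sub ν μ), energy]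
  congr! 4 with x y
  rw [← neg_sub, h.even h']

/-- `F` is an auxiliary function for the Cohn–Elkies linear programming bound at minimal
distance `ρ`, and `H` is its Fourier transform. Both are allowed to be complex valued, and the
sign conditions are imposed on the real parts. -/
structure IsCohnElkiesPair (ρ : ℝ) (F H : V → ℂ) : Prop where
  fourier : IsFourierPair F H
  fourier_symm : IsFourierPair H F
  re_nonpos : ∀ x, ρ ≤ ‖x‖ → (F x).re ≤ 0
  re_fourier_nonneg : ∀ v, 0 ≤ (H v).re
  re_fourier_zero_pos : 0 < (H 0).re

/-- The sum of the unit point masses at the points of `S`. -/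
noncomputable def pointMeasure (S : Finset V) : Measure V := ∑ x ∈ S, Measure.dirac x

instance (S : Finset V) : IsFiniteMeasure (pointMeasure S) := by
  unfold pointMeasure; infer_instance

lemma integral_pointMeasure (S : Finset V) (f : V → ℂ) :
    ∫ x, f x ∂pointMeasure S = ∑ x ∈ S, f x := by
  rw [pointMeasure, integral_finsetSum_measure fun _ _ => integrable_dirac (by simp)]
  simp only [integral_dirac]

instance (R : ℝ) : IsFiniteMeasure (volume.restrict (ball (0 : V) R)) :=
  isFiniteMeasure_restrict.2 measure_ball_lt_top.ne

lemma card_mul_le_re_energy_pointMeasure_ball (h : IsFourierPair F H) {R : ℝ} (T : ℝ)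
    {S : Finset V} (hS : ∀ x ∈ S, ‖x‖ ≤ R) :
    S.card * ((H 0).re - tailIntegral F T) ≤
      (energy F (pointMeasure S) (volume.restrict (ball 0 (R + T)))).re := by
  rw [energy, integral_pointMeasure, re_sum, ← nsmul_eq_mul]
  refine Finset.card_nsmul_le_sum _ _ _ fun x hx => ?_
  have := (abs_re_le_norm _).trans
    (norm_setIntegral_ball_sub_integral_le h.integrable (T := T) (hS x hx))
  rw [h.integral_eq, sub_re] at this
  linarith [(abs_le.1 this).1]

lemma re_energy_ball_le (h : IsFourierPair F H) (h' : IsFourierPair H F)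
    (hH : 0 ≤ (H 0).re) (R : ℝ) {T : ℝ} (hT : 0 ≤ T) :
    (energy F (volume.restrict (ball 0 (R + T))) (volume.restrict (ball 0 (R + T)))).re ≤
      volume.real (ball (0 : V) (R + T)) * ((H 0).re + tailIntegral F T) +
        (volume.real (ball (0 : V) (R + T)) - volume.real (ball (0 : V) R)) *
          ∫ u, ‖F u‖ := by
  have hsub : ball (0 : V) R ⊆ ball 0 (R + T) := ball_subset_ball (by linarith)
  set ν : Measure V := volume.restrict (ball 0 (R + T))
  have hmeas : MeasurableSet (ball (0 : V) R)ᶜ := measurableSet_ball.compl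
  have hint : Integrable (fun x => ∫ y, F (x - y) ∂ν) ν :=
    (h'.integrable_comp_sub ν ν).integral_prod_left
  have hconst : Integrable (fun _ : V => (H 0).re + tailIntegral F T) ν := integrable_const _
  have hshell : Integrable ((ball (0 : V) R)ᶜ.indicator fun _ => ∫ u, ‖F u‖) ν :=
    (integrable_const _).indicator hmeas
  have hpoint (x : V) : (∫ y, F (x - y) ∂ν).re ≤
      ((H 0).re + tailIntegral F T) + (ball (0 : V) R)ᶜ.indicator (fun _ => ∫ u, ‖F u‖) x := by
    by_cases hx : x ∈ ball (0 : V) R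
    · have := (re_le_norm _).trans (norm_setIntegral_ball_sub_integral_le h.integrable
        (T := T) (mem_ball_zero_iff.1 hx).le)
      rw [h.integral_eq, sub_re] at this
      rw [Set.indicator_of_notMem (Set.notMem_compl_iff.2 hx)]
      linarith
    · have := (re_le_norm _).trans (norm_setIntegral_sub_left_le h.integrable x (ball 0 (R + T)))
      rw [Set.indicator_of_mem hx]
      linarith [tailIntegral_nonneg F T]
  calc (energy F ν ν).re = ∫ x, (∫ y, F (x - y) ∂ν).re ∂ν := (integral_re hint).symm
    _ ≤ ∫ x, (((H 0).re + tailIntegral F T) +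
          (ball (0 : V) R)ᶜ.indicator (fun _ => ∫ u, ‖F u‖) x) ∂ν :=
        integral_mono hint.re (hconst.add hshell) hpoint
    _ = _ := by
        rw [integral_add hconst hshell, integral_indicator_const _ hmeas, integral_const,
          measureReal_restrict_apply_univ, measureReal_restrict_apply hmeas, Set.inter_comm,
          ← Set.sdiff_eq, measureReal_sdiff hsub measurableSet_ball]
        rfl

namespace IsCohnElkiesPair

variable {ρ : ℝ}

lemma re_zero_nonneg (h : IsCohnElkiesPair ρ F H) : 0 ≤ (F 0).re := by
  rw [← h.fourier_symm.integral_eq]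
  exact (integral_nonneg h.re_fourier_nonneg).trans_eq (integral_re h.fourier_symm.integrable)

lemma re_energy_pointMeasure_le (h : IsCohnElkiesPair ρ F H) {S : Finset V}
    (hS : (S : Set V).Pairwise fun x y => ρ ≤ dist x y) :
    (energy F (pointMeasure S) (pointMeasure S)).re ≤ S.card * (F 0).re := by
  classical
  simp only [energy, integral_pointMeasure, re_sum]
  rw [← nsmul_eq_mul]
  refine Finset.sum_le_card_nsmul _ _ _ fun x hx => ?_
  rw [← Finset.add_sum_erase _ _ hx, sub_self]
  refine add_le_of_nonpos_right (Finset.sum_nonpos fun y hy => h.re_nonpos _ ?_)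
  rw [← dist_eq_norm]
  exact hS hx (Finset.mem_of_mem_erase hy) (Finset.ne_of_mem_erase hy).symm

lemma card_mul_sq_le (h : IsCohnElkiesPair ρ F H) {R T : ℝ} (hT : 0 ≤ T)
    (hτ : tailIntegral F T < (H 0).re) {S : Finset V} (hSR : ∀ x ∈ S, ‖x‖ ≤ R)
    (hS : (S : Set V).Pairwise fun x y => ρ ≤ dist x y) :
    S.card * ((H 0).re - tailIntegral F T) ^ 2 ≤
      (F 0).re * (volume.real (ball (0 : V) (R + T)) * ((H 0).re + tailIntegral F T) +
        (volume.real (ball (0 : V) (R + T)) - volume.real (ball (0 : V) R)) *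
          ∫ u, ‖F u‖) := by
  have hball := re_energy_ball_le h.fourier h.fourier_symm h.re_fourier_zero_pos.le R hT
  have hmixed := card_mul_le_re_energy_pointMeasure_ball h.fourier T hSR
  have hpoints := h.re_energy_pointMeasure_le hS
  have hCS := h.fourier_symm.re_energy_add_sq_le (pointMeasure S)
    (volume.restrict (ball 0 (R + T))) h.re_fourier_nonneg
  have hball_nonneg := h.fourier_symm.re_energy_self_nonneg
    (volume.restrict (ball 0 (R + T))) h.re_fourier_nonneg
  rw [h.fourier.energy_comm h.fourier_symm (pointMeasure S), add_re] at hCS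
  set E := volume.real (ball (0 : V) (R + T)) * ((H 0).re + tailIntegral F T) +
    (volume.real (ball (0 : V) (R + T)) - volume.real (ball (0 : V) R)) * ∫ u, ‖F u‖
  rcases S.card.eq_zero_or_pos with hcard | hcard
  · rw [hcard, Nat.cast_zero, zero_mul]
    exact mul_nonneg h.re_zero_nonneg (hball_nonneg.trans hball)
  have hcard' : (0 : ℝ) < S.card := Nat.cast_pos.2 hcard
  have hmixed_nonneg : 0 ≤ S.card * ((H 0).re - tailIntegral F T) :=
    mul_nonneg hcard'.le (sub_nonneg.2 hτ.le)
  refine le_of_mul_le_mul_left ?_ hcard'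
  have hleft := pow_le_pow_left₀ hmixed_nonneg hmixed 2
  have hright := mul_le_mul hball hpoints
    (h.fourier_symm.re_energy_self_nonneg _ h.re_fourier_nonneg) (hball_nonneg.trans hball)
  linarith

end IsCohnElkiesPair

end CohnElkies

/-! ### Densities -/

section Density

variable {V : Type*} [NormedAddCommGroup V] [InnerProductSpace ℝ V] [FiniteDimensional ℝ V]
  [MeasurableSpace V] [BorelSpace V] {F H : V → ℂ} {ρ : ℝ}

/-- The upper density of `A`, measured in balls about the origin. -/
noncomputable def upperDensity (A : Set V) : ℝ :=
  limsup (fun r => volume.real (A ∩ ball 0 r) / volume.real (ball (0 : V) r)) atTop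

lemma volume_real_ball_pos {r : ℝ} (hr : 0 < r) : 0 < volume.real (ball (0 : V) r) :=
  ENNReal.toReal_pos (measure_ball_pos _ _ hr).ne' measure_ball_lt_top.ne

lemma tendsto_volume_real_ball_div {g : ℝ → ℝ} (hg : g =o[atTop] (id : ℝ → ℝ)) :
    Tendsto (fun r => volume.real (ball (0 : V) (r + g r)) / volume.real (ball (0 : V) r))
      atTop (𝓝 1) := by
  have hscale {r : ℝ} (hr : 0 < r) : volume.real (ball (0 : V) r) =
      r ^ Module.finrank ℝ V * volume.real (ball (0 : V) 1) := by
    rw [Measure.real, Measure.addHaar_ball_of_pos _ _ hr, ENNReal.toReal_mul,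
      ENNReal.toReal_ofReal (by positivity), Measure.real]
  have hratio : Tendsto (fun r => 1 + g r / r) atTop (𝓝 1) := by
    simpa using hg.tendsto_div_nhds_zero.const_add 1
  have hpow := hratio.pow (Module.finrank ℝ V)
  rw [one_pow] at hpow
  refine hpow.congr' ?_
  filter_upwards [eventually_gt_atTop 0, hratio.eventually_const_lt one_pos] with r hr hpos
  have hsum : r + g r = (1 + g r / r) * r := by field_simp
  have hunit := volume_real_ball_pos (V := V) one_pos
  rw [hsum, hscale (mul_pos hpos hr), hscale hr, mul_pow]
  field_simp

lemma volume_real_biUnion_ball_inter_le {X : Set V} {r s : ℝ} (hX : (X ∩ ball 0 (r + s)).Finite) :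
    volume.real ((⋃ x ∈ X, ball x s) ∩ ball 0 r) ≤
      hX.toFinset.card * volume.real (ball (0 : V) s) := by
  have hsub : (⋃ x ∈ X, ball x s) ∩ ball 0 r ⊆ ⋃ x ∈ hX.toFinset, ball x s := by
    rintro z ⟨hz, hzr⟩
    obtain ⟨x, hx, hzx⟩ := Set.mem_iUnion₂.1 hz
    refine Set.mem_iUnion₂.2 ⟨x, hX.mem_toFinset.2 ⟨hx, ?_⟩, hzx⟩
    rw [mem_ball] at *
    linarith [dist_triangle_left x 0 z]
  calc volume.real ((⋃ x ∈ X, ball x s) ∩ ball 0 r)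
      ≤ volume.real (⋃ x ∈ hX.toFinset, ball x s) :=
        measureReal_mono hsub (measure_biUnion_lt_top hX.toFinset.finite_toSet
          fun _ _ => measure_ball_lt_top).ne
    _ ≤ ∑ x ∈ hX.toFinset, volume.real (ball x s) := measureReal_biUnion_finset_le _ _
    _ = hX.toFinset.card * volume.real (ball (0 : V) s) := by
        simp only [Measure.addHaar_real_ball_center, Finset.sum_const, nsmul_eq_mul]

/-- A bound for the number of points of a `ρ`-separated set in the ball of radius `r + ρ / 2`,
relative to the volume of the ball of radius `r`. The energies are taken against the uniform
measure on the ball that is larger by another `√r`: this makes the tail of `F` negligible, while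
the volume still grows by a factor tending to `1`. -/
noncomputable def pointDensityBound (F H : V → ℂ) (ρ r : ℝ) : ℝ :=
  (F 0).re * (volume.real (ball (0 : V) (r + (ρ / 2 + √r))) / volume.real (ball (0 : V) r) *
      ((H 0).re + tailIntegral F √r) +
    (volume.real (ball (0 : V) (r + (ρ / 2 + √r))) / volume.real (ball (0 : V) r) -
      volume.real (ball (0 : V) (r + ρ / 2)) / volume.real (ball (0 : V) r)) * ∫ u, ‖F u‖) /
    ((H 0).re - tailIntegral F √r) ^ 2

lemma tendsto_tailIntegral_sqrt (hF : Integrable F) :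
    Tendsto (fun r => tailIntegral F √r) atTop (𝓝 0) :=
  (tendsto_tailIntegral hF).comp Real.tendsto_sqrt_atTop

lemma tendsto_pointDensityBound (hF : Integrable F) (hH : (H 0).re ≠ 0) (ρ : ℝ) :
    Tendsto (pointDensityBound F H ρ) atTop (𝓝 ((F 0).re / (H 0).re)) := by
  have hconst : (fun _ : ℝ => ρ / 2) =o[atTop] (id : ℝ → ℝ) := isLittleO_const_id_atTop _
  have hsqrt : (fun r : ℝ => √r) =o[atTop] (id : ℝ → ℝ) := by
    refine isLittleO_of_tendsto' ?_ ?_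
    · filter_upwards [eventually_gt_atTop 0] with r hr h0 using absurd h0 hr.ne'
    · simpa only [id, Real.sqrt_div_self, Pi.inv_def] using
        Real.tendsto_sqrt_atTop.inv_tendsto_atTop
  have hτ := tendsto_tailIntegral_sqrt hF
  have hin := tendsto_volume_real_ball_div (V := V) hconst
  have hout := tendsto_volume_real_ball_div (V := V) (hconst.add hsqrt)
  have hlim := (((hout.mul (hτ.const_add (H 0).re)).add
    ((hout.sub hin).mul_const (∫ u, ‖F u‖))).const_mul (F 0).re).div
      ((hτ.const_sub (H 0).re).pow 2) (by simpa using hH)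
  have hvalue : (F 0).re * (1 * ((H 0).re + 0) + (1 - 1) * ∫ u, ‖F u‖) / ((H 0).re - 0) ^ 2 =
      (F 0).re / (H 0).re := by
    rw [sub_self, zero_mul, sub_zero, add_zero, add_zero]
    field_simp
  exact hvalue ▸ hlim

namespace IsCohnElkiesPair

lemma card_le (h : IsCohnElkiesPair ρ F H) {r : ℝ} (hr : 0 < r)
    (hτ : tailIntegral F √r < (H 0).re) {S : Finset V} (hSr : ↑S ⊆ ball (0 : V) (r + ρ / 2))
    (hS : (S : Set V).Pairwise fun x y => ρ ≤ dist x y) :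
    S.card ≤ pointDensityBound F H ρ r * volume.real (ball (0 : V) r) := by
  have hcard := h.card_mul_sq_le (Real.sqrt_nonneg r) hτ
    (fun x hx => (mem_ball_zero_iff.1 (hSr hx)).le) hS
  have hvol := volume_real_ball_pos (V := V) hr
  have hgap : 0 < (H 0).re - tailIntegral F √r := sub_pos.2 hτ
  rw [pointDensityBound, div_mul_eq_mul_div, le_div_iff₀ (pow_pos hgap 2)]
  refine hcard.trans_eq ?_
  rw [add_assoc]
  field_simp

lemma finite_inter_ball (h : IsCohnElkiesPair ρ F H) {r : ℝ} (hr : 0 < r)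
    (hτ : tailIntegral F √r < (H 0).re) {X : Set V} (hX : X.Pairwise fun x y => ρ ≤ dist x y) :
    (X ∩ ball 0 (r + ρ / 2)).Finite := by
  by_contra hinf
  obtain ⟨n, hn⟩ := exists_nat_gt (pointDensityBound F H ρ r * volume.real (ball (0 : V) r))
  obtain ⟨S, hS, rfl⟩ := Set.Infinite.exists_subset_card_eq hinf n
  exact hn.not_ge (h.card_le hr hτ (hS.trans Set.inter_subset_right)
    (hX.mono (hS.trans Set.inter_subset_left)))

theorem upperDensity_le (h : IsCohnElkiesPair ρ F H) {X : Set V}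
    (hX : X.Pairwise fun x y => ρ ≤ dist x y) :
    upperDensity (⋃ x ∈ X, ball x (ρ / 2)) ≤
      (F 0).re / (H 0).re * volume.real (ball (0 : V) (ρ / 2)) := by
  have hlim := (tendsto_pointDensityBound h.fourier.integrable h.re_fourier_zero_pos.ne'
    ρ).mul_const (volume.real (ball (0 : V) (ρ / 2)))
  rw [← hlim.limsup_eq]
  refine limsup_le_limsup ?_ ?_ hlim.isBoundedUnder_le
  · filter_upwards [eventually_gt_atTop 0, (tendsto_tailIntegral_sqrt
      h.fourier.integrable).eventually_lt_const h.re_fourier_zero_pos] with r hr hτ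
    have hfin := h.finite_inter_ball hr hτ hX
    have hcard := h.card_le hr hτ (S := hfin.toFinset) (by simp) (hX.mono (by simp))
    rw [div_le_iff₀ (volume_real_ball_pos hr)]
    refine (volume_real_biUnion_ball_inter_le hfin).trans ?_
    rw [mul_right_comm]
    exact mul_le_mul_of_nonneg_right hcard measureReal_nonneg
  · exact IsBoundedUnder.isCoboundedUnder_le (isBoundedUnder_of ⟨0, fun r => by positivity⟩)

end IsCohnElkiesPair

end Density

/-! ### The magic function -/

section MagicFunction

variable {V : Type*} [NormedAddCommGroup V] [InnerProductSpace ℝ V] [FiniteDimensional ℝ V]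
  [MeasurableSpace V] [BorelSpace V] {F H : V → ℂ}

lemma IsFourierPair.comp_smul (h : IsFourierPair F H) {c : ℝ} (hc : c ≠ 0) :
    IsFourierPair (fun x => F (c • x))
      (fun w => ((|(c ^ Module.finrank ℝ V)⁻¹| : ℝ) : ℂ) * H (c⁻¹ • w)) where
  integrable := h.integrable.comp_smul hc
  fourier_eq := by
    ext w
    have hphase (x : V) : inner ℝ x w = inner ℝ (c • x) (c⁻¹ • w) := by
      rw [real_inner_smul_left, real_inner_smul_right, mul_inv_cancel_left₀ hc]
    simp only [Real.fourier_eq, hphase]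
    rw [Measure.integral_comp_smul volume fun u => 𝐞 (-inner ℝ u (c⁻¹ • w)) • F u, real_smul,
      ← Real.fourier_eq, h.fourier_eq]

lemma IsCohnElkiesPair.comp_smul {ρ : ℝ} (h : IsCohnElkiesPair ρ F H) {c : ℝ} (hc : 0 < c) :
    IsCohnElkiesPair (ρ / c) (fun x => F (c • x))
      (fun w => ((|(c ^ Module.finrank ℝ V)⁻¹| : ℝ) : ℂ) * H (c⁻¹ • w)) where
  fourier := h.fourier.comp_smul hc.ne'
  fourier_symm := by
    have hdual := (h.fourier_symm.comp_smul (inv_ne_zero hc.ne')).const_mul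
      ((|(c ^ Module.finrank ℝ V)⁻¹| : ℝ) : ℂ)
    have hscale : |(c ^ Module.finrank ℝ V)⁻¹| * |(c⁻¹ ^ Module.finrank ℝ V)⁻¹| = 1 := by
      rw [← abs_mul, inv_pow, inv_inv, inv_mul_cancel₀ (pow_ne_zero _ hc.ne'), abs_one]
    simpa only [inv_inv, ← mul_assoc, ← ofReal_mul, hscale, ofReal_one, one_mul] using hdual
  re_nonpos x hx := h.re_nonpos _ <| by
    rwa [norm_smul, Real.norm_of_nonneg hc.le, ← div_le_iff₀' hc]
  re_fourier_nonneg v := by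
    rw [re_ofReal_mul]
    exact mul_nonneg (abs_nonneg _) (h.re_fourier_nonneg _)
  re_fourier_zero_pos := by
    rw [re_ofReal_mul, smul_zero]
    exact mul_pos (by positivity) h.re_fourier_zero_pos

lemma isCohnElkiesPair_magicProfile (hV : Module.finrank ℝ V = 8) :
    IsCohnElkiesPair √2 (fun x : V => magicProfile (-κ) (‖x‖ ^ 2))
      (fun x => magicProfile κ (‖x‖ ^ 2)) where
  fourier := by simpa only [neg_neg] using isFourierPair_magicProfile hV (-κ)
  fourier_symm := isFourierPair_magicProfile hV κ
  re_nonpos x hx := by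
    have hcont : Continuous fun c : ℝ => (magicProfile (-κ) (‖c • x‖ ^ 2)).re :=
      continuous_re.comp ((isFourierPair_magicProfile (V := V) hV κ).continuous.comp (by fun_prop))
    have hlim : Tendsto (fun c : ℝ => (magicProfile (-κ) (‖c • x‖ ^ 2)).re) (𝓝[>] 1)
        (𝓝 (magicProfile (-κ) (‖x‖ ^ 2)).re) := by
      simpa using (hcont.tendsto 1).mono_left nhdsWithin_le_nhds
    refine le_of_tendsto hlim ?_
    filter_upwards [self_mem_nhdsWithin] with c hc
    have hc : 1 < c := hc
    have hx2 : 2 ≤ ‖x‖ ^ 2 := (Real.sqrt_le_left (norm_nonneg x)).1 hx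
    refine magicProfile_neg_κ_nonpos ?_
    rw [norm_smul, mul_pow, Real.norm_eq_abs, sq_abs]
    nlinarith
  re_fourier_nonneg v := by
    rcases eq_or_ne v 0 with rfl | hv
    · rw [norm_zero, zero_pow two_ne_zero, magicProfile_zero, ofReal_re]
      positivity
    · exact magicProfile_κ_nonneg (by positivity)
  re_fourier_zero_pos := by
    rw [norm_zero, zero_pow two_ne_zero, magicProfile_zero, ofReal_re]
    positivity

lemma volume_real_ball_of_finrank_eq_eight (hV : Module.finrank ℝ V = 8) {r : ℝ} (hr : 0 ≤ r) :
    volume.real (ball (0 : V) r) = π ^ 4 / 24 * r ^ 8 := by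
  have : Nontrivial V := Module.nontrivial_of_finrank_pos (R := ℝ) (by omega)
  rw [Measure.real, InnerProductSpace.volume_ball_of_dim_even (k := 4) (by omega), hV,
    ENNReal.toReal_mul, ENNReal.toReal_pow, ENNReal.toReal_ofReal hr,
    ENNReal.toReal_ofReal (by positivity), mul_comm]
  norm_num [Nat.factorial]

end MagicFunction

end SpherePacking

open SpherePacking in
theorem sphere_packing_bound_dim8_general {V : Type*} [NormedAddCommGroup V]
    [InnerProductSpace ℝ V] [FiniteDimensional ℝ V] [MeasurableSpace V] [BorelSpace V]
    (hV : Module.finrank ℝ V = 8) {ρ : ℝ} (hρ : 0 < ρ) {X : Set V}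
    (hX : X.Pairwise fun x y => ρ ≤ dist x y) :
    SpherePacking.upperDensity (⋃ x ∈ X, ball x (ρ / 2)) ≤ Real.pi ^ 4 / 384 := by
  have h := (isCohnElkiesPair_magicProfile hV).comp_smul (c := √2 / ρ) (by positivity)
  rw [div_div_cancel₀ (by positivity)] at h
  refine (h.upperDensity_le hX).trans_eq ?_
  have hsqrt : √2 ^ 8 = (16 : ℝ) := by
    rw [show √2 ^ 8 = (√2 ^ 2) ^ 4 by ring, Real.sq_sqrt two_pos.le]
    norm_num
  rw [volume_real_ball_of_finrank_eq_eight hV (by positivity), abs_of_pos (by positivity), hV]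
  simp only [smul_zero, norm_zero, zero_pow two_ne_zero, magicProfile_zero]
  rw [Complex.re_ofReal_mul, Complex.ofReal_re, div_pow, hsqrt]
  field_simp
  norm_num

/-- **Theorem 1 (main theorem).** No packing of unit balls in Euclidean space `ℝ⁸` has density
greater than that of the `E₈`-lattice packing: for every set `X` of centers with pairwise
distances at least `2`, the density of the packing `⋃ x ∈ X, B(x,1)` is at most `π⁴/384`. -/
theorem sphere_packing_bound_dim8 (X : Set (EuclideanSpace ℝ (Fin 8)))
    (hX : X.Pairwise fun x y => 2 ≤ dist x y) :
    limsup (fun r : ℝ =>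
        (volume ((⋃ x ∈ X, ball x 1) ∩ ball (0 : EuclideanSpace ℝ (Fin 8)) r)).toReal /
          (volume (ball (0 : EuclideanSpace ℝ (Fin 8)) r)).toReal) atTop
      ≤ Real.pi ^ 4 / 384 := by
  have h := sphere_packing_bound_dim8_general (by simp) two_pos hX
  rwa [div_self two_ne_zero] at h
end

section
/- Let f: ℝ⁸ → ℝ be a Schwartz function with f(x) ≤ 0 for all ‖x‖ ≥ 1 and f̂(x) ≥ 0 for all x ∈ ℝ⁸. Then f(0) ≥ 2⁴ · f̂(0). -/
open MeasureTheory FourierTransform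

/-!
Write `L` for a lattice and `S ⊂ L` for a finite set. If `𝓕 f ≥ 0`, then `f` is the Fourier
transform of a positive measure, so `|∑ f (p - q + t)| ≤ ∑ f (p - q)` for every `t`, the sums being
over `p, q ∈ S`; if moreover `f ≤ 0` on `L \ {0}`, the right-hand side is at most `#S * f 0`.
Integrating over `t` in a fundamental domain of `L`, dividing by `#S` and letting `S` run through a
Følner sequence of `L` turns this into `𝓕 f 0 = ∫ f ≤ covolume L * f 0`. In this averaged form of
Poisson summation no sum of `f` or `𝓕 f` over a lattice has to converge pointwise. The bound in
`ℝ⁸` is the case of the lattice `2^(-1/2) Λ₈`, whose covolume is `2⁻⁴` and whose nonzero vectors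
have norm at least `1`.
-/

open Filter Finset Module Topology
open scoped ComplexOrder Pointwise

section Averaging

variable {G : Type*} [AddCommGroup G]

lemma sum_product_sub_eq_tsum [DecidableEq G] (S : Finset G) (a : G → ℝ) :
    ∑ p ∈ S ×ˢ S, a (p.1 - p.2) = ∑' g, (#(S ∩ (g +ᵥ S)) : ℝ) * a g := by
  have hcard (g : G) : #(S ∩ (g +ᵥ S)) = #{p ∈ S ×ˢ S | p.1 - p.2 = g} := by
    rw [card_inter_vadd, card_sub_eq]
  have hfiber (p : G × G) : HasSum (fun g ↦ if p.1 - p.2 = g then a g else 0) (a (p.1 - p.2)) := by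
    convert! hasSum_ite_eq (p.1 - p.2) (a (p.1 - p.2)) using 2 with g
    grind
  rw [← (hasSum_sum fun p (_ : p ∈ S ×ˢ S) ↦ hfiber p).tsum_eq]
  refine tsum_congr fun g ↦ ?_
  rw [← sum_filter, sum_const, hcard, nsmul_eq_mul]

lemma tendsto_sum_product_sub_div_card [DecidableEq G] {α : Type*} {l : Filter α}
    {F : α → Finset G}
    (hF : ∀ g : G, Tendsto (fun n ↦ (#(F n ∩ (g +ᵥ F n)) : ℝ) / #(F n)) l (𝓝 1))
    {a : G → ℝ} (ha : Summable a) :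
    Tendsto (fun n ↦ (∑ p ∈ F n ×ˢ F n, a (p.1 - p.2)) / #(F n)) l (𝓝 (∑' g, a g)) := by
  have hratio (n : α) (g : G) : (#(F n ∩ (g +ᵥ F n)) : ℝ) / #(F n) ≤ 1 :=
    div_le_one_of_le₀ (mod_cast card_le_card inter_subset_left) (Nat.cast_nonneg _)
  simp_rw [sum_product_sub_eq_tsum, ← tsum_div_const, mul_div_right_comm]
  refine tendsto_tsum_of_dominated_convergence ha.norm
    (fun g ↦ by simpa using (hF g).mul_const (a g)) (.of_forall fun n g ↦ ?_)
  rw [norm_mul, Real.norm_of_nonneg (by positivity)]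
  exact mul_le_of_le_one_left (norm_nonneg _) (hratio n g)

lemma card_Ico_inter_vadd_Ico (N : ℕ) (k : ℤ) :
    #(Ico 0 (N : ℤ) ∩ (k +ᵥ Ico 0 (N : ℤ))) = (N - |k|).toNat := by
  have : k +ᵥ Ico 0 (N : ℤ) = Ico k (k + N) := by
    simpa [Finset.vadd_finset_def] using image_add_left_Ico (0 : ℤ) N k
  rw [this, Ico_inter_Ico, Int.card_Ico]
  rcases abs_cases k with h | h <;> grind

/-- The cube `[0, N)^ι` of lattice points, used as a Følner sequence of `ι → ℤ` as `N → ∞`. -/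
noncomputable def latticeCube (ι : Type*) [Fintype ι] [DecidableEq ι] (N : ℕ) : Finset (ι → ℤ) :=
  Fintype.piFinset fun _ ↦ Ico 0 (N : ℤ)

section Cube

variable {ι : Type*} [Fintype ι] [DecidableEq ι]

lemma card_latticeCube (N : ℕ) : #(latticeCube ι N) = N ^ Fintype.card ι := by
  simp [latticeCube]

lemma card_latticeCube_inter_vadd (N : ℕ) (w : ι → ℤ) :
    #(latticeCube ι N ∩ (w +ᵥ latticeCube ι N)) = ∏ i, (N - |w i|).toNat := by
  have hvadd : w +ᵥ latticeCube ι N = Fintype.piFinset fun i ↦ w i +ᵥ Ico 0 (N : ℤ) := by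
    ext x
    simp [latticeCube, ← Finset.neg_vadd_mem_iff]
  rw [hvadd, latticeCube, ← Fintype.piFinset_inter, Fintype.card_piFinset]
  simp_rw [card_Ico_inter_vadd_Ico]

lemma tendsto_toNat_sub_div_atTop (k : ℤ) :
    Tendsto (fun N : ℕ ↦ (((N : ℤ) - k).toNat : ℝ) / N) atTop (𝓝 1) := by
  have hlim : Tendsto (fun N : ℕ ↦ 1 - (k : ℝ) / N) atTop (𝓝 1) := by
    simpa using (tendsto_const_div_atTop_nhds_zero_nat (k : ℝ)).const_sub 1
  refine hlim.congr' ?_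
  filter_upwards [eventually_ge_atTop k.toNat, eventually_ne_atTop 0] with N hk hN
  have hcast : (((N : ℤ) - k).toNat : ℝ) = N - k := mod_cast Int.toNat_of_nonneg (by lia)
  rw [hcast, sub_div, div_self (Nat.cast_ne_zero.2 hN)]

lemma tendsto_card_latticeCube_inter_vadd_div_card (w : ι → ℤ) :
    Tendsto (fun N : ℕ ↦
      (#(latticeCube ι N ∩ (w +ᵥ latticeCube ι N)) : ℝ) / #(latticeCube ι N)) atTop (𝓝 1) := by
  have hprod := tendsto_finsetProd univ fun i _ ↦ tendsto_toNat_sub_div_atTop |w i|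
  simpa [card_latticeCube, card_latticeCube_inter_vadd] using hprod

end Cube

lemma tsum_le_of_forall_sum_product_sub_le_pi {ι : Type*} [Finite ι] {a : (ι → ℤ) → ℝ}
    (ha : Summable a) {C : ℝ}
    (hC : ∀ S : Finset (ι → ℤ), ∑ p ∈ S ×ˢ S, a (p.1 - p.2) ≤ #S * C) : ∑' g, a g ≤ C := by
  classical
  have := Fintype.ofFinite ι
  refine le_of_tendsto
    (tendsto_sum_product_sub_div_card tendsto_card_latticeCube_inter_vadd_div_card ha) ?_
  filter_upwards [eventually_gt_atTop 0] with N hN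
  rw [div_le_iff₀' (by rw [card_latticeCube]; positivity)]
  exact hC _

lemma tsum_le_of_forall_sum_product_sub_le [Module.Free ℤ G] [Module.Finite ℤ G] {a : G → ℝ}
    (ha : Summable a) {C : ℝ}
    (hC : ∀ S : Finset G, ∑ p ∈ S ×ˢ S, a (p.1 - p.2) ≤ #S * C) : ∑' g, a g ≤ C := by
  classical
  let e := (Free.chooseBasis ℤ G).equivFun.symm
  rw [← e.toEquiv.tsum_eq a]
  refine tsum_le_of_forall_sum_product_sub_le_pi (e.toEquiv.summable_iff.2 ha) fun S ↦ ?_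
  simpa [sum_product] using hC (S.map e.toEquiv.toEmbedding)

end Averaging

section Lattice

lemma hasSum_setIntegral_vadd {G α E : Type*} [AddGroup G] [Countable G] [MeasurableSpace G]
    [MeasurableSpace α] [AddAction G α] [MeasurableVAdd G α] {μ : Measure α}
    [VAddInvariantMeasure G α μ] [NormedAddCommGroup E] [NormedSpace ℝ E] {D : Set α}
    (hD : IsAddFundamentalDomain G D μ) {f : α → E} (hf : Integrable f μ) :
    HasSum (fun g : G ↦ ∫ x in D, f (g +ᵥ x) ∂μ) (∫ x, f x ∂μ) := by
  have hrestrict := hD.sum_restrict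
  have hsum := hasSum_integral_measure (hrestrict.symm ▸ hf)
  rw [hrestrict] at hsum
  refine hsum.congr_fun fun g ↦ ?_
  exact ((measurePreserving_vadd g μ).setIntegral_image_emb
    (measurableEmbedding_const_vadd g) f D).symm

lemma sum_product_sub_le_card_mul {G : Type*} [AddGroup G] {u : G → ℝ}
    (hu : ∀ g ≠ 0, u g ≤ 0) (S : Finset G) :
    ∑ p ∈ S ×ˢ S, u (p.1 - p.2) ≤ #S * u 0 := by
  classical
  calc
    ∑ p ∈ S ×ˢ S, u (p.1 - p.2) ≤ ∑ p ∈ S ×ˢ S, if p.1 = p.2 then u 0 else 0 := by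
      refine sum_le_sum fun p _ ↦ ?_
      split_ifs with h
      · rw [h, sub_self]
      · exact hu _ (sub_ne_zero.2 h)
    _ = #S * u 0 := by simp +contextual [sum_product, sum_ite_eq]

variable {V : Type*} [NormedAddCommGroup V] [NormedSpace ℝ V] [FiniteDimensional ℝ V]
  [MeasurableSpace V] [BorelSpace V] (L : Submodule ℤ V) [DiscreteTopology L] [IsZLattice ℝ L]
  (μ : Measure V) [μ.IsAddHaarMeasure]

lemma integral_le_covolume_mul {u : V → ℝ} (hu : Integrable u μ)
    (hneg : ∀ x ∈ L, x ≠ 0 → u x ≤ 0)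
    (hshift : ∀ (S : Finset L) (t : V), ∑ p ∈ S ×ˢ S, u (↑(p.1 - p.2) + t) ≤
      ∑ p ∈ S ×ˢ S, u ↑(p.1 - p.2)) :
    ∫ x, u x ∂μ ≤ ZLattice.covolume L μ * u 0 := by
  have : MeasurableVAdd L V := inferInstanceAs (MeasurableVAdd L.toAddSubgroup V)
  have : VAddInvariantMeasure L V μ := inferInstanceAs (VAddInvariantMeasure L.toAddSubgroup V μ)
  have := ZLattice.module_finite ℝ L
  have := ZLattice.module_free ℝ L
  let b := Free.chooseBasis ℤ L
  let D := ZSpan.fundamentalDomain (b.ofZLatticeBasis ℝ)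
  have hD : IsAddFundamentalDomain L D μ := ZLattice.isAddFundamentalDomain b μ
  have hDfin : μ D ≠ ⊤ := (ZSpan.fundamentalDomain_isBounded _).measure_lt_top.ne
  have hint (l : L) : Integrable (fun x ↦ u (l + x)) (μ.restrict D) :=
    (hu.comp_add_left (l : V)).integrableOn
  have hsum := hasSum_setIntegral_vadd hD hu
  rw [← hsum.tsum_eq, ZLattice.covolume_eq_measure_fundamentalDomain L μ hD]
  refine tsum_le_of_forall_sum_product_sub_le hsum.summable fun S ↦ ?_
  calc
    ∑ p ∈ S ×ˢ S, ∫ x in D, u (↑(p.1 - p.2) + x) ∂μ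
      = ∫ x in D, ∑ p ∈ S ×ˢ S, u (↑(p.1 - p.2) + x) ∂μ :=
        (integral_finsetSum _ fun p _ ↦ hint (p.1 - p.2)).symm
    _ ≤ ∫ _ in D, #S * u 0 ∂μ := by
        refine integral_mono (integrable_finsetSum _ fun p _ ↦ hint (p.1 - p.2))
          (integrableOn_const hDfin) fun x ↦ (hshift S x).trans ?_
        exact sum_product_sub_le_card_mul (u := fun l : L ↦ u l)
          (fun l hl ↦ hneg l l.2 (by simpa using hl)) S
    _ = #S * (μ.real D * u 0) := by rw [setIntegral_const, smul_eq_mul]; ring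

lemma covolume_comap_continuousLinearEquiv (e : V ≃L[ℝ] V) :
    ZLattice.covolume (ZLattice.comap ℝ L e.toLinearMap) μ =
      |LinearMap.det (e.symm : V →ₗ[ℝ] V)| * ZLattice.covolume L μ := by
  have := ZLattice.module_finite ℝ L
  have := ZLattice.module_free ℝ L
  let b := Free.chooseBasis ℤ L
  let b₀ := b.ofZLatticeBasis ℝ
  classical
  have hcomp : (↑) ∘ b.ofZLatticeComap ℝ L e.toLinearEquiv =
      (e.symm : V →ₗ[ℝ] V) ∘ ((↑) : L → V) ∘ b := by
    ext i
    simp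
  rw [ZLattice.covolume_eq_det_mul_measureReal L μ b b₀,
    ZLattice.covolume_eq_det_mul_measureReal _ μ (b.ofZLatticeComap ℝ L e.toLinearEquiv) b₀,
    ← mul_assoc, ← abs_mul, ← Basis.det_comp, ← hcomp]

lemma covolume_comap_smulLeft (c : ℝˣ) :
    ZLattice.covolume
        (ZLattice.comap ℝ L (ContinuousLinearEquiv.smulLeft c : V ≃L[ℝ] V).toLinearMap) μ =
      (|(c : ℝ)| ^ finrank ℝ V)⁻¹ * ZLattice.covolume L μ := by
  have hsymm : ((ContinuousLinearEquiv.smulLeft c : V ≃L[ℝ] V).symm : V →ₗ[ℝ] V) =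
      ((c⁻¹ : ℝˣ) : ℝ) • LinearMap.id := rfl
  rw [covolume_comap_continuousLinearEquiv, hsymm, LinearMap.det_smul, LinearMap.det_id, mul_one,
    Units.val_inv_eq_inv_val, abs_pow, abs_inv, inv_pow]

end Lattice

section Fourier

variable {V : Type*} [NormedAddCommGroup V] [InnerProductSpace ℝ V]

lemma sum_product_fourierChar_inner_sub_add {ι : Type*} (S : Finset ι) (e : ι → V) (t y : V) :
    ∑ p ∈ S ×ˢ S, ((𝐞 (inner ℝ y (e p.1 - e p.2 + t)) : Circle) : ℂ) =
      (𝐞 (inner ℝ y t) : Circle) * (‖∑ i ∈ S, ((𝐞 (inner ℝ y (e i)) : Circle) : ℂ)‖ : ℂ) ^ 2 := by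
  rw [← Complex.mul_conj', map_sum, sum_mul_sum, ← sum_product', mul_sum]
  refine sum_congr rfl fun p _ ↦ ?_
  rw [inner_add_right, inner_sub_right, AddChar.map_add_eq_mul, AddChar.map_sub_eq_div,
    ← Circle.coe_inv_eq_conj]
  push_cast
  ring

variable [FiniteDimensional ℝ V] [MeasurableSpace V] [BorelSpace V] {f : V → ℂ}

lemma integrable_fourierChar_inner_mul {F : V → ℂ} (hF : Integrable F) (x : V) :
    Integrable fun y ↦ ((𝐞 (inner ℝ y x) : Circle) : ℂ) * F y := by
  refine hF.bdd_mul (c := 1) ?_ (.of_forall fun y ↦ (Circle.norm_coe _).le)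
  have := Real.continuous_fourierChar
  exact Continuous.aestronglyMeasurable (by fun_prop)

lemma eq_integral_fourierChar_inner_mul (hcont : Continuous f) (hint : Integrable f)
    (hFint : Integrable (𝓕 f)) (x : V) :
    f x = ∫ y, ((𝐞 (inner ℝ y x) : Circle) : ℂ) * 𝓕 f y := by
  rw [← congrFun (hcont.fourierInv_fourier_eq hint hFint) x, Real.fourierInv_eq]
  rfl

lemma sum_product_sub_add_eq_integral (hcont : Continuous f) (hint : Integrable f)
    (hFint : Integrable (𝓕 f)) {ι : Type*} (S : Finset ι) (e : ι → V) (t : V) :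
    ∑ p ∈ S ×ˢ S, f (e p.1 - e p.2 + t) =
      ∫ y, ((𝐞 (inner ℝ y t) : Circle) : ℂ) *
        ((‖∑ i ∈ S, ((𝐞 (inner ℝ y (e i)) : Circle) : ℂ)‖ : ℂ) ^ 2 * 𝓕 f y) := by
  simp_rw [eq_integral_fourierChar_inner_mul hcont hint hFint]
  rw [← integral_finsetSum _ fun p _ ↦ integrable_fourierChar_inner_mul hFint _]
  simp_rw [← sum_mul, sum_product_fourierChar_inner_sub_add, mul_assoc]

lemma norm_sum_product_sub_add_le (hcont : Continuous f) (hint : Integrable f)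
    (hFint : Integrable (𝓕 f)) (hF : ∀ y, 0 ≤ 𝓕 f y) {ι : Type*} (S : Finset ι) (e : ι → V)
    (t : V) :
    ‖∑ p ∈ S ×ˢ S, f (e p.1 - e p.2 + t)‖ ≤ (∑ p ∈ S ×ˢ S, f (e p.1 - e p.2)).re := by
  set D : V → ℂ := fun y ↦ ∑ i ∈ S, ((𝐞 (inner ℝ y (e i)) : Circle) : ℂ)
  have hzero : ∑ p ∈ S ×ˢ S, f (e p.1 - e p.2) = ((∫ y, ‖D y‖ ^ 2 * ‖𝓕 f y‖ : ℝ) : ℂ) := by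
    have := sum_product_sub_add_eq_integral hcont hint hFint S e 0
    simp only [add_zero, inner_zero_right, AddChar.map_zero_eq_one, Circle.coe_one, one_mul] at this
    rw [this, ← integral_complex_ofReal]
    push_cast
    have hnorm (y : V) : (‖𝓕 f y‖ : ℂ) = 𝓕 f y := RCLike.norm_of_nonneg' (hF y)
    simp [hnorm, D]
  rw [hzero, Complex.ofReal_re, sum_product_sub_add_eq_integral hcont hint hFint]
  refine (norm_integral_le_integral_norm _).trans_eq ?_
  simp [D, Circle.norm_coe]

lemma integrable_fourier_ofReal (g : SchwartzMap V ℝ) : Integrable (𝓕 fun y ↦ (g y : ℂ)) :=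
  (𝓕 (g.postcompCLM Complex.ofRealCLM)).integrable

end Fourier

theorem re_fourier_zero_le_covolume_mul_re {V : Type*} [NormedAddCommGroup V]
    [InnerProductSpace ℝ V] [FiniteDimensional ℝ V] [MeasurableSpace V] [BorelSpace V]
    (L : Submodule ℤ V) [DiscreteTopology L] [IsZLattice ℝ L] {f : V → ℂ} (hcont : Continuous f)
    (hint : Integrable f) (hFint : Integrable (𝓕 f)) (hneg : ∀ x ∈ L, x ≠ 0 → (f x).re ≤ 0)
    (hF : ∀ y, 0 ≤ 𝓕 f y) :
    (𝓕 f 0).re ≤ ZLattice.covolume L * (f 0).re := by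
  have hzero : (𝓕 f 0).re = ∫ x, (f x).re := by
    simpa [Real.fourier_eq] using (integral_re hint).symm
  rw [hzero]
  refine integral_le_covolume_mul L volume hint.re hneg fun S t ↦ ?_
  simpa using (Complex.re_le_norm _).trans
    (norm_sum_product_sub_add_le hcont hint hFint hF S (fun l : L ↦ (l : V)) t)

/-- The `E₈` lattice `{x ∈ ℤ⁸ ∪ (ℤ + 1/2)⁸ : ∑ xᵢ ∈ 2ℤ}`. A point is written as
`xᵢ = nᵢ + k / 2` with integers `nᵢ` and `k`; since `∑ xᵢ = ∑ nᵢ + 4 * k`, the parity condition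
says that `∑ nᵢ` is even. -/
def E8Lattice : Submodule ℤ (EuclideanSpace ℝ (Fin 8)) where
  carrier := {x | ∃ (n : Fin 8 → ℤ) (k : ℤ), Even (∑ i, n i) ∧ ∀ i, x i = n i + k / 2}
  zero_mem' := ⟨0, 0, by simp⟩
  add_mem' := by
    rintro x y ⟨n, k, hn, hx⟩ ⟨m, l, hm, hy⟩
    refine ⟨n + m, k + l, by simpa [sum_add_distrib] using hn.add hm, fun i ↦ ?_⟩
    simp only [PiLp.add_apply, Pi.add_apply, hx, hy]
    push_cast
    ring
  smul_mem' := by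
    rintro c x ⟨n, k, hn, hx⟩
    refine ⟨c • n, c • k, by simpa [← mul_sum] using hn.mul_left c, fun i ↦ ?_⟩
    simp only [PiLp.smul_apply, Pi.smul_apply, hx, smul_eq_mul, zsmul_eq_mul]
    push_cast
    ring

namespace E8Lattice

lemma mem_iff {x : EuclideanSpace ℝ (Fin 8)} :
    x ∈ E8Lattice ↔ ∃ (n : Fin 8 → ℤ) (k : ℤ), Even (∑ i, n i) ∧ ∀ i, x i = n i + k / 2 :=
  Iff.rfl

lemma exists_norm_sq_eq {x : EuclideanSpace ℝ (Fin 8)} (hx : x ∈ E8Lattice) :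
    ∃ m : ℤ, ‖x‖ ^ 2 = 2 * m := by
  obtain ⟨n, k, ⟨s, hs⟩, hx⟩ := hx
  have hsq : Even (∑ i, n i ^ 2) := by
    have : Even (∑ i, n i * (n i - 1)) := even_sum _ fun i _ ↦ Int.even_mul_pred_self (n i)
    convert! this.add ⟨s, hs⟩ using 1
    rw [← sum_add_distrib]
    exact sum_congr rfl fun i _ ↦ by ring
  obtain ⟨r, hr⟩ := hsq
  refine ⟨r + k * s + k ^ 2, ?_⟩
  have hs' : ∑ i, (n i : ℝ) = s + s := mod_cast hs
  have hr' : ∑ i, (n i : ℝ) ^ 2 = r + r := mod_cast hr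
  simp_rw [EuclideanSpace.real_norm_sq_eq, hx, add_sq, sum_add_distrib, mul_assoc, ← mul_sum,
    ← sum_mul, hs', hr', sum_const, card_univ, Fintype.card_fin]
  push_cast
  ring

lemma sqrt_two_le_norm {x : EuclideanSpace ℝ (Fin 8)} (hx : x ∈ E8Lattice) (hx0 : x ≠ 0) :
    √2 ≤ ‖x‖ := by
  obtain ⟨m, hm⟩ := exists_norm_sq_eq hx
  have hpos : 0 < ‖x‖ ^ 2 := by positivity
  have hm1 : 1 ≤ m := by
    rw [hm] at hpos
    exact_mod_cast pos_of_mul_pos_right hpos zero_le_two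
  rw [Real.sqrt_le_left (norm_nonneg x), hm]
  exact_mod_cast le_mul_of_one_le_right zero_le_two hm1

lemma one_le_norm_of_sqrt_two_smul_mem {x : EuclideanSpace ℝ (Fin 8)}
    (hx : √2 • x ∈ E8Lattice) (hx0 : x ≠ 0) : 1 ≤ ‖x‖ := by
  have h := sqrt_two_le_norm hx (by simpa)
  rw [norm_smul, Real.norm_of_nonneg (by positivity)] at h
  exact (le_mul_iff_one_le_right (by positivity)).1 h

/-- The matrix whose rows are the basis `2 e₀, e₁ - e₀, …, e₆ - e₅, (1/2, …, 1/2)` of the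
`E₈` lattice; this choice makes it lower triangular. -/
noncomputable def basisMatrix : Matrix (Fin 8) (Fin 8) ℝ :=
  !![2, 0, 0, 0, 0, 0, 0, 0;
     -1, 1, 0, 0, 0, 0, 0, 0;
     0, -1, 1, 0, 0, 0, 0, 0;
     0, 0, -1, 1, 0, 0, 0, 0;
     0, 0, 0, -1, 1, 0, 0, 0;
     0, 0, 0, 0, -1, 1, 0, 0;
     0, 0, 0, 0, 0, -1, 1, 0;
     1/2, 1/2, 1/2, 1/2, 1/2, 1/2, 1/2, 1/2]

lemma det_basisMatrix : basisMatrix.det = 1 := by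
  rw [Matrix.det_of_isLowerTriangular]
  · simp [Fin.prod_univ_eight, basisMatrix]
  · intro i j h
    fin_cases i <;> fin_cases j <;> first | (exfalso; revert h; decide) | simp [basisMatrix]

lemma basisFun_det_rows :
    (EuclideanSpace.basisFun (Fin 8) ℝ).toBasis.det
      (fun i ↦ WithLp.toLp 2 (basisMatrix i)) = 1 := by
  rw [Basis.det_apply, ← det_basisMatrix, ← Matrix.det_transpose]
  congr 1

/-- The rows of `E8Lattice.basisMatrix` as a basis of the ambient Euclidean space. -/
noncomputable def basis : Basis (Fin 8) ℝ (EuclideanSpace ℝ (Fin 8)) :=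
  have h := (Basis.is_basis_iff_det (EuclideanSpace.basisFun (Fin 8) ℝ).toBasis).2
    (basisFun_det_rows ▸ isUnit_one)
  Basis.mk h.1 h.2.ge

lemma coe_basis : ⇑basis = fun i ↦ WithLp.toLp 2 (basisMatrix i) := by
  rw [basis, Basis.coe_mk]

lemma sum_smul_basis_apply (c : Fin 8 → ℤ) (j : Fin 8) :
    (∑ i, c i • basis i) j =
      (![2 * c 0 - c 1, c 1 - c 2, c 2 - c 3, c 3 - c 4, c 4 - c 5, c 5 - c 6, c 6, 0] j : ℤ) +
        (c 7 : ℝ) / 2 := by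
  fin_cases j <;> simp [Fin.sum_univ_eight, coe_basis, basisMatrix] <;> ring

lemma eq_span_range_basis : E8Lattice = Submodule.span ℤ (Set.range basis) := by
  ext x
  rw [Submodule.mem_span_range_iff_exists_fun, mem_iff]
  constructor
  · rintro ⟨n, k, ⟨s, hs⟩, hx⟩
    -- Solve `sum_smul_basis_apply` after making the entry of `n` at `7` vanish.
    let m (i : Fin 8) : ℤ := n i - n 7
    refine ⟨![s - 4 * n 7, m 1 + m 2 + m 3 + m 4 + m 5 + m 6, m 2 + m 3 + m 4 + m 5 + m 6,
      m 3 + m 4 + m 5 + m 6, m 4 + m 5 + m 6, m 5 + m 6, m 6, k + 2 * n 7], ?_⟩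
    have hs' : (∑ i, n i : ℝ) = s + s := mod_cast hs
    rw [Fin.sum_univ_eight] at hs'
    ext j
    rw [sum_smul_basis_apply, hx]
    fin_cases j <;> simp [m] <;> linarith
  · rintro ⟨c, rfl⟩
    refine ⟨_, c 7, ?_, sum_smul_basis_apply c⟩
    simp [Fin.sum_univ_eight]

instance : DiscreteTopology E8Lattice := by
  rw [eq_span_range_basis]
  infer_instance

instance : IsZLattice ℝ E8Lattice := by
  simp_rw [eq_span_range_basis]
  infer_instance

lemma covolume_eq_one : ZLattice.covolume E8Lattice = 1 := by
  have hD : IsAddFundamentalDomain E8Lattice (ZSpan.fundamentalDomain basis) := by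
    rw [eq_span_range_basis]
    exact ZSpan.isAddFundamentalDomain basis volume
  let b₀ := EuclideanSpace.basisFun (Fin 8) ℝ
  have hdet : b₀.toBasis.det basis = 1 := by rw [coe_basis, basisFun_det_rows]
  rw [ZLattice.covolume_eq_measure_fundamentalDomain E8Lattice volume hD,
    ZSpan.measureReal_fundamentalDomain basis volume b₀.toBasis, hdet,
    measureReal_congr (ZSpan.fundamentalDomain_ae_parallelepiped b₀.toBasis volume),
    measureReal_def, OrthonormalBasis.coe_toBasis, OrthonormalBasis.volume_parallelepiped]
  simp

end E8Lattice

theorem poisson_summation_bound_general {f : EuclideanSpace ℝ (Fin 8) → ℂ}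
    (hcont : Continuous f) (hint : Integrable f) (hFint : Integrable (𝓕 f))
    (hneg : ∀ x, √2 • x ∈ E8Lattice → x ≠ 0 → (f x).re ≤ 0) (hF : ∀ y, 0 ≤ 𝓕 f y) :
    2 ^ 4 * (𝓕 f 0).re ≤ (f 0).re := by
  let c : ℝˣ := Units.mk0 √2 (by positivity)
  let e : EuclideanSpace ℝ (Fin 8) ≃L[ℝ] EuclideanSpace ℝ (Fin 8) := .smulLeft c
  have hc : |(c : ℝ)| ^ 8 = 2 ^ 4 := by
    rw [Units.val_mk0, abs_of_nonneg (Real.sqrt_nonneg 2), pow_mul √2 2 4,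
      Real.sq_sqrt zero_le_two]
  have h := re_fourier_zero_le_covolume_mul_re (ZLattice.comap ℝ E8Lattice e.toLinearMap)
    hcont hint hFint hneg hF
  rw [covolume_comap_smulLeft, E8Lattice.covolume_eq_one, finrank_euclideanSpace_fin, hc] at h
  linarith

/-- If `f : ℝ⁸ → ℝ` is a Schwartz function with `f(x) ≤ 0` for `‖x‖ ≥ 1` and `f̂(x) ≥ 0`
for all `x ∈ ℝ⁸`, then `f(0) ≥ 2⁴ · f̂(0)`. -/
theorem poisson_summation_bound (f : SchwartzMap (EuclideanSpace ℝ (Fin 8)) ℝ)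
    (hf : ∀ x, 1 ≤ ‖x‖ → f x ≤ 0)
    (hfhat : ∀ x, ∃ c : ℝ, 0 ≤ c ∧ 𝓕 (fun y => (f y : ℂ)) x = c) :
    2 ^ 4 * (𝓕 (fun y => (f y : ℂ)) 0).re ≤ f 0 := by
  refine poisson_summation_bound_general (Complex.continuous_ofReal.comp f.continuous)
    f.integrable.ofReal (integrable_fourier_ofReal f)
    (fun x hx hx0 ↦ hf x (E8Lattice.one_le_norm_of_sqrt_two_smul_mem hx hx0)) fun y ↦ ?_
  obtain ⟨c, hc, h⟩ := hfhat y
  exact h ▸ Complex.zero_le_real.2 hc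
end
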